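/- Let $a > 0$, let $\nu \in \mathbb{C}$ with $0 < \mathrm{Re}\,\nu < 1/2$, and let $g \in \mathcal{M}_{0,1}^{-1}(L_c)$ where $c = \{s \in \mathbb{C} : -1 < \mathrm{Re}\,s < 0\}$. Then for almost all $x > 0$ the Weber expansion holds: $g(x) = \dfrac{x}{J_\nu^2(ax) + Y_\nu^2(ax)} \int_a^\infty C_\nu(xt, xa)\, t \int_0^\infty C_\nu(t\xi, a\xi)\, g(\xi)\, d\xi\, dt$, where the inner and outer integrals are understood as improper integrals. -/

import Mathlib

/-!
The proof follows the classical treatment of Fourier's integral theorem, with Hankel functions in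
place of exponentials.

Let `η₁, η₂ = √z (J_ν ± i Y_ν)(z)`. Both solve `η'' = -(1 + c / z²) η` with the same `c`, and behave like
`b₁ e^{iz}`, `b₂ e^{-iz}` at infinity with error `O(1 / z)`, where `b₁ b₂ = 2 / π`. The Weber kernel is
`i / (2 ξ √(ta))` times `e(t, ξ) = η₁(tξ) η₂(aξ) - η₂(tξ) η₁(aξ)` (`crossE`), so with `q(ξ) = g(ξ) / ξ` the
formula to be proved becomes
`∫_a^∞ e(t, x) (∫_0^∞ e(t, ξ) q(ξ) dξ) dt = -4 η₁(ax) η₂(ax) q(x)` (`HankelPair.outer`).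
The Mellin representation of `g` gives `|q| ≤ K ξ^{-1-μ}` and `|q'| ≤ K ξ^{-2-μ}`
(`MellinClass01.powerDecay`), and no more about `q` is needed.

* The inner integral converges by integration by parts, and its partial integrals are bounded by
  a locally integrable function of `t ≥ a` (`HankelPair.inner`). This allows the interchange of the
  integrals for `t` up to `N` (`HankelPair.outer_eq_lim`).
* By Lommel's formula the integral of `e(t, x) e(t, ξ)` over `a < t < N` is the Wronskian of
  `e(·, x)` and `e(·, ξ)` at `N`, divided by `x² - ξ²` (`HankelPair.lommel`).
* For `ξ` away from `x` the Riemann–Lebesgue lemma shows that nothing remains as `N → ∞`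
  (`HankelPair.far`).
* For `ξ` near `x`, replacing `η(Nξ)` by its exponential leading part changes the Wronskian by a
  quantity that is `O(1 / N)` and `O(|x - ξ|)`, which is negligible by dominated convergence. The
  leading part is a Dirichlet kernel up to Riemann–Lebesgue terms (`HankelPair.tendsto_integral_lead`).
* `J_ν² + Y_ν²` vanishes only on a null set: a zero of `η₁` or `η₂` is simple because their Wronskian does
  not vanish (`HankelPair.ae_ne_zero`).

For the asymptotics of the Bessel functions, variation of constants shows that every solution is
`α e^{iz} + β e^{-iz} + O(1 / z)` for some `α`, `β` (`PerturbedWave.asymptotics`). For `√z J_{±ν}(z)` the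
amplitudes are read off from the singularities at `p = ± i` (`amplitude_eq`) of Lipschitz's integral
`∫_0^∞ t^ν J_ν(t) e^{-pt} dt = 2^ν Γ(ν + 1/2) π^{-1/2} (1 + p²)^{-ν-1/2}` (`laplace_besselWave`).
The restriction `0 < Re ν < 1/2` makes `√z J_{±ν}(z)` bounded at `0`.
-/

open MeasureTheory Filter Set Topology Complex intervalIntegral

/-- Bessel function of the first kind of complex order `ν`. -/
noncomputable def besselJ (ν z : ℂ) : ℂ :=
  ∑' n : ℕ, ((-1 : ℂ) ^ n / (Complex.Gamma (n + 1) * Complex.Gamma (n + ν + 1))) *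
    (z / 2) ^ (2 * (n : ℂ) + ν)

/-- Bessel function of the second kind of complex order `ν`, defined by the usual
limit formula (which for non-integer order reduces to
`(J ν z * cos (π ν) - J (-ν) z) / sin (π ν)`). -/
noncomputable def besselY (ν z : ℂ) : ℂ :=
  limUnder (𝓝[≠] ν) fun μ =>
    (besselJ μ z * Complex.cos (Real.pi * μ) - besselJ (-μ) z) / Complex.sin (Real.pi * μ)

/-- The Weber kernel `C_ν(α, β) = J_ν(α) Y_ν(β) - Y_ν(α) J_ν(β)`. -/
noncomputable def weberC (ν α β : ℂ) : ℂ :=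
  besselJ ν α * besselY ν β - besselY ν α * besselJ ν β

/-- Gauss hypergeometric series `₂F₁(a, b; c; z)`. -/
noncomputable def hyp2F1 (a b c z : ℂ) : ℂ :=
  ∑' n : ℕ, ((ascPochhammer ℂ n).eval a * (ascPochhammer ℂ n).eval b /
    ((ascPochhammer ℂ n).eval c * (n.factorial : ℂ))) * z ^ n

/-- The associated Legendre function of the second kind `Q_μ^ν(z)` (order `ν`, degree `μ`),
for `z` off the cut `(-∞, 1]`. -/
noncomputable def legendreQ (ν μ z : ℂ) : ℂ :=
  Complex.exp (ν * Real.pi * Complex.I) * (Real.sqrt Real.pi : ℂ) * 2 ^ (-μ - 1) *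
    (Complex.Gamma (μ + ν + 1) / Complex.Gamma (μ + 3 / 2)) *
    z ^ (-μ - ν - 1) * (z ^ 2 - 1) ^ (ν / 2) *
    hyp2F1 ((μ + ν + 2) / 2) ((μ + ν + 1) / 2) (μ + 3 / 2) (1 / z ^ 2)

/-- `g` belongs to the class `𝓜₀,₁⁻¹(L_c)` on the vertical line `Re s = μ`, with Mellin
transform `gs`:  `s ↦ s * gs s` is integrable on the line, and `g` is recovered from `gs`
by the inverse Mellin transform. -/
def MellinClass01 (μ : ℝ) (g : ℝ → ℂ) (gs : ℂ → ℂ) : Prop :=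
  (Integrable fun τ : ℝ => ((μ : ℂ) + τ * Complex.I) * gs ((μ : ℂ) + τ * Complex.I)) ∧
  ∀ x : ℝ, 0 < x →
    g x = (2 * Real.pi * Complex.I)⁻¹ *
      (Complex.I * ∫ τ : ℝ, gs ((μ : ℂ) + τ * Complex.I) * (x : ℂ) ^ (-((μ : ℂ) + τ * Complex.I)))

/-! ### Oscillatory integrals -/

/-- Riemann–Lebesgue lemma on a measurable set, with the frequency written as `N` or `-N`. -/
lemma riemannLebesgue_setIntegral {S : Set ℝ} (hS : MeasurableSet S) (f : ℝ → ℂ) (σ : ℝ)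
    (hσ : σ ≠ 0) :
    Tendsto (fun N : ℝ => ∫ ξ in S, cexp (I * ((σ * N * ξ : ℝ) : ℂ)) * f ξ) atTop (𝓝 0) := by
  have h := Real.tendsto_integral_exp_smul_cocompact (S.indicator f)
  have h2 : Tendsto (fun N : ℝ => -(σ * N / (2 * Real.pi))) atTop (cocompact ℝ) := by
    have h3 : (fun N : ℝ => -(σ * N / (2 * Real.pi))) = fun N => (-(σ / (2 * Real.pi))) * N := by
      ext N; ring
    rw [h3]
    have hne : -(σ / (2 * Real.pi)) ≠ 0 := by
      have := Real.pi_pos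
      simp [hσ, this.ne']
    exact (Homeomorph.mulLeft₀ _ hne).isClosedEmbedding.tendsto_cocompact.comp
      (tendsto_id.mono_right atTop_le_cocompact)
  refine (h.comp h2).congr fun N => ?_
  rw [← MeasureTheory.integral_indicator hS]
  simp only [Function.comp]
  congr 1
  ext v
  by_cases hv : v ∈ S
  · simp only [hv, indicator_of_mem, Real.fourierChar_apply', Circle.smul_def, Circle.coe_exp,
      smul_eq_mul]
    congr 2
    push_cast
    field_simp
  · simp [hv]

lemma integral_cos_mul_gaussian (k : ℝ) :
    ∫ u : ℝ, Real.cos (k * u) * Real.exp (-u ^ 2) = Real.sqrt Real.pi * Real.exp (-k ^ 2 / 4) := by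
  have h := fourierIntegral_gaussian (b := 1) (by simp) (k : ℂ)
  have h2 := congrArg Complex.re h
  have hint : Integrable fun u : ℝ => cexp (I * k * u) * cexp (-1 * (u : ℂ) ^ 2) := by
    have := (integrable_cexp_quadratic (b := 1) (by simp) (I * k) 0)
    refine this.congr (ae_of_all _ fun u => ?_)
    simp only [← Complex.exp_add]
    congr 1
    ring
  have h3 : (∫ u : ℝ, cexp (I * k * u) * cexp (-1 * (u : ℂ) ^ 2)).re
      = ∫ u : ℝ, Real.cos (k * u) * Real.exp (-u ^ 2) := by
    rw [← RCLike.re_eq_complex_re, ← integral_re hint]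
    congr 1
    ext u
    have e1 : cexp (-1 * (u : ℂ) ^ 2) = ((Real.exp (-u ^ 2) : ℝ) : ℂ) := by push_cast; ring_nf
    have e2 : I * (k : ℂ) * u = ((k * u : ℝ) : ℂ) * I := by push_cast; ring
    rw [e1, e2, RCLike.re_eq_complex_re, Complex.re_mul_ofReal, Complex.exp_ofReal_mul_I_re]
  rw [← h3, h2]
  have e1 : ((Real.pi : ℂ) / 1) ^ (1 / 2 : ℂ) = ((Real.sqrt Real.pi : ℝ) : ℂ) := by
    rw [Real.sqrt_eq_rpow, Complex.ofReal_cpow Real.pi_pos.le]; simp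
  have e2 : cexp (-(k : ℂ) ^ 2 / (4 * 1)) = ((Real.exp (-k ^ 2 / 4) : ℝ) : ℂ) := by
    push_cast; ring_nf
  rw [e1, e2, ← Complex.ofReal_mul, Complex.ofReal_re]

/-- The Dirichlet integral with a Gaussian cutoff, which is where the constant `π` comes from. -/
lemma tendsto_integral_sin_div_gaussian :
    Tendsto (fun N : ℝ => ∫ u : ℝ, Real.sin (N * u) / u * Real.exp (-u ^ 2)) atTop (𝓝 Real.pi) := by
  have key : ∀ N : ℝ, 0 ≤ N → ∫ u : ℝ, Real.sin (N * u) / u * Real.exp (-u ^ 2)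
      = ∫ k in (0:ℝ)..N, Real.sqrt Real.pi * Real.exp (-(1 / 4) * k ^ 2) := by
    intro N hN
    have hsw : ∫ k in (0:ℝ)..N, ∫ u : ℝ, Real.cos (k * u) * Real.exp (-u ^ 2)
        = ∫ u : ℝ, ∫ k in (0:ℝ)..N, Real.cos (k * u) * Real.exp (-u ^ 2) := by
      simp only [intervalIntegral.integral_of_le hN]
      apply integral_integral_swap
      have h1 : Integrable (fun z : ℝ × ℝ => (1:ℝ) * Real.exp (-1 * z.2 ^ 2))
          ((volume.restrict (Ioc 0 N)).prod volume) :=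
        Integrable.mul_prod (f := fun _ => (1:ℝ)) (integrable_const _)
          (integrable_exp_neg_mul_sq (by norm_num))
      refine h1.mono ?_ (ae_of_all _ fun z => ?_)
      · apply Continuous.aestronglyMeasurable
        simp only [Function.uncurry_def]
        fun_prop
      · simp only [Function.uncurry_def, norm_mul, Real.norm_eq_abs, one_mul, neg_mul, Real.abs_exp]
        have := Real.abs_cos_le_one (z.1 * z.2)
        have h3 := Real.exp_pos (-z.2 ^ 2)
        nlinarith
    have hl : ∫ k in (0:ℝ)..N, Real.sqrt Real.pi * Real.exp (-(1 / 4) * k ^ 2)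
        = ∫ k in (0:ℝ)..N, ∫ u : ℝ, Real.cos (k * u) * Real.exp (-u ^ 2) := by
      congr 1
      ext k
      rw [integral_cos_mul_gaussian]
      congr 2; ring
    rw [hl, hsw]
    apply MeasureTheory.integral_congr_ae
    have : ∀ᵐ u : ℝ, u ≠ 0 := by simp [ae_iff]
    filter_upwards [this] with u hu
    rw [intervalIntegral.integral_mul_const]
    congr 1
    rw [intervalIntegral.integral_comp_mul_right (fun x => Real.cos x) hu]
    simp [integral_cos, div_eq_inv_mul]
  have hI : IntegrableOn (fun k : ℝ => Real.sqrt Real.pi * Real.exp (-(1 / 4) * k ^ 2)) (Ioi 0) :=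
    ((integrable_exp_neg_mul_sq (by norm_num)).const_mul _).integrableOn
  have hval : ∫ k in Ioi (0:ℝ), Real.sqrt Real.pi * Real.exp (-(1 / 4) * k ^ 2) = Real.pi := by
    rw [MeasureTheory.integral_const_mul, integral_gaussian_Ioi]
    have : Real.pi / (1 / 4) = Real.pi * 2 ^ 2 := by ring
    rw [this, Real.sqrt_mul Real.pi_pos.le, Real.sqrt_sq (by norm_num)]
    have := Real.mul_self_sqrt Real.pi_pos.le
    linarith
  have h := intervalIntegral_tendsto_integral_Ioi 0 hI tendsto_id
  rw [hval] at h
  refine h.congr' ?_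
  filter_upwards [eventually_ge_atTop 0] with N hN
  rw [key N hN]; rfl

/-- The Dirichlet integral over a symmetric interval. -/
lemma tendsto_integral_sin_div {δ : ℝ} (hδ : 0 < δ) :
    Tendsto (fun N : ℝ => ∫ u in Icc (-δ) δ, ((Real.sin (N * u) / u : ℝ) : ℂ)) atTop
      (𝓝 (Real.pi : ℂ)) := by
  set f : ℝ → ℂ := fun u => (((Icc (-δ) δ).indicator (fun _ => (1:ℝ)) u - Real.exp (-u ^ 2)) / u : ℝ)
    with hf
  have hg : Integrable (fun u : ℝ => Real.exp (-1 * u ^ 2)) := integrable_exp_neg_mul_sq (by norm_num)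
  have hfi : Integrable f := by
    have hb : Integrable (fun u => (Icc (-δ) δ).indicator (fun _ => δ) u
        + δ⁻¹ * Real.exp (-1 * u ^ 2)) := by
      refine Integrable.add ?_ (hg.const_mul _)
      rw [integrable_indicator_iff measurableSet_Icc]
      exact integrableOn_const (by simp) 
    refine hb.mono' ?_ (ae_of_all _ fun u => ?_)
    · apply Measurable.aestronglyMeasurable
      refine Complex.measurable_ofReal.comp (Measurable.div (Measurable.sub ?_ ?_) measurable_id)
      · exact measurable_const.indicator measurableSet_Icc
      · fun_prop
    · have he := Real.exp_pos (-1 * u ^ 2)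
      have e0 : Real.exp (-u ^ 2) = Real.exp (-1 * u ^ 2) := by ring_nf
      simp only [hf, Complex.norm_real, norm_div, Real.norm_eq_abs]
      by_cases hu : u ∈ Icc (-δ) δ
      · simp only [indicator_of_mem hu]
        have h1 : |u| ≤ δ := abs_le.2 ⟨hu.1, hu.2⟩
        have h2 : |1 - Real.exp (-u ^ 2)| ≤ u ^ 2 := by
          rw [abs_of_nonneg]
          · linarith [Real.add_one_le_exp (-u ^ 2)]
          · have : Real.exp (-u ^ 2) ≤ 1 := Real.exp_le_one_iff.2 (by nlinarith [sq_nonneg u])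
            linarith
        have h3 : |1 - Real.exp (-u ^ 2)| / |u| ≤ |u| := by
          by_cases h0 : u = 0
          · simp [h0]
          · rw [div_le_iff₀ (abs_pos.2 h0), abs_mul_abs_self]; nlinarith
        have : 0 < δ⁻¹ * Real.exp (-1 * u ^ 2) := by positivity
        linarith
      · simp only [indicator_of_notMem hu, zero_sub, abs_neg, Real.abs_exp, zero_add, e0]
        have h1 : δ ≤ |u| := by
          by_contra hh
          push Not at hh
          exact hu ⟨(abs_lt.1 hh).1.le, (abs_lt.1 hh).2.le⟩
        rw [div_eq_inv_mul]
        gcongr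
  have hR : Tendsto (fun N : ℝ => ∫ u, ((Real.sin (N * u) : ℝ) : ℂ) * f u) atTop (𝓝 0) := by
    have h1 := riemannLebesgue_setIntegral MeasurableSet.univ f 1 one_ne_zero
    have h2 := riemannLebesgue_setIntegral MeasurableSet.univ f (-1) (by norm_num)
    have h3 := (h1.sub h2).const_mul (1 / (2 * I))
    simp only [sub_zero, mul_zero, Measure.restrict_univ] at h3
    refine h3.congr fun N => ?_
    have hb : ∀ σ : ℝ, Integrable fun ξ : ℝ => cexp (I * ((σ * N * ξ : ℝ) : ℂ)) * f ξ := by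
      intro σ
      refine hfi.bdd_mul (c := 1) (by apply Continuous.aestronglyMeasurable; fun_prop)
        (ae_of_all _ fun u => ?_)
      rw [mul_comm I, Complex.norm_exp_ofReal_mul_I]
    rw [← MeasureTheory.integral_sub (hb 1) (hb (-1)), ← MeasureTheory.integral_const_mul]
    congr 1
    ext u
    rw [Complex.ofReal_sin, Complex.sin]
    have : -(((N * u : ℝ)) : ℂ) * I = I * ((-1 * N * u : ℝ) : ℂ) := by push_cast; ring
    rw [this]
    have : (((N * u : ℝ)) : ℂ) * I = I * ((1 * N * u : ℝ) : ℂ) := by push_cast; ring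
    rw [this]
    field_simp
    ring_nf
    simp only [I_sq]
    ring
  have hG : Tendsto (fun N : ℝ => ∫ u : ℝ, ((Real.sin (N * u) / u * Real.exp (-u ^ 2) : ℝ) : ℂ))
      atTop (𝓝 (Real.pi : ℂ)) := by
    have := (Complex.continuous_ofReal.tendsto _).comp tendsto_integral_sin_div_gaussian
    refine this.congr fun N => ?_
    simp only [Function.comp]
    exact (_root_.integral_ofReal (𝕜 := ℂ)).symm
  have := hR.add hG
  rw [zero_add] at this
  refine this.congr fun N => ?_
  have hsb : ∀ u : ℝ, |Real.sin (N * u) / u| ≤ |N| := by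
    intro u
    by_cases h0 : u = 0
    · simp [h0]
    · rw [abs_div, div_le_iff₀ (abs_pos.2 h0), ← abs_mul]
      exact Real.abs_sin_le_abs
  rw [← MeasureTheory.integral_add, ← MeasureTheory.integral_indicator measurableSet_Icc]
  · congr 1
    ext u
    by_cases hu : u ∈ Icc (-δ) δ
    · simp only [hf, indicator_of_mem hu]; push_cast; ring
    · simp only [hf, indicator_of_notMem hu]; push_cast; ring
  · refine hfi.bdd_mul (c := 1) (by apply Continuous.aestronglyMeasurable; fun_prop)
        (ae_of_all _ fun u => ?_)
    rw [Complex.norm_real]; exact Real.abs_sin_le_one _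
  · refine Integrable.ofReal ?_
    have : Integrable fun u : ℝ => Real.exp (-u ^ 2) := by simpa using hg
    refine this.bdd_mul (c := |N|) ?_ (ae_of_all _ fun u => ?_)
    · apply Measurable.aestronglyMeasurable
      fun_prop
    · exact hsb u

lemma norm_exp_I_mul_sub_one_le (y : ℝ) {p : ℝ} (hp0 : 0 ≤ p) (hp1 : p ≤ 1) :
    ‖cexp (I * (y : ℂ)) - 1‖ ≤ 2 * |y| ^ p := by
  rcases le_total |y| 1 with h | h
  · have h1 := Real.norm_exp_I_mul_ofReal_sub_one_le (x := y)
    have h2 : |y| ≤ |y| ^ p := by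
      rcases (abs_nonneg y).eq_or_lt with h0 | h0
      · rw [← h0]; exact Real.rpow_nonneg le_rfl _
      · simpa using Real.rpow_le_rpow_of_exponent_ge h0 h hp1
    rw [Real.norm_eq_abs] at h1
    have := abs_nonneg y
    linarith
  · have h1 : ‖cexp (I * (y : ℂ)) - 1‖ ≤ 1 + 1 := by
      refine (norm_sub_le _ _).trans ?_
      rw [mul_comm I, Complex.norm_exp_ofReal_mul_I, norm_one]
    have h2 : 1 ≤ |y| ^ p := Real.one_le_rpow h hp0
    linarith

/-- A function on `(0, ∞)` of size `ξ ^ (-s)` with derivative of size `ξ ^ (-s - 1)`. -/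
structure PowerDecay (q q' : ℝ → ℂ) (K s : ℝ) : Prop where
  hs0 : 0 < s
  hs1 : s < 1
  deriv : ∀ ξ, 0 < ξ → HasDerivAt q (q' ξ) ξ
  bound : ∀ ξ, 0 < ξ → ‖q ξ‖ ≤ K * ξ ^ (-s)
  bound' : ∀ ξ, 0 < ξ → ‖q' ξ‖ ≤ K * ξ ^ (-s - 1)

namespace PowerDecay

variable {q q' : ℝ → ℂ} {K s : ℝ}

lemma K_nonneg (h : PowerDecay q q' K s) : 0 ≤ K := by
  have := h.bound 1 one_pos
  simp only [Real.one_rpow, mul_one] at this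
  exact (norm_nonneg _).trans this

lemma continuousOn (h : PowerDecay q q' K s) : ContinuousOn q (Ioi 0) :=
  fun ξ hξ => (h.deriv ξ hξ).continuousAt.continuousWithinAt

lemma aestronglyMeasurable (h : PowerDecay q q' K s) :
    AEStronglyMeasurable q (volume.restrict (Ioi 0)) :=
  h.continuousOn.aestronglyMeasurable measurableSet_Ioi

lemma aestronglyMeasurable' (h : PowerDecay q q' K s) :
    AEStronglyMeasurable q' (volume.restrict (Ioi 0)) := by
  refine (aestronglyMeasurable_deriv q _).congr ?_
  filter_upwards [ae_restrict_mem measurableSet_Ioi] with ξ hξ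
  exact (h.deriv ξ hξ).deriv

lemma integrableOn_Ioc (h : PowerDecay q q' K s) (M : ℝ) : IntegrableOn q (Ioc 0 M) := by
  rcases le_or_gt M 0 with hM | hM
  · simp [hM]
  have h1 : IntegrableOn (fun ξ : ℝ => K * ξ ^ (-s)) (Ioc 0 M) := by
    have := (intervalIntegral.intervalIntegrable_rpow' (a := 0) (b := M) (r := -s)
      (by linarith [h.hs1])).const_mul K
    rwa [intervalIntegrable_iff_integrableOn_Ioc_of_le hM.le] at this
  refine h1.mono' (h.aestronglyMeasurable.mono_set Ioc_subset_Ioi_self) ?_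
  filter_upwards [ae_restrict_mem measurableSet_Ioc] with ξ hξ
  exact h.bound ξ hξ.1

/-- Integration by parts against `(exp (i l ξ) - 1) / (i l)`: the improper oscillatory integral of
`q` converges, and its partial integrals blow up at an integrable rate as the frequency `l`
tends to `0`. -/
lemma oscillatory (h : PowerDecay q q' K s) :
    ∃ K' : ℝ, ∀ l : ℝ, l ≠ 0 →
      (∃ L : ℂ, Tendsto (fun M : ℝ => ∫ ξ in (1:ℝ)..M, cexp (I * ((l * ξ : ℝ) : ℂ)) * q ξ)
        atTop (𝓝 L)) ∧
      ∀ M : ℝ, 1 ≤ M →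
        ‖∫ ξ in (1:ℝ)..M, cexp (I * ((l * ξ : ℝ) : ℂ)) * q ξ‖ ≤ K' * |l| ^ (s / 2 - 1) := by
  have hs0 := h.hs0
  have hK := h.K_nonneg
  set p := s / 2 with hp
  have hp0 : 0 < p := by positivity
  have hp1 : p ≤ 1 := by have := h.hs1; linarith
  refine ⟨2 * K + 2 * K + 2 * K * (1 / p), fun l hl => ?_⟩
  have hl0 : 0 < |l| := abs_pos.2 hl
  set v : ℝ → ℂ := fun ξ => (cexp (I * ((l * ξ : ℝ) : ℂ)) - 1) / (I * l) with hv
  have hlI : (I * (l : ℂ)) ≠ 0 := by simp [hl]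
  have hvd : ∀ ξ, HasDerivAt v (cexp (I * ((l * ξ : ℝ) : ℂ))) ξ := by
    intro ξ
    have h1 : HasDerivAt (fun ξ : ℝ => I * ((l * ξ : ℝ) : ℂ)) (I * l) ξ := by
      have := ((hasDerivAt_id ξ).const_mul l).ofReal_comp.const_mul I
      simpa using this
    have := ((h1.cexp).sub_const 1).div_const (I * (l : ℂ))
    rwa [mul_div_cancel_right₀ _ hlI] at this
  have hvb : ∀ ξ, 0 < ξ → ‖v ξ‖ ≤ 2 * |l| ^ (p - 1) * ξ ^ p := by
    intro ξ hξ
    have h1 := norm_exp_I_mul_sub_one_le (l * ξ) hp0.le hp1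
    simp only [hv, norm_div, norm_mul, Complex.norm_I, one_mul, Complex.norm_real, Real.norm_eq_abs]
    rw [div_le_iff₀ hl0, Real.rpow_sub_one hl0.ne']
    refine h1.trans (le_of_eq ?_)
    rw [abs_mul, abs_of_pos hξ, Real.mul_rpow hl0.le hξ.le]
    field_simp
  have hvc : Continuous v := by
    simp only [hv]; fun_prop
  have huv : ∀ ξ, 0 < ξ → ‖q ξ * v ξ‖ ≤ 2 * K * |l| ^ (p - 1) * ξ ^ (-p) := by
    intro ξ hξ
    rw [norm_mul]
    calc _ ≤ (K * ξ ^ (-s)) * (2 * |l| ^ (p - 1) * ξ ^ p) :=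
          mul_le_mul (h.bound ξ hξ) (hvb ξ hξ) (norm_nonneg _) (by positivity)
      _ = 2 * K * |l| ^ (p - 1) * (ξ ^ (-s) * ξ ^ p) := by ring
      _ = _ := by rw [← Real.rpow_add hξ]; congr 2; rw [hp]; ring
  have hu'v : ∀ ξ, 0 < ξ → ‖q' ξ * v ξ‖ ≤ 2 * K * |l| ^ (p - 1) * ξ ^ (-p - 1) := by
    intro ξ hξ
    rw [norm_mul]
    calc _ ≤ (K * ξ ^ (-s - 1)) * (2 * |l| ^ (p - 1) * ξ ^ p) :=
          mul_le_mul (h.bound' ξ hξ) (hvb ξ hξ) (norm_nonneg _) (by positivity)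
      _ = 2 * K * |l| ^ (p - 1) * (ξ ^ (-s - 1) * ξ ^ p) := by ring
      _ = _ := by rw [← Real.rpow_add hξ]; congr 2; rw [hp]; ring
  have hbi : IntegrableOn (fun ξ : ℝ => 2 * K * |l| ^ (p - 1) * ξ ^ (-p - 1)) (Ioi 1) :=
    (integrableOn_Ioi_rpow_of_lt (by linarith) one_pos).const_mul _
  have hsub : Ioi (1:ℝ) ⊆ Ioi 0 := Ioi_subset_Ioi zero_le_one
  have hu'vi : IntegrableOn (fun ξ => q' ξ * v ξ) (Ioi 1) := by
    refine hbi.mono' ((h.aestronglyMeasurable'.mono_set hsub).mul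
      hvc.aestronglyMeasurable) ?_
    filter_upwards [ae_restrict_mem measurableSet_Ioi] with ξ hξ
    exact hu'v ξ (hsub hξ)
  have hparts : ∀ M : ℝ, 1 ≤ M → ∫ ξ in (1:ℝ)..M, cexp (I * ((l * ξ : ℝ) : ℂ)) * q ξ
      = q M * v M - q 1 * v 1 - ∫ ξ in (1:ℝ)..M, q' ξ * v ξ := by
    intro M hM
    have hpos : ∀ ξ ∈ uIcc 1 M, 0 < ξ := by
      intro ξ hξ
      rw [uIcc_of_le hM] at hξ
      exact one_pos.trans_le hξ.1
    rw [← intervalIntegral.integral_mul_deriv_eq_deriv_mul (u := q) (v := v) (u' := q')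
      (v' := fun ξ => cexp (I * ((l * ξ : ℝ) : ℂ)))
      (fun ξ hξ => h.deriv ξ (hpos ξ hξ)) (fun ξ _ => hvd ξ)]
    · congr 1; ext ξ; ring
    · rw [intervalIntegrable_iff_integrableOn_Ioc_of_le hM]
      have hb : IntegrableOn (fun ξ : ℝ => K * ξ ^ (-s - 1)) (Ioc 1 M) :=
        IntegrableOn.mono_set (t := Ioi 1)
          ((integrableOn_Ioi_rpow_of_lt (by linarith) one_pos).const_mul _) Ioc_subset_Ioi_self
      refine hb.mono' (h.aestronglyMeasurable'.mono_set (Ioc_subset_Ioi_self.trans hsub)) ?_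
      filter_upwards [ae_restrict_mem measurableSet_Ioc] with ξ hξ
      exact h.bound' ξ (one_pos.trans hξ.1)
    · apply Continuous.intervalIntegrable
      fun_prop
  constructor
  · refine ⟨0 - q 1 * v 1 - ∫ ξ in Ioi (1:ℝ), q' ξ * v ξ, ?_⟩
    have h1 : Tendsto (fun M => q M * v M) atTop (𝓝 0) := by
      have : Tendsto (fun ξ : ℝ => 2 * K * |l| ^ (p - 1) * ξ ^ (-p)) atTop (𝓝 0) := by
        simpa using (tendsto_rpow_neg_atTop hp0).const_mul (2 * K * |l| ^ (p - 1))
      refine squeeze_zero_norm' ?_ this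
      filter_upwards [eventually_gt_atTop 0] with M hM using huv M hM
    have h2 := intervalIntegral_tendsto_integral_Ioi 1 hu'vi tendsto_id
    refine ((h1.sub_const _).sub h2).congr' ?_
    filter_upwards [eventually_ge_atTop 1] with M hM
    rw [hparts M hM]; rfl
  · intro M hM
    rw [hparts M hM]
    have hM0 : 0 < M := one_pos.trans_le hM
    have e1 : ‖q M * v M‖ ≤ 2 * K * |l| ^ (p - 1) := by
      refine (huv M hM0).trans ?_
      have : M ^ (-p) ≤ 1 := Real.rpow_le_one_of_one_le_of_nonpos hM (by linarith)
      exact mul_le_of_le_one_right (by positivity) this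
    have e2 : ‖q 1 * v 1‖ ≤ 2 * K * |l| ^ (p - 1) := by
      simpa using huv 1 one_pos
    have e3 : ‖∫ ξ in (1:ℝ)..M, q' ξ * v ξ‖ ≤ 2 * K * |l| ^ (p - 1) * (1 / p) := by
      rw [intervalIntegral.integral_of_le hM]
      calc _ ≤ ∫ ξ in Ioc 1 M, 2 * K * |l| ^ (p - 1) * ξ ^ (-p - 1) := by
            refine MeasureTheory.norm_integral_le_of_norm_le (hbi.mono_set Ioc_subset_Ioi_self) ?_
            filter_upwards [ae_restrict_mem measurableSet_Ioc] with ξ hξ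
            exact hu'v ξ (one_pos.trans hξ.1)
        _ ≤ ∫ ξ in Ioi (1:ℝ), 2 * K * |l| ^ (p - 1) * ξ ^ (-p - 1) := by
            refine setIntegral_mono_set hbi ?_ Ioc_subset_Ioi_self.eventuallyLE
            filter_upwards [ae_restrict_mem measurableSet_Ioi] with ξ hξ
            have : 0 < ξ := hsub hξ
            simp only [Pi.zero_apply]
            positivity
        _ = _ := by
            rw [MeasureTheory.integral_const_mul, integral_Ioi_rpow_of_lt (by linarith) one_pos]
            congr 1
            simp
    calc _ ≤ ‖q M * v M‖ + ‖q 1 * v 1‖ + ‖∫ ξ in (1:ℝ)..M, q' ξ * v ξ‖ :=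
          (norm_sub_le _ _).trans (add_le_add_left (norm_sub_le _ _) _)
      _ ≤ _ := by linarith

end PowerDecay

/-! ### Two solutions with Hankel asymptotics -/

/-- Two solutions `η₁`, `η₂` of `η'' = -(1 + c / z²) η` on `(0, ∞)` that are bounded and behave
like `b₁ exp (i z)` and `b₂ exp (-i z)`, together with their first derivatives, up to `O(1 / z)`.
For `√z H⁽¹⁾` and `√z H⁽²⁾` the product of the amplitudes is `2 / π`. -/
structure HankelPair (η₁ η₂ η₁' η₂' : ℝ → ℂ) (b₁ b₂ c : ℂ) (C : ℝ) : Prop where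
  d1 : ∀ z, 0 < z → HasDerivAt η₁ (η₁' z) z
  d1' : ∀ z : ℝ, 0 < z → HasDerivAt η₁' (-(1 + c / z ^ 2) * η₁ z) z
  d2 : ∀ z, 0 < z → HasDerivAt η₂ (η₂' z) z
  d2' : ∀ z : ℝ, 0 < z → HasDerivAt η₂' (-(1 + c / z ^ 2) * η₂ z) z
  bd1 : ∀ z, 0 < z → ‖η₁ z‖ ≤ C
  bd2 : ∀ z, 0 < z → ‖η₂ z‖ ≤ C
  as1 : ∀ z, 0 < z → ‖η₁ z - b₁ * cexp (I * z)‖ ≤ C / z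
  as1' : ∀ z, 0 < z → ‖η₁' z - I * b₁ * cexp (I * z)‖ ≤ C / z
  as2 : ∀ z, 0 < z → ‖η₂ z - b₂ * cexp (-(I * z))‖ ≤ C / z
  as2' : ∀ z, 0 < z → ‖η₂' z + I * b₂ * cexp (-(I * z))‖ ≤ C / z
  hb : b₁ * b₂ = 2 / Real.pi

/-- The normalized cross product `η₁(tξ) η₂(aξ) - η₂(tξ) η₁(aξ)`, proportional to the Weber
kernel. -/
noncomputable def crossE (η₁ η₂ : ℝ → ℂ) (a t ξ : ℝ) : ℂ :=
  η₁ (t * ξ) * η₂ (a * ξ) - η₂ (t * ξ) * η₁ (a * ξ)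

namespace HankelPair

variable {η₁ η₂ η₁' η₂' : ℝ → ℂ} {b₁ b₂ c : ℂ} {C : ℝ} {q q' : ℝ → ℂ} {K s a : ℝ}

lemma C_nonneg (h : HankelPair η₁ η₂ η₁' η₂' b₁ b₂ c C) : 0 ≤ C :=
  (norm_nonneg _).trans (h.bd1 1 one_pos)

lemma norm_exp_I (z : ℝ) : ‖cexp (I * z)‖ = 1 := by
  rw [mul_comm, Complex.norm_exp_ofReal_mul_I]

lemma norm_exp_neg_I (z : ℝ) : ‖cexp (-(I * z))‖ = 1 := by
  have := norm_exp_I (-z)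
  rwa [Complex.ofReal_neg, mul_neg] at this

lemma norm_b1 (h : HankelPair η₁ η₂ η₁' η₂' b₁ b₂ c C) : ‖b₁‖ ≤ 2 * C := by
  have h1 := h.as1 1 one_pos
  have h2 := h.bd1 1 one_pos
  have h3 : ‖b₁ * cexp (I * (1:ℝ))‖ ≤ ‖η₁ 1‖ + ‖η₁ 1 - b₁ * cexp (I * (1:ℝ))‖ :=
    norm_le_insert _ _
  rw [norm_mul, norm_exp_I, mul_one] at h3
  rw [div_one] at h1
  linarith

lemma norm_b2 (h : HankelPair η₁ η₂ η₁' η₂' b₁ b₂ c C) : ‖b₂‖ ≤ 2 * C := by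
  have h1 := h.as2 1 one_pos
  have h2 := h.bd2 1 one_pos
  have h3 : ‖b₂ * cexp (-(I * (1:ℝ)))‖ ≤ ‖η₂ 1‖ + ‖η₂ 1 - b₂ * cexp (-(I * (1:ℝ)))‖ :=
    norm_le_insert _ _
  rw [norm_mul, norm_exp_neg_I, mul_one] at h3
  rw [div_one] at h1
  linarith

lemma crossE_bound (h : HankelPair η₁ η₂ η₁' η₂' b₁ b₂ c C) (ha : 0 < a) {t ξ : ℝ} (ht : 0 < t)
    (hξ : 0 < ξ) : ‖crossE η₁ η₂ a t ξ‖ ≤ 2 * C ^ 2 := by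
  have hC := h.C_nonneg
  have e1 : ‖η₁ (t * ξ) * η₂ (a * ξ)‖ ≤ C * C := by
    rw [norm_mul]
    exact mul_le_mul (h.bd1 _ (by positivity)) (h.bd2 _ (by positivity)) (norm_nonneg _) hC
  have e2 : ‖η₂ (t * ξ) * η₁ (a * ξ)‖ ≤ C * C := by
    rw [norm_mul]
    exact mul_le_mul (h.bd2 _ (by positivity)) (h.bd1 _ (by positivity)) (norm_nonneg _) hC
  refine (norm_sub_le _ _).trans ?_
  nlinarith

lemma cont1 (h : HankelPair η₁ η₂ η₁' η₂' b₁ b₂ c C) : ContinuousOn η₁ (Ioi 0) :=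
  fun z hz => (h.d1 z hz).continuousAt.continuousWithinAt

lemma cont2 (h : HankelPair η₁ η₂ η₁' η₂' b₁ b₂ c C) : ContinuousOn η₂ (Ioi 0) :=
  fun z hz => (h.d2 z hz).continuousAt.continuousWithinAt

lemma cont1' (h : HankelPair η₁ η₂ η₁' η₂' b₁ b₂ c C) : ContinuousOn η₁' (Ioi 0) :=
  fun z hz => (h.d1' z hz).continuousAt.continuousWithinAt

lemma cont2' (h : HankelPair η₁ η₂ η₁' η₂' b₁ b₂ c C) : ContinuousOn η₂' (Ioi 0) :=
  fun z hz => (h.d2' z hz).continuousAt.continuousWithinAt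

lemma contComp {f : ℝ → ℂ} (hf : ContinuousOn f (Ioi 0)) {r : ℝ} (hr : 0 < r) :
    ContinuousOn (fun ξ => f (r * ξ)) (Ioi 0) :=
  hf.comp (by fun_prop) fun ξ hξ => mul_pos hr hξ

lemma crossE_continuousOn_prod (h : HankelPair η₁ η₂ η₁' η₂' b₁ b₂ c C) (ha : 0 < a) :
    ContinuousOn (fun z : ℝ × ℝ => crossE η₁ η₂ a z.1 z.2) (Ioi 0 ×ˢ Ioi 0) := by
  have m1 : MapsTo (fun z : ℝ × ℝ => z.1 * z.2) (Ioi 0 ×ˢ Ioi 0) (Ioi 0) :=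
    fun z hz => mul_pos (a := z.1) (b := z.2) hz.1 hz.2
  have m2 : MapsTo (fun z : ℝ × ℝ => a * z.2) (Ioi 0 ×ˢ Ioi 0) (Ioi 0) :=
    fun z hz => mul_pos (b := z.2) ha hz.2
  have c1 : ContinuousOn (fun z : ℝ × ℝ => z.1 * z.2) (Ioi 0 ×ˢ Ioi 0) := by fun_prop
  have c2 : ContinuousOn (fun z : ℝ × ℝ => a * z.2) (Ioi 0 ×ˢ Ioi 0) := by fun_prop
  exact ((h.cont1.comp c1 m1).mul (h.cont2.comp c2 m2)).sub
    ((h.cont2.comp c1 m1).mul (h.cont1.comp c2 m2))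

lemma crossE_continuousOn (h : HankelPair η₁ η₂ η₁' η₂' b₁ b₂ c C) (ha : 0 < a) {t : ℝ}
    (ht : 0 < t) : ContinuousOn (fun ξ => crossE η₁ η₂ a t ξ) (Ioi 0) :=
  ((contComp h.cont1 ht).mul (contComp h.cont2 ha)).sub
    ((contComp h.cont2 ht).mul (contComp h.cont1 ha))

/-- For large `ξ` the kernel is `b₁ b₂ (exp (i(t-a)ξ) - exp (-i(t-a)ξ))` up to `O(1 / ξ)`, uniformly in
`t ≥ a`. -/
lemma crossE_asymp (h : HankelPair η₁ η₂ η₁' η₂' b₁ b₂ c C) (ha : 0 < a) {t ξ : ℝ} (ht : a ≤ t)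
    (hξ : 0 < ξ) :
    ‖crossE η₁ η₂ a t ξ - (b₁ * b₂ * cexp (I * (((t - a) * ξ : ℝ) : ℂ))
      - b₁ * b₂ * cexp (I * ((-(t - a) * ξ : ℝ) : ℂ)))‖ ≤ 6 * C ^ 2 / (a * ξ) := by
  have hC := h.C_nonneg
  have ht0 : 0 < t := ha.trans_le ht
  have htx : 0 < t * ξ := by positivity
  have hax : 0 < a * ξ := by positivity
  have hle : C / (t * ξ) ≤ C / (a * ξ) := by gcongr
  have hq0 : 0 ≤ C / (a * ξ) := by positivity
  have x1 : cexp (I * (((t - a) * ξ : ℝ) : ℂ))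
      = cexp (I * ((t * ξ : ℝ) : ℂ)) * cexp (-(I * ((a * ξ : ℝ) : ℂ))) := by
    rw [← Complex.exp_add]; congr 1; push_cast; ring
  have x2 : cexp (I * ((-(t - a) * ξ : ℝ) : ℂ))
      = cexp (-(I * ((t * ξ : ℝ) : ℂ))) * cexp (I * ((a * ξ : ℝ) : ℂ)) := by
    rw [← Complex.exp_add]; congr 1; push_cast; ring
  have e1 : ‖η₁ (t * ξ) * η₂ (a * ξ) - b₁ * cexp (I * ((t * ξ : ℝ) : ℂ)) *
      (b₂ * cexp (-(I * ((a * ξ : ℝ) : ℂ))))‖ ≤ 3 * C * (C / (a * ξ)) := by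
    have : η₁ (t * ξ) * η₂ (a * ξ) - b₁ * cexp (I * ((t * ξ : ℝ) : ℂ)) *
      (b₂ * cexp (-(I * ((a * ξ : ℝ) : ℂ))))
      = (η₁ (t * ξ) - b₁ * cexp (I * ((t * ξ : ℝ) : ℂ))) * η₂ (a * ξ)
        + b₁ * cexp (I * ((t * ξ : ℝ) : ℂ)) *
          (η₂ (a * ξ) - b₂ * cexp (-(I * ((a * ξ : ℝ) : ℂ)))) := by ring
    rw [this]
    refine (norm_add_le _ _).trans ?_
    rw [norm_mul, norm_mul, norm_mul, norm_exp_I, mul_one]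
    have f1 := mul_le_mul ((h.as1 _ htx).trans hle) (h.bd2 _ hax) (norm_nonneg _) hq0
    have f2 := mul_le_mul h.norm_b1 (h.as2 _ hax) (norm_nonneg _) (by linarith)
    linarith
  have e2 : ‖η₂ (t * ξ) * η₁ (a * ξ) - b₂ * cexp (-(I * ((t * ξ : ℝ) : ℂ))) *
      (b₁ * cexp (I * ((a * ξ : ℝ) : ℂ)))‖ ≤ 3 * C * (C / (a * ξ)) := by
    have : η₂ (t * ξ) * η₁ (a * ξ) - b₂ * cexp (-(I * ((t * ξ : ℝ) : ℂ))) *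
      (b₁ * cexp (I * ((a * ξ : ℝ) : ℂ)))
      = (η₂ (t * ξ) - b₂ * cexp (-(I * ((t * ξ : ℝ) : ℂ)))) * η₁ (a * ξ)
        + b₂ * cexp (-(I * ((t * ξ : ℝ) : ℂ))) *
          (η₁ (a * ξ) - b₁ * cexp (I * ((a * ξ : ℝ) : ℂ))) := by ring
    rw [this]
    refine (norm_add_le _ _).trans ?_
    rw [norm_mul, norm_mul, norm_mul, norm_exp_neg_I, mul_one]
    have f1 := mul_le_mul ((h.as2 _ htx).trans hle) (h.bd1 _ hax) (norm_nonneg _) hq0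
    have f2 := mul_le_mul h.norm_b2 (h.as1 _ hax) (norm_nonneg _) (by linarith)
    linarith
  rw [x1, x2, crossE]
  calc _ = ‖(η₁ (t * ξ) * η₂ (a * ξ) - b₁ * cexp (I * ((t * ξ : ℝ) : ℂ)) *
      (b₂ * cexp (-(I * ((a * ξ : ℝ) : ℂ))))) - (η₂ (t * ξ) * η₁ (a * ξ)
      - b₂ * cexp (-(I * ((t * ξ : ℝ) : ℂ))) * (b₁ * cexp (I * ((a * ξ : ℝ) : ℂ))))‖ := by
        congr 1; ring
    _ ≤ _ := norm_sub_le _ _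
    _ ≤ 3 * C * (C / (a * ξ)) + 3 * C * (C / (a * ξ)) := add_le_add e1 e2
    _ = _ := by ring

lemma integrableOn_crossE_mul (h : HankelPair η₁ η₂ η₁' η₂' b₁ b₂ c C)
    (hq : PowerDecay q q' K s) (ha : 0 < a) {t : ℝ} (ht : 0 < t) (M : ℝ) :
    IntegrableOn (fun ξ => crossE η₁ η₂ a t ξ * q ξ) (Ioc 0 M) := by
  refine (hq.integrableOn_Ioc M).bdd_mul (c := 2 * C ^ 2)
    (((h.crossE_continuousOn ha ht).aestronglyMeasurable measurableSet_Ioi).mono_set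
      Ioc_subset_Ioi_self) ?_
  filter_upwards [ae_restrict_mem measurableSet_Ioc] with ξ hξ
  exact h.crossE_bound ha ht hξ.1

/-- Convergence of the inner improper integral, with a bound on its partial integrals that is
integrable in `t` near `a`. -/
lemma inner (h : HankelPair η₁ η₂ η₁' η₂' b₁ b₂ c C) (hq : PowerDecay q q' K s) (ha : 0 < a) :
    ∃ K' : ℝ, ∀ t : ℝ, a < t →
      (∃ L : ℂ, Tendsto (fun M : ℝ => ∫ ξ in (0:ℝ)..M, crossE η₁ η₂ a t ξ * q ξ) atTop (𝓝 L)) ∧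
      ∀ M : ℝ, 1 ≤ M →
        ‖∫ ξ in (0:ℝ)..M, crossE η₁ η₂ a t ξ * q ξ‖ ≤ K' * (1 + (t - a) ^ (s / 2 - 1)) := by
  obtain ⟨K₁, hK₁⟩ := hq.oscillatory
  have hs0 := hq.hs0
  have hK := hq.K_nonneg
  set R : ℝ → ℝ → ℂ := fun t ξ => crossE η₁ η₂ a t ξ -
    (b₁ * b₂ * cexp (I * (((t - a) * ξ : ℝ) : ℂ))
      - b₁ * b₂ * cexp (I * ((-(t - a) * ξ : ℝ) : ℂ))) with hR
  set B : ℝ → ℝ := fun ξ => 6 * C ^ 2 / a * K * ξ ^ (-s - 1) with hB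
  have hBi : IntegrableOn B (Ioi 1) :=
    (integrableOn_Ioi_rpow_of_lt (by linarith) one_pos).const_mul _
  have hsub : Ioi (1:ℝ) ⊆ Ioi 0 := Ioi_subset_Ioi zero_le_one
  have hRb : ∀ t, a < t → ∀ ξ, 0 < ξ → ‖R t ξ * q ξ‖ ≤ B ξ := by
    intro t ht ξ hξ
    rw [norm_mul]
    calc _ ≤ 6 * C ^ 2 / (a * ξ) * (K * ξ ^ (-s)) :=
          mul_le_mul (h.crossE_asymp ha ht.le hξ) (hq.bound ξ hξ) (norm_nonneg _) (by positivity)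
      _ = _ := by
          simp only [hB]
          rw [Real.rpow_sub_one hξ.ne']
          field_simp
  have hRi : ∀ t, a < t → IntegrableOn (fun ξ => R t ξ * q ξ) (Ioi 1) := by
    intro t ht
    refine hBi.mono' ?_ ?_
    · refine AEStronglyMeasurable.mul ?_ (hq.aestronglyMeasurable.mono_set hsub)
      refine AEStronglyMeasurable.sub ?_ ?_
      · exact ((h.crossE_continuousOn ha (ha.trans ht)).aestronglyMeasurable
          measurableSet_Ioi).mono_set hsub
      · apply Continuous.aestronglyMeasurable; fun_prop
    · filter_upwards [ae_restrict_mem measurableSet_Ioi] with ξ hξ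
      exact hRb t ht ξ (hsub hξ)
  -- the oscillating leading part is split off on `[1, M]`
  have hsplit : ∀ t, a < t → ∀ M, 1 ≤ M → ∫ ξ in (0:ℝ)..M, crossE η₁ η₂ a t ξ * q ξ
      = (∫ ξ in (0:ℝ)..1, crossE η₁ η₂ a t ξ * q ξ) +
        (b₁ * b₂ * (∫ ξ in (1:ℝ)..M, cexp (I * (((t - a) * ξ : ℝ) : ℂ)) * q ξ)
        - b₁ * b₂ * (∫ ξ in (1:ℝ)..M, cexp (I * ((-(t - a) * ξ : ℝ) : ℂ)) * q ξ)
        + ∫ ξ in (1:ℝ)..M, R t ξ * q ξ) := by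
    intro t ht M hM
    have ht0 := ha.trans ht
    have hi0 : ∀ M : ℝ, 0 ≤ M →
        IntervalIntegrable (fun ξ => crossE η₁ η₂ a t ξ * q ξ) volume 0 M := fun M hM => by
      rw [intervalIntegrable_iff_integrableOn_Ioc_of_le hM]
      exact h.integrableOn_crossE_mul hq ha ht0 M
    have hqM : IntervalIntegrable q volume 1 M := by
      rw [intervalIntegrable_iff_integrableOn_Ioc_of_le hM]
      exact (hq.integrableOn_Ioc M).mono_set (Ioc_subset_Ioc_left zero_le_one)
    have hx : ∀ l : ℝ, IntervalIntegrable
        (fun ξ => cexp (I * ((l * ξ : ℝ) : ℂ)) * q ξ) volume 1 M := fun l =>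
      hqM.continuousOn_mul (by fun_prop)
    have hr : IntervalIntegrable (fun ξ => R t ξ * q ξ) volume 1 M := by
      rw [intervalIntegrable_iff_integrableOn_Ioc_of_le hM]
      exact (hRi t ht).mono_set Ioc_subset_Ioi_self
    rw [← intervalIntegral.integral_add_adjacent_intervals (hi0 1 zero_le_one)
      ((hi0 1 zero_le_one).symm.trans (hi0 M (zero_le_one.trans hM)))]
    rw [← intervalIntegral.integral_const_mul, ← intervalIntegral.integral_const_mul,
      ← intervalIntegral.integral_sub ((hx _).const_mul _) ((hx _).const_mul _),
      ← intervalIntegral.integral_add (((hx _).const_mul _).sub ((hx _).const_mul _)) hr]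
    congr 2
    ext ξ
    simp only [hR]
    ring
  refine ⟨2 * C ^ 2 * (∫ ξ in Ioc (0:ℝ) 1, ‖q ξ‖) + (∫ ξ in Ioi (1:ℝ), B ξ)
    + 2 * ‖b₁ * b₂‖ * |K₁|, fun t ht => ?_⟩
  have hd : 0 < t - a := sub_pos.2 ht
  have ht0 := ha.trans ht
  obtain ⟨⟨L₁, hL₁⟩, hb₁⟩ := hK₁ (t - a) hd.ne'
  obtain ⟨⟨L₂, hL₂⟩, hb₂⟩ := hK₁ (-(t - a)) (neg_ne_zero.2 hd.ne')
  constructor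
  · refine ⟨_, Tendsto.congr' ?_ (((hL₁.const_mul (b₁ * b₂)).sub (hL₂.const_mul (b₁ * b₂))).add
      (intervalIntegral_tendsto_integral_Ioi 1 (hRi t ht) tendsto_id) |>.const_add
        (∫ ξ in (0:ℝ)..1, crossE η₁ η₂ a t ξ * q ξ))⟩
    filter_upwards [eventually_ge_atTop 1] with M hM
    rw [hsplit t ht M hM]; rfl
  · intro M hM
    rw [hsplit t ht M hM]
    have g0 : ‖∫ ξ in (0:ℝ)..1, crossE η₁ η₂ a t ξ * q ξ‖
        ≤ 2 * C ^ 2 * (∫ ξ in Ioc (0:ℝ) 1, ‖q ξ‖) := by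
      rw [intervalIntegral.integral_of_le zero_le_one, ← MeasureTheory.integral_const_mul]
      refine MeasureTheory.norm_integral_le_of_norm_le ((hq.integrableOn_Ioc 1).norm.const_mul _) ?_
      filter_upwards [ae_restrict_mem measurableSet_Ioc] with ξ hξ
      rw [norm_mul]
      exact mul_le_mul_of_nonneg_right (h.crossE_bound ha ht0 hξ.1) (norm_nonneg _)
    have g3 : ‖∫ ξ in (1:ℝ)..M, R t ξ * q ξ‖ ≤ ∫ ξ in Ioi (1:ℝ), B ξ := by
      rw [intervalIntegral.integral_of_le hM]
      refine (MeasureTheory.norm_integral_le_of_norm_le (hBi.mono_set Ioc_subset_Ioi_self) ?_).trans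
        (setIntegral_mono_set hBi ?_ Ioc_subset_Ioi_self.eventuallyLE)
      · filter_upwards [ae_restrict_mem measurableSet_Ioc] with ξ hξ
        exact hRb t ht ξ (one_pos.trans hξ.1)
      · filter_upwards [ae_restrict_mem measurableSet_Ioi] with ξ hξ
        have : 0 < ξ := hsub hξ
        simp only [Pi.zero_apply, hB]
        positivity
    have hx0 : 0 < (t - a) ^ (s / 2 - 1) := Real.rpow_pos_of_pos hd _
    have g1 := hb₁ M hM
    have g2 := hb₂ M hM
    rw [abs_neg] at g2
    rw [abs_of_pos hd] at g1 g2
    have hk := mul_le_mul_of_nonneg_right (le_abs_self K₁) hx0.le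
    have q0 : 0 ≤ 2 * C ^ 2 * (∫ ξ in Ioc (0:ℝ) 1, ‖q ξ‖) := (norm_nonneg _).trans g0
    have q3 : 0 ≤ ∫ ξ in Ioi (1:ℝ), B ξ := (norm_nonneg _).trans g3
    calc _ ≤ ‖∫ ξ in (0:ℝ)..1, crossE η₁ η₂ a t ξ * q ξ‖ +
        (‖b₁ * b₂‖ * ‖∫ ξ in (1:ℝ)..M, cexp (I * (((t - a) * ξ : ℝ) : ℂ)) * q ξ‖
        + ‖b₁ * b₂‖ * ‖∫ ξ in (1:ℝ)..M, cexp (I * ((-(t - a) * ξ : ℝ) : ℂ)) * q ξ‖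
        + ‖∫ ξ in (1:ℝ)..M, R t ξ * q ξ‖) := by
          refine (norm_add_le _ _).trans (add_le_add_right ((norm_add_le _ _).trans
            (add_le_add_left ((norm_sub_le _ _).trans ?_) _)) _)
          rw [norm_mul, norm_mul (b₁ * b₂)]
      _ ≤ 2 * C ^ 2 * (∫ ξ in Ioc (0:ℝ) 1, ‖q ξ‖) +
        (‖b₁ * b₂‖ * (|K₁| * (t - a) ^ (s / 2 - 1)) + ‖b₁ * b₂‖ * (|K₁| * (t - a) ^ (s / 2 - 1))
        + ∫ ξ in Ioi (1:ℝ), B ξ) := by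
          gcongr
          · exact g1.trans hk
          · exact g2.trans hk
      _ ≤ _ := by
          have hk0 : 0 ≤ ‖b₁ * b₂‖ * |K₁| := by positivity
          nlinarith [mul_nonneg q0 hx0.le, mul_nonneg q3 hx0.le]

end HankelPair

/-! ### The Lommel integral and the behaviour away from the diagonal -/

/-- The `t`-derivative of `crossE`. -/
noncomputable def crossE' (η₁ η₂ η₁' η₂' : ℝ → ℂ) (a t ξ : ℝ) : ℂ :=
  ξ * (η₁' (t * ξ) * η₂ (a * ξ) - η₂' (t * ξ) * η₁ (a * ξ))

namespace HankelPair

variable {η₁ η₂ η₁' η₂' : ℝ → ℂ} {b₁ b₂ c : ℂ} {C : ℝ} {q q' : ℝ → ℂ} {K s a : ℝ}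

lemma hasDerivAt_scale {f : ℝ → ℂ} {f' : ℂ} {r t : ℝ} (hf : HasDerivAt f f' (t * r)) :
    HasDerivAt (fun t => f (t * r)) (r * f') t := by
  have := hf.scomp t ((hasDerivAt_id t).mul_const r)
  simpa [Function.comp_def] using this

lemma crossE_hasDerivAt (h : HankelPair η₁ η₂ η₁' η₂' b₁ b₂ c C) {t ξ : ℝ} (ht : 0 < t)
    (hξ : 0 < ξ) :
    HasDerivAt (fun t => crossE η₁ η₂ a t ξ) (crossE' η₁ η₂ η₁' η₂' a t ξ) t := by
  have htx : 0 < t * ξ := by positivity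
  have := ((hasDerivAt_scale (h.d1 _ htx)).mul_const (η₂ (a * ξ))).sub
    ((hasDerivAt_scale (h.d2 _ htx)).mul_const (η₁ (a * ξ)))
  refine this.congr_deriv ?_
  rw [crossE']; ring

lemma crossE'_hasDerivAt (h : HankelPair η₁ η₂ η₁' η₂' b₁ b₂ c C) {t ξ : ℝ} (ht : 0 < t)
    (hξ : 0 < ξ) :
    HasDerivAt (fun t => crossE' η₁ η₂ η₁' η₂' a t ξ)
      (-(ξ ^ 2 + c / t ^ 2) * crossE η₁ η₂ a t ξ) t := by
  have htx : 0 < t * ξ := by positivity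
  have := (((hasDerivAt_scale (h.d1' _ htx)).mul_const (η₂ (a * ξ))).sub
    ((hasDerivAt_scale (h.d2' _ htx)).mul_const (η₁ (a * ξ)))).const_mul (ξ : ℂ)
  refine this.congr_deriv ?_
  have h1 : (ξ : ℂ) ≠ 0 := by exact_mod_cast hξ.ne'
  have h2 : (t : ℂ) ≠ 0 := by exact_mod_cast ht.ne'
  rw [crossE]
  push_cast
  field_simp
  ring

/-- Lommel's integral: the integrand `e(t,x) e(t,ξ)` is, up to the factor `x² - ξ²`, the
`t`-derivative of a Wronskian which vanishes at `t = a`. -/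
lemma lommel (h : HankelPair η₁ η₂ η₁' η₂' b₁ b₂ c C) (ha : 0 < a) {x ξ N : ℝ} (hx : 0 < x)
    (hξ : 0 < ξ) (hN : a ≤ N) :
    ((x : ℂ) ^ 2 - ξ ^ 2) * ∫ t in a..N, crossE η₁ η₂ a t x * crossE η₁ η₂ a t ξ
      = crossE η₁ η₂ a N x * crossE' η₁ η₂ η₁' η₂' a N ξ
        - crossE η₁ η₂ a N ξ * crossE' η₁ η₂ η₁' η₂' a N x := by
  have hpos : ∀ t ∈ uIcc a N, 0 < t := by
    intro t ht
    rw [uIcc_of_le hN] at ht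
    exact ha.trans_le ht.1
  rw [← intervalIntegral.integral_const_mul]
  rw [intervalIntegral.integral_eq_sub_of_hasDerivAt
    (f := fun t => crossE η₁ η₂ a t x * crossE' η₁ η₂ η₁' η₂' a t ξ
        - crossE η₁ η₂ a t ξ * crossE' η₁ η₂ η₁' η₂' a t x)]
  · have e0 : ∀ y, crossE η₁ η₂ a a y = 0 := fun y => by rw [crossE]; ring
    simp [e0]
  · intro t ht
    have ht0 := hpos t ht
    refine (((h.crossE_hasDerivAt ht0 hx).mul (h.crossE'_hasDerivAt ht0 hξ)).sub
      ((h.crossE_hasDerivAt ht0 hξ).mul (h.crossE'_hasDerivAt ht0 hx))).congr_deriv ?_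
    ring
  · apply ContinuousOn.intervalIntegrable
    have hc : ∀ y, 0 < y → ContinuousOn (fun t => crossE η₁ η₂ a t y) (uIcc a N) := fun y hy t ht =>
      (h.crossE_hasDerivAt (hpos t ht) hy).continuousAt.continuousWithinAt
    exact continuousOn_const.mul ((hc x hx).mul (hc ξ hξ))

lemma crossE'_continuousOn (h : HankelPair η₁ η₂ η₁' η₂' b₁ b₂ c C) (ha : 0 < a) {t : ℝ}
    (ht : 0 < t) : ContinuousOn (fun ξ => crossE' η₁ η₂ η₁' η₂' a t ξ) (Ioi 0) :=
  (Complex.continuous_ofReal.continuousOn).mul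
  (((contComp h.cont1' ht).mul (contComp h.cont2 ha)).sub
    ((contComp h.cont2' ht).mul (contComp h.cont1 ha)))

/-- Integrability behind the interchange of the outer and the truncated inner integral. -/
lemma integrable_prod (h : HankelPair η₁ η₂ η₁' η₂' b₁ b₂ c C) (hq : PowerDecay q q' K s)
    (ha : 0 < a) {x : ℝ} (hx : 0 < x) (N M : ℝ) :
    Integrable (fun z : ℝ × ℝ => crossE η₁ η₂ a z.1 x * (crossE η₁ η₂ a z.1 z.2 * q z.2))
      ((volume.restrict (Ioc a N)).prod (volume.restrict (Ioc 0 M))) := by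
  have h1 : Integrable (fun z : ℝ × ℝ => (1:ℂ) * q z.2)
      ((volume.restrict (Ioc a N)).prod (volume.restrict (Ioc 0 M))) :=
    Integrable.mul_prod (f := fun _ => (1:ℂ)) (integrable_const _) (hq.integrableOn_Ioc M)
  have hae : ∀ᵐ z ∂((volume.restrict (Ioc a N)).prod (volume.restrict (Ioc 0 M))),
      z ∈ Ioc a N ×ˢ Ioc 0 M := by
    rw [Measure.prod_restrict]
    exact ae_restrict_mem (measurableSet_Ioc.prod measurableSet_Ioc)
  have hsub : Ioc a N ×ˢ Ioc 0 M ⊆ Ioi (0:ℝ) ×ˢ Ioi (0:ℝ) := fun z hz =>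
    ⟨ha.trans hz.1.1, hz.2.1⟩
  have hc : ContinuousOn (fun z : ℝ × ℝ => crossE η₁ η₂ a z.1 x * crossE η₁ η₂ a z.1 z.2)
      (Ioi 0 ×ˢ Ioi 0) := by
    refine ContinuousOn.mul ?_ (h.crossE_continuousOn_prod ha)
    exact (h.crossE_continuousOn_prod ha).comp
      (f := fun z : ℝ × ℝ => (z.1, x)) (by fun_prop) fun z hz => ⟨hz.1, hx⟩
  have h2 := h1.bdd_mul (c := 2 * C ^ 2 * (2 * C ^ 2))
    (f := fun z : ℝ × ℝ => crossE η₁ η₂ a z.1 x * crossE η₁ η₂ a z.1 z.2) ?_ ?_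
  · refine h2.congr (ae_of_all _ fun z => ?_)
    simp only
    ring
  · rw [Measure.prod_restrict]
    exact (hc.aestronglyMeasurable (measurableSet_Ioi.prod measurableSet_Ioi)).mono_set hsub
  · filter_upwards [hae] with z hz
    rw [norm_mul]
    exact mul_le_mul (h.crossE_bound ha (ha.trans hz.1.1) hx)
      (h.crossE_bound ha (ha.trans hz.1.1) hz.2.1) (norm_nonneg _) (by positivity)

/-- The finite outer integral is the limit of the integrals of `q` against the Lommel kernel. -/
lemma outer_eq_lim (h : HankelPair η₁ η₂ η₁' η₂' b₁ b₂ c C) (hq : PowerDecay q q' K s)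
    (ha : 0 < a) {F : ℝ → ℂ}
    (hF : ∀ t, a < t →
      Tendsto (fun M : ℝ => ∫ ξ in (0:ℝ)..M, crossE η₁ η₂ a t ξ * q ξ) atTop (𝓝 (F t)))
    {x N : ℝ} (hx : 0 < x) (hN : a ≤ N) :
    Tendsto (fun M : ℝ => ∫ ξ in Ioc 0 M,
      (∫ t in a..N, crossE η₁ η₂ a t x * crossE η₁ η₂ a t ξ) * q ξ) atTop
      (𝓝 (∫ t in a..N, crossE η₁ η₂ a t x * F t)) := by
  obtain ⟨K', hK'⟩ := h.inner hq ha
  have hC := h.C_nonneg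
  have hs0 := hq.hs0
  have hdom : Tendsto (fun M : ℝ => ∫ t in Ioc a N, crossE η₁ η₂ a t x *
      ∫ ξ in Ioc 0 M, crossE η₁ η₂ a t ξ * q ξ) atTop
      (𝓝 (∫ t in Ioc a N, crossE η₁ η₂ a t x * F t)) := by
    refine tendsto_integral_filter_of_dominated_convergence
      (fun t => 2 * C ^ 2 * (|K'| * (1 + (t - a) ^ (s / 2 - 1)))) ?_ ?_ ?_ ?_
    · filter_upwards with M
      have := (h.integrable_prod hq ha hx N M).1.integral_prod_right'
      refine this.congr (ae_of_all _ fun t => ?_)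
      exact MeasureTheory.integral_const_mul (crossE η₁ η₂ a t x)
        (fun ξ => crossE η₁ η₂ a t ξ * q ξ)
    · filter_upwards [eventually_ge_atTop 1] with M hM
      filter_upwards [ae_restrict_mem measurableSet_Ioc] with t ht
      have h1 := (hK' t ht.1).2 M hM
      rw [intervalIntegral.integral_of_le (zero_le_one.trans hM)] at h1
      rw [norm_mul]
      have hp : 0 < (t - a) ^ (s / 2 - 1) := Real.rpow_pos_of_pos (sub_pos.2 ht.1) _
      refine mul_le_mul (h.crossE_bound ha (ha.trans ht.1) hx) (h1.trans ?_) (norm_nonneg _)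
        (by positivity)
      exact mul_le_mul_of_nonneg_right (le_abs_self _) (by positivity)
    · have h0 := (intervalIntegral.intervalIntegrable_rpow' (a := 0) (b := N - a)
        (r := s / 2 - 1) (by linarith)).comp_sub_right a
      rw [zero_add, sub_add_cancel, intervalIntegrable_iff_integrableOn_Ioc_of_le hN] at h0
      exact (((integrable_const (1:ℝ)).add h0).const_mul _).const_mul _
    · filter_upwards [ae_restrict_mem measurableSet_Ioc] with t ht
      refine Tendsto.const_mul _ ((hF t ht.1).congr' ?_)
      filter_upwards [eventually_ge_atTop 0] with M hM
      rw [intervalIntegral.integral_of_le hM]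
  rw [← intervalIntegral.integral_of_le hN] at hdom
  refine hdom.congr fun M => ?_
  have hsw := integral_integral_swap
    (f := fun t ξ => crossE η₁ η₂ a t x * (crossE η₁ η₂ a t ξ * q ξ))
    (h.integrable_prod hq ha hx N M)
  calc _ = ∫ t in Ioc a N, ∫ ξ in Ioc 0 M,
        crossE η₁ η₂ a t x * (crossE η₁ η₂ a t ξ * q ξ) := by
        congr 1; ext t; exact (MeasureTheory.integral_const_mul _ _).symm
    _ = ∫ ξ in Ioc 0 M, ∫ t in Ioc a N,
        crossE η₁ η₂ a t x * (crossE η₁ η₂ a t ξ * q ξ) := hsw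
    _ = _ := by
        congr 1; ext ξ
        rw [intervalIntegral.integral_of_le hN, ← MeasureTheory.integral_mul_const]
        congr 1; ext t; ring

/-- Riemann–Lebesgue for functions which are only asymptotically exponential. -/
lemma tendsto_integral_asymp {S : Set ℝ} (hS : MeasurableSet S) (hS0 : S ⊆ Ioi 0) {ζ f : ℝ → ℂ}
    {b : ℂ} {σ : ℝ} (hσ : σ ≠ 0) (hζ : ContinuousOn ζ (Ioi 0)) (hf : IntegrableOn f S) {G : ℝ → ℝ}
    (hG : IntegrableOn G S)
    (has : ∀ z, 0 < z → ‖ζ z - b * cexp (I * ((σ * z : ℝ) : ℂ))‖ ≤ C / z)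
    (hdom : ∀ N, 1 ≤ N → ∀ ξ ∈ S,
      ‖(ζ (N * ξ) - b * cexp (I * ((σ * (N * ξ) : ℝ) : ℂ))) * f ξ‖ ≤ G ξ) :
    Tendsto (fun N : ℝ => ∫ ξ in S, ζ (N * ξ) * f ξ) atTop (𝓝 0) := by
  have h1 := (riemannLebesgue_setIntegral hS f σ hσ).const_mul b
  have hmeas : ∀ N : ℝ, 0 < N → AEStronglyMeasurable
      (fun ξ => (ζ (N * ξ) - b * cexp (I * ((σ * (N * ξ) : ℝ) : ℂ))) * f ξ)
      (volume.restrict S) := fun N hN => by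
    refine AEStronglyMeasurable.mul (AEStronglyMeasurable.sub ?_ ?_) hf.1
    · exact ((contComp hζ hN).aestronglyMeasurable measurableSet_Ioi).mono_set hS0
    · apply Continuous.aestronglyMeasurable; fun_prop
  have h2 : Tendsto (fun N : ℝ => ∫ ξ in S,
      (ζ (N * ξ) - b * cexp (I * ((σ * (N * ξ) : ℝ) : ℂ))) * f ξ) atTop (𝓝 (∫ ξ in S, (0:ℂ))) := by
    refine tendsto_integral_filter_of_dominated_convergence G ?_ ?_ hG ?_
    · filter_upwards [eventually_gt_atTop 0] with N hN using hmeas N hN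
    · filter_upwards [eventually_ge_atTop 1] with N hN
      filter_upwards [ae_restrict_mem hS] with ξ hξ using hdom N hN ξ hξ
    · filter_upwards [ae_restrict_mem hS] with ξ hξ
      have hξ0 : 0 < ξ := hS0 hξ
      have hz : Tendsto (fun N : ℝ => C / (N * ξ) * ‖f ξ‖) atTop (𝓝 0) := by
        have : Tendsto (fun N : ℝ => C / (N * ξ)) atTop (𝓝 0) :=
          tendsto_const_nhds.div_atTop (tendsto_id.atTop_mul_const hξ0)
        simpa using this.mul_const ‖f ξ‖
      refine squeeze_zero_norm' ?_ hz
      filter_upwards [eventually_gt_atTop 0] with N hN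
      rw [norm_mul]
      exact mul_le_mul_of_nonneg_right (has _ (by positivity)) (norm_nonneg _)
  have h3 := h1.add h2
  simp only [mul_zero, integral_zero, add_zero] at h3
  refine h3.congr' ?_
  filter_upwards [eventually_ge_atTop 1] with N hN
  rw [← MeasureTheory.integral_const_mul, ← MeasureTheory.integral_add]
  · congr 1; ext ξ
    rw [show σ * N * ξ = σ * (N * ξ) by ring]; ring
  · refine (hf.bdd_mul (c := 1) (by apply Continuous.aestronglyMeasurable; fun_prop)
      (ae_of_all _ fun ξ => ?_)).const_mul b
    exact (norm_exp_I _).le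
  · refine hG.mono' (hmeas N (by linarith)) ?_
    filter_upwards [ae_restrict_mem hS] with ξ hξ using hdom N hN ξ hξ

lemma tendsto_integral_eta1 (h : HankelPair η₁ η₂ η₁' η₂' b₁ b₂ c C) {S : Set ℝ}
    (hS : MeasurableSet S) (hS0 : S ⊆ Ioi 0) {f : ℝ → ℂ} (hf : IntegrableOn f S) :
    Tendsto (fun N : ℝ => ∫ ξ in S, η₁ (N * ξ) * f ξ) atTop (𝓝 0) := by
  have hC := h.C_nonneg
  refine tendsto_integral_asymp (σ := 1) (b := b₁) (C := C) hS hS0 one_ne_zero h.cont1 hf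
    (hf.norm.const_mul (3 * C)) (fun z hz => by simpa using h.as1 z hz) fun N hN ξ hξ => ?_
  have hp : 0 < N * ξ := mul_pos (by linarith) (hS0 hξ)
  rw [norm_mul]
  refine mul_le_mul_of_nonneg_right ((norm_sub_le _ _).trans ?_) (norm_nonneg _)
  rw [norm_mul, norm_exp_I]
  linarith [h.bd1 _ hp, h.norm_b1]

lemma tendsto_integral_eta2 (h : HankelPair η₁ η₂ η₁' η₂' b₁ b₂ c C) {S : Set ℝ}
    (hS : MeasurableSet S) (hS0 : S ⊆ Ioi 0) {f : ℝ → ℂ} (hf : IntegrableOn f S) :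
    Tendsto (fun N : ℝ => ∫ ξ in S, η₂ (N * ξ) * f ξ) atTop (𝓝 0) := by
  have hC := h.C_nonneg
  refine tendsto_integral_asymp (σ := -1) (b := b₂) (C := C) hS hS0 (by norm_num) h.cont2 hf
    (hf.norm.const_mul (3 * C)) (fun z hz => by simpa using h.as2 z hz) fun N hN ξ hξ => ?_
  have hp : 0 < N * ξ := mul_pos (by linarith) (hS0 hξ)
  rw [norm_mul]
  refine mul_le_mul_of_nonneg_right ((norm_sub_le _ _).trans ?_) (norm_nonneg _)
  rw [norm_mul, norm_exp_I]
  linarith [h.bd2 _ hp, h.norm_b2]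

lemma tendsto_integral_eta1' (h : HankelPair η₁ η₂ η₁' η₂' b₁ b₂ c C) {S : Set ℝ}
    (hS : MeasurableSet S) (hS0 : S ⊆ Ioi 0) {f : ℝ → ℂ} (hf : IntegrableOn f S)
    (hf1 : IntegrableOn (fun ξ => ξ * f ξ) S) :
    Tendsto (fun N : ℝ => ∫ ξ in S, η₁' (N * ξ) * (ξ * f ξ)) atTop (𝓝 0) := by
  have hC := h.C_nonneg
  refine tendsto_integral_asymp (σ := 1) (b := I * b₁) (C := C) hS hS0 one_ne_zero h.cont1' hf1
    (hf.norm.const_mul C) (fun z hz => by simpa using h.as1' z hz) fun N hN ξ hξ => ?_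
  have hξ0 : 0 < ξ := hS0 hξ
  have hp : 0 < N * ξ := mul_pos (by linarith) hξ0
  have := h.as1' _ hp
  rw [norm_mul, norm_mul, one_mul, Complex.norm_real, Real.norm_eq_abs, abs_of_pos hξ0, ← mul_assoc]
  refine mul_le_mul_of_nonneg_right ?_ (norm_nonneg _)
  refine (mul_le_mul_of_nonneg_right this hξ0.le).trans ?_
  rw [div_mul_eq_mul_div, mul_div_mul_right _ _ hξ0.ne']
  exact div_le_self hC hN

lemma tendsto_integral_eta2' (h : HankelPair η₁ η₂ η₁' η₂' b₁ b₂ c C) {S : Set ℝ}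
    (hS : MeasurableSet S) (hS0 : S ⊆ Ioi 0) {f : ℝ → ℂ} (hf : IntegrableOn f S)
    (hf1 : IntegrableOn (fun ξ => ξ * f ξ) S) :
    Tendsto (fun N : ℝ => ∫ ξ in S, η₂' (N * ξ) * (ξ * f ξ)) atTop (𝓝 0) := by
  have hC := h.C_nonneg
  have has : ∀ z, 0 < z → ‖η₂' z - (-(I * b₂)) * cexp (I * ((-1 * z : ℝ) : ℂ))‖ ≤ C / z := by
    intro z hz
    simpa using h.as2' z hz
  refine tendsto_integral_asymp (σ := -1) (b := -(I * b₂)) (C := C) hS hS0 (by norm_num) h.cont2'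
    hf1 (hf.norm.const_mul C) has fun N hN ξ hξ => ?_
  have hξ0 : 0 < ξ := hS0 hξ
  have hp : 0 < N * ξ := mul_pos (by linarith) hξ0
  have := has _ hp
  rw [norm_mul, norm_mul, Complex.norm_real, Real.norm_eq_abs, abs_of_pos hξ0, ← mul_assoc]
  refine mul_le_mul_of_nonneg_right ?_ (norm_nonneg _)
  refine (mul_le_mul_of_nonneg_right this hξ0.le).trans ?_
  rw [div_mul_eq_mul_div, mul_div_mul_right _ _ hξ0.ne']
  exact div_le_self hC hN

lemma tendsto_integral_crossE (h : HankelPair η₁ η₂ η₁' η₂' b₁ b₂ c C) (ha : 0 < a) {S : Set ℝ}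
    (hS : MeasurableSet S) (hS0 : S ⊆ Ioi 0) {f : ℝ → ℂ} (hf : IntegrableOn f S) :
    Tendsto (fun N : ℝ => ∫ ξ in S, crossE η₁ η₂ a N ξ * f ξ) atTop (𝓝 0) ∧
    ∀ N : ℝ, 0 < N → IntegrableOn (fun ξ => crossE η₁ η₂ a N ξ * f ξ) S := by
  have i1 : IntegrableOn (fun ξ => η₁ (a * ξ) * f ξ) S := by
    refine hf.bdd_mul (c := C)
      (((contComp h.cont1 ha).aestronglyMeasurable measurableSet_Ioi).mono_set hS0) ?_
    filter_upwards [ae_restrict_mem hS] with ξ hξ using h.bd1 _ (mul_pos ha (hS0 hξ))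
  have i2 : IntegrableOn (fun ξ => η₂ (a * ξ) * f ξ) S := by
    refine hf.bdd_mul (c := C)
      (((contComp h.cont2 ha).aestronglyMeasurable measurableSet_Ioi).mono_set hS0) ?_
    filter_upwards [ae_restrict_mem hS] with ξ hξ using h.bd2 _ (mul_pos ha (hS0 hξ))
  have j1 : ∀ N : ℝ, 0 < N → IntegrableOn (fun ξ => η₁ (N * ξ) * (η₂ (a * ξ) * f ξ)) S := by
    intro N hN
    refine i2.bdd_mul (c := C)
      (((contComp h.cont1 hN).aestronglyMeasurable measurableSet_Ioi).mono_set hS0) ?_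
    filter_upwards [ae_restrict_mem hS] with ξ hξ using h.bd1 _ (mul_pos hN (hS0 hξ))
  have j2 : ∀ N : ℝ, 0 < N → IntegrableOn (fun ξ => η₂ (N * ξ) * (η₁ (a * ξ) * f ξ)) S := by
    intro N hN
    refine i1.bdd_mul (c := C)
      (((contComp h.cont2 hN).aestronglyMeasurable measurableSet_Ioi).mono_set hS0) ?_
    filter_upwards [ae_restrict_mem hS] with ξ hξ using h.bd2 _ (mul_pos hN (hS0 hξ))
  have hfe : ∀ N, (fun ξ => crossE η₁ η₂ a N ξ * f ξ) = fun ξ =>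
      η₁ (N * ξ) * (η₂ (a * ξ) * f ξ) - η₂ (N * ξ) * (η₁ (a * ξ) * f ξ) := by
    intro N; ext ξ; rw [crossE]; ring
  constructor
  · have := (h.tendsto_integral_eta1 hS hS0 i2).sub (h.tendsto_integral_eta2 hS hS0 i1)
    rw [sub_zero] at this
    refine this.congr' ?_
    filter_upwards [eventually_gt_atTop 0] with N hN
    rw [hfe, ← MeasureTheory.integral_sub (j1 N hN) (j2 N hN)]
  · intro N hN
    rw [hfe]
    exact (j1 N hN).sub (j2 N hN)

lemma norm_eta1'_le (h : HankelPair η₁ η₂ η₁' η₂' b₁ b₂ c C) {z : ℝ} (hz : 0 < z) :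
    ‖η₁' z‖ ≤ 2 * C + C / z := by
  have h1 := h.as1' z hz
  have h2 : ‖η₁' z‖ ≤ ‖I * b₁ * cexp (I * z)‖ + ‖I * b₁ * cexp (I * z) - η₁' z‖ := norm_le_insert _ _
  rw [norm_mul, norm_exp_I, norm_mul, Complex.norm_I, norm_sub_rev] at h2
  linarith [h.norm_b1]

lemma norm_eta2'_le (h : HankelPair η₁ η₂ η₁' η₂' b₁ b₂ c C) {z : ℝ} (hz : 0 < z) :
    ‖η₂' z‖ ≤ 2 * C + C / z := by
  have h1 := h.as2' z hz
  have h2 : ‖η₂' z‖ ≤ ‖-(I * b₂ * cexp (-(I * z)))‖ + ‖-(I * b₂ * cexp (-(I * z))) - η₂' z‖ :=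
    norm_le_insert _ _
  rw [norm_neg, norm_mul, norm_exp_neg_I, norm_mul, Complex.norm_I, norm_sub_rev, sub_neg_eq_add] at h2
  linarith [h.norm_b2]

lemma tendsto_integral_crossE' (h : HankelPair η₁ η₂ η₁' η₂' b₁ b₂ c C) (ha : 0 < a) {S : Set ℝ}
    (hS : MeasurableSet S) (hS0 : S ⊆ Ioi 0) {f : ℝ → ℂ} (hf : IntegrableOn f S)
    (hf1 : IntegrableOn (fun ξ => ξ * f ξ) S) :
    Tendsto (fun N : ℝ => ∫ ξ in S, crossE' η₁ η₂ η₁' η₂' a N ξ * f ξ) atTop (𝓝 0) ∧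
    ∀ N : ℝ, 0 < N → IntegrableOn (fun ξ => crossE' η₁ η₂ η₁' η₂' a N ξ * f ξ) S := by
  have hC := h.C_nonneg
  have i1 : ∀ g : ℝ → ℂ, IntegrableOn g S → IntegrableOn (fun ξ => η₁ (a * ξ) * g ξ) S := by
    intro g hg
    refine hg.bdd_mul (c := C)
      (((contComp h.cont1 ha).aestronglyMeasurable measurableSet_Ioi).mono_set hS0) ?_
    filter_upwards [ae_restrict_mem hS] with ξ hξ using h.bd1 _ (mul_pos ha (hS0 hξ))
  have i2 : ∀ g : ℝ → ℂ, IntegrableOn g S → IntegrableOn (fun ξ => η₂ (a * ξ) * g ξ) S := by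
    intro g hg
    refine hg.bdd_mul (c := C)
      (((contComp h.cont2 ha).aestronglyMeasurable measurableSet_Ioi).mono_set hS0) ?_
    filter_upwards [ae_restrict_mem hS] with ξ hξ using h.bd2 _ (mul_pos ha (hS0 hξ))
  have k1 : IntegrableOn (fun ξ : ℝ => ξ * (η₁ (a * ξ) * f ξ)) S :=
    (i1 _ hf1).congr (ae_of_all _ fun ξ => by ring)
  have k2 : IntegrableOn (fun ξ : ℝ => ξ * (η₂ (a * ξ) * f ξ)) S :=
    (i2 _ hf1).congr (ae_of_all _ fun ξ => by ring)
  have gen : ∀ (ζ g : ℝ → ℂ), ContinuousOn ζ (Ioi 0) →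
      (∀ z, 0 < z → ‖ζ z‖ ≤ 2 * C + C / z) → IntegrableOn g S →
      IntegrableOn (fun ξ : ℝ => ξ * g ξ) S → ∀ N : ℝ, 0 < N →
      IntegrableOn (fun ξ : ℝ => ζ (N * ξ) * (ξ * g ξ)) S := by
    intro ζ g hζ hb hg hg1 N hN
    refine ((hg1.norm.const_mul (2 * C)).add (hg.norm.const_mul (C / N))).mono'
      ((((contComp hζ hN).aestronglyMeasurable measurableSet_Ioi).mono_set hS0).mul hg1.1) ?_
    filter_upwards [ae_restrict_mem hS] with ξ hξ
    have hξ0 : 0 < ξ := hS0 hξ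
    rw [norm_mul]
    refine (mul_le_mul_of_nonneg_right (hb _ (mul_pos hN hξ0)) (norm_nonneg _)).trans (le_of_eq ?_)
    simp only [Pi.add_apply, norm_mul, Complex.norm_real, Real.norm_eq_abs, abs_of_pos hξ0]
    field_simp
  have j1 := gen η₁' _ h.cont1' (fun z hz => h.norm_eta1'_le hz) (i2 f hf) k2
  have j2 := gen η₂' _ h.cont2' (fun z hz => h.norm_eta2'_le hz) (i1 f hf) k1
  have hfe : ∀ N, (fun ξ => crossE' η₁ η₂ η₁' η₂' a N ξ * f ξ) = fun ξ : ℝ =>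
      η₁' (N * ξ) * (ξ * (η₂ (a * ξ) * f ξ)) - η₂' (N * ξ) * (ξ * (η₁ (a * ξ) * f ξ)) := by
    intro N; ext ξ; rw [crossE']; ring
  constructor
  · have := (h.tendsto_integral_eta1' hS hS0 (i2 f hf) k2).sub
      (h.tendsto_integral_eta2' hS hS0 (i1 f hf) k1)
    rw [sub_zero] at this
    refine this.congr' ?_
    filter_upwards [eventually_gt_atTop 0] with N hN
    rw [hfe, ← MeasureTheory.integral_sub (j1 N hN) (j2 N hN)]
  · intro N hN
    rw [hfe]
    exact (j1 N hN).sub (j2 N hN)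

lemma crossE'_bound (h : HankelPair η₁ η₂ η₁' η₂' b₁ b₂ c C) (ha : 0 < a) {t ξ : ℝ} (ht : 0 < t)
    (hξ : 0 < ξ) : ‖crossE' η₁ η₂ η₁' η₂' a t ξ‖ ≤ ξ * (2 * ((2 * C + C / (t * ξ)) * C)) := by
  have hC := h.C_nonneg
  have hp : 0 < t * ξ := by positivity
  have hp2 : 0 < a * ξ := by positivity
  rw [crossE', norm_mul, Complex.norm_real, Real.norm_eq_abs, abs_of_pos hξ]
  refine mul_le_mul_of_nonneg_left ((norm_sub_le _ _).trans ?_) hξ.le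
  rw [norm_mul, norm_mul]
  have e1 := mul_le_mul (h.norm_eta1'_le hp) (h.bd2 _ hp2) (norm_nonneg _) (by positivity)
  have e2 := mul_le_mul (h.norm_eta2'_le hp) (h.bd1 _ hp2) (norm_nonneg _) (by positivity)
  linarith

/-- Away from the diagonal the Lommel kernel contributes nothing in the limit. -/
lemma far (h : HankelPair η₁ η₂ η₁' η₂' b₁ b₂ c C) (hq : PowerDecay q q' K s)
    (ha : 0 < a) {x : ℝ} (hx : 0 < x) :
    Tendsto (fun N : ℝ => ∫ ξ in Ioi 0 \ Icc (x / 2) (3 * x / 2),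
      (∫ t in a..N, crossE η₁ η₂ a t x * crossE η₁ η₂ a t ξ) * q ξ) atTop (𝓝 0) ∧
    ∀ N : ℝ, a ≤ N → IntegrableOn (fun ξ =>
      (∫ t in a..N, crossE η₁ η₂ a t x * crossE η₁ η₂ a t ξ) * q ξ)
      (Ioi 0 \ Icc (x / 2) (3 * x / 2)) := by
  set S : Set ℝ := Ioi 0 \ Icc (x / 2) (3 * x / 2) with hSdef
  have hC := h.C_nonneg
  have hK := hq.K_nonneg
  have hs0 := hq.hs0
  have hs1 := hq.hs1
  have hS : MeasurableSet S := measurableSet_Ioi.diff measurableSet_Icc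
  have hS0 : S ⊆ Ioi 0 := sdiff_subset
  set ω : ℝ → ℂ := fun ξ => q ξ / ((x : ℂ) ^ 2 - ξ ^ 2) with hω
  -- `5 / 13` is the value of `|x² - ξ²| / (x² + ξ²)` at `ξ = 3x / 2`; it is `3 / 5` at `ξ = x / 2`
  have hden : ∀ ξ ∈ S, 5 / 13 * (x ^ 2 + ξ ^ 2) ≤ ‖(x : ℂ) ^ 2 - ξ ^ 2‖ := by
    intro ξ hξ
    have hξ0 : 0 < ξ := hS0 hξ
    have e : (x : ℂ) ^ 2 - ξ ^ 2 = ((x ^ 2 - ξ ^ 2 : ℝ) : ℂ) := by push_cast; ring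
    rw [e, Complex.norm_real, Real.norm_eq_abs]
    rcases lt_or_ge ξ (x / 2) with h1 | h1
    · refine le_trans ?_ (le_abs_self _)
      nlinarith
    · have h2 : 3 * x / 2 < ξ := by
        by_contra hh
        exact hξ.2 ⟨h1, not_lt.1 hh⟩
      refine le_trans ?_ (neg_le_abs _)
      nlinarith
  have hb : ∀ ξ ∈ S, ‖ω ξ‖ ≤ 13 / 5 * K * (ξ ^ (-s) / (x ^ 2 + ξ ^ 2)) := by
    intro ξ hξ
    have hξ0 : 0 < ξ := hS0 hξ
    rw [hω, norm_div, div_le_iff₀ (lt_of_lt_of_le (by positivity) (hden ξ hξ))]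
    calc ‖q ξ‖ ≤ K * ξ ^ (-s) := hq.bound ξ hξ0
      _ = 13 / 5 * K * (ξ ^ (-s) / (x ^ 2 + ξ ^ 2)) * (5 / 13 * (x ^ 2 + ξ ^ 2)) := by
          field_simp
      _ ≤ _ := by
          have := hden ξ hξ
          gcongr
  -- a common majorant of `ω` and `ξ ω`
  set D : ℝ → ℝ := fun ξ => 13 / 5 * K * ((Ioc 0 1).indicator (fun ξ => ξ ^ (-s) / x ^ 2) ξ
      + (Ioi 1).indicator (fun ξ => ξ ^ (-s - 1)) ξ) with hD
  have hDi : Integrable D := by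
    refine (Integrable.add ?_ ?_).const_mul _
    · rw [integrable_indicator_iff measurableSet_Ioc]
      have := (intervalIntegral.intervalIntegrable_rpow' (a := 0) (b := 1) (r := -s)
        (by linarith))
      rw [intervalIntegrable_iff_integrableOn_Ioc_of_le zero_le_one] at this
      exact this.div_const _
    · rw [integrable_indicator_iff measurableSet_Ioi]
      exact integrableOn_Ioi_rpow_of_lt (by linarith) one_pos
  have hDb : ∀ ξ ∈ S, ‖ω ξ‖ ≤ D ξ ∧ ‖(ξ : ℂ) * ω ξ‖ ≤ D ξ := by
    intro ξ hξ
    have hξ0 : 0 < ξ := hS0 hξ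
    have h1 := hb ξ hξ
    have hr : 0 < ξ ^ (-s) := Real.rpow_pos_of_pos hξ0 _
    rw [norm_mul, Complex.norm_real, Real.norm_eq_abs, abs_of_pos hξ0]
    rcases le_or_gt ξ 1 with h2 | h2
    · have hDe : D ξ = 13 / 5 * K * (ξ ^ (-s) / x ^ 2) := by
        simp [hD, hξ0, h2, not_lt.2 h2]
      have h3 : ‖ω ξ‖ ≤ D ξ := by
        rw [hDe]
        refine h1.trans ?_
        gcongr
        nlinarith
      refine ⟨h3, le_trans ?_ h3⟩
      exact mul_le_of_le_one_left (norm_nonneg _) h2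
    · have hDe : D ξ = 13 / 5 * K * ξ ^ (-s - 1) := by
        simp [hD, h2, not_le.2 h2]
      have h3 : ξ * ‖ω ξ‖ ≤ D ξ := by
        rw [hDe]
        calc ξ * ‖ω ξ‖ ≤ ξ * (13 / 5 * K * (ξ ^ (-s) / (x ^ 2 + ξ ^ 2))) := by gcongr
          _ ≤ ξ * (13 / 5 * K * (ξ ^ (-s) / (ξ ^ 2))) := by
              gcongr
              nlinarith
          _ = _ := by
              rw [Real.rpow_sub_one hξ0.ne']; field_simp
      refine ⟨le_trans ?_ h3, h3⟩
      exact le_mul_of_one_le_left (norm_nonneg _) h2.le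
  have hωm : AEStronglyMeasurable ω (volume.restrict S) := by
    refine (hq.aestronglyMeasurable.mono_set hS0).div₀ ?_
    apply Continuous.aestronglyMeasurable; fun_prop
  have hωi : IntegrableOn ω S := by
    refine hDi.integrableOn.mono' hωm ?_
    filter_upwards [ae_restrict_mem hS] with ξ hξ using (hDb ξ hξ).1
  have hωi1 : IntegrableOn (fun ξ => ξ * ω ξ) S := by
    refine hDi.integrableOn.mono' (AEStronglyMeasurable.mul
      (by apply Continuous.aestronglyMeasurable; fun_prop) hωm) ?_
    filter_upwards [ae_restrict_mem hS] with ξ hξ using (hDb ξ hξ).2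
  obtain ⟨t1, i1⟩ := h.tendsto_integral_crossE ha hS hS0 hωi
  obtain ⟨t2, i2⟩ := h.tendsto_integral_crossE' ha hS hS0 hωi hωi1
  have hker : ∀ N, a ≤ N → ∀ ξ ∈ S,
      crossE η₁ η₂ a N x * (crossE' η₁ η₂ η₁' η₂' a N ξ * ω ξ)
        - crossE' η₁ η₂ η₁' η₂' a N x * (crossE η₁ η₂ a N ξ * ω ξ)
      = (∫ t in a..N, crossE η₁ η₂ a t x * crossE η₁ η₂ a t ξ) * q ξ := by
    intro N hN ξ hξ
    have hξ0 : 0 < ξ := hS0 hξ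
    have hne : (x : ℂ) ^ 2 - ξ ^ 2 ≠ 0 := norm_pos_iff.1
      (lt_of_lt_of_le (by positivity) (hden ξ hξ))
    have hl := h.lommel ha hx hξ0 hN
    simp only [hω]
    field_simp
    linear_combination (-(q ξ)) * hl
  have hint : ∀ N, a ≤ N → IntegrableOn (fun ξ =>
      crossE η₁ η₂ a N x * (crossE' η₁ η₂ η₁' η₂' a N ξ * ω ξ)
        - crossE' η₁ η₂ η₁' η₂' a N x * (crossE η₁ η₂ a N ξ * ω ξ)) S := fun N hN =>
    ((i2 N (ha.trans_le hN)).const_mul _).sub ((i1 N (ha.trans_le hN)).const_mul _)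
  constructor
  · have z1 : Tendsto (fun N => crossE η₁ η₂ a N x *
        ∫ ξ in S, crossE' η₁ η₂ η₁' η₂' a N ξ * ω ξ) atTop (𝓝 0) := by
      refine t2.zero_mul_isBoundedUnder_le ?_ |>.congr fun N => mul_comm _ _
      refine ⟨2 * C ^ 2, ?_⟩
      rw [eventually_map]
      filter_upwards [eventually_gt_atTop 0] with N hN using h.crossE_bound ha hN hx
    have z2 : Tendsto (fun N => crossE' η₁ η₂ η₁' η₂' a N x *
        ∫ ξ in S, crossE η₁ η₂ a N ξ * ω ξ) atTop (𝓝 0) := by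
      refine t1.zero_mul_isBoundedUnder_le ?_ |>.congr fun N => mul_comm _ _
      refine ⟨x * (2 * ((2 * C + C / x) * C)), ?_⟩
      rw [eventually_map]
      filter_upwards [eventually_ge_atTop 1] with N hN
      refine (h.crossE'_bound ha (by linarith) hx).trans ?_
      gcongr
      nlinarith
    have := z1.sub z2
    rw [sub_zero] at this
    refine this.congr' ?_
    filter_upwards [eventually_ge_atTop a] with N hN
    rw [← MeasureTheory.integral_const_mul, ← MeasureTheory.integral_const_mul,
      ← MeasureTheory.integral_sub ((i2 N (ha.trans_le hN)).const_mul _)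
        ((i1 N (ha.trans_le hN)).const_mul _)]
    exact setIntegral_congr_fun hS (hker N hN)
  · intro N hN
    exact (hint N hN).congr_fun (hker N hN) hS

end HankelPair

/-! ### Remainder estimates near the diagonal -/

/-- Families `f N` of functions on `[x/2, 3x/2]` which are `O(N⁻ᵏ)` and whose Lipschitz quotients
at `x` are `O(N¹⁻ᵏ)`, uniformly in `N ≥ 1`. The grading is multiplicative. -/
def Graded (x : ℝ) (k : ℕ) (f : ℝ → ℝ → ℂ) : Prop :=
  ∃ M : ℝ, 0 ≤ M ∧ ∀ N : ℝ, 1 ≤ N → ∀ ξ ∈ Icc (x / 2) (3 * x / 2),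
    ‖f N ξ‖ ≤ M * (N⁻¹) ^ k ∧ ‖f N ξ - f N x‖ ≤ M * (N * (N⁻¹) ^ k) * |ξ - x|

namespace Graded

variable {x : ℝ} {j k : ℕ} {f g : ℝ → ℝ → ℂ}

lemma mem_self (hx : 0 < x) : x ∈ Icc (x / 2) (3 * x / 2) := ⟨by linarith, by linarith⟩

lemma sub (hf : Graded x k f) (hg : Graded x k g) : Graded x k (fun N ξ => f N ξ - g N ξ) := by
  obtain ⟨M, hM, h⟩ := hf
  obtain ⟨M', hM', h'⟩ := hg
  refine ⟨M + M', by positivity, fun N hN ξ hξ => ⟨?_, ?_⟩⟩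
  · refine (norm_sub_le _ _).trans ?_
    rw [add_mul]
    exact add_le_add (h N hN ξ hξ).1 (h' N hN ξ hξ).1
  · have : f N ξ - g N ξ - (f N x - g N x) = (f N ξ - f N x) - (g N ξ - g N x) := by ring
    rw [this]
    refine (norm_sub_le _ _).trans ?_
    rw [add_mul, add_mul]
    exact add_le_add (h N hN ξ hξ).2 (h' N hN ξ hξ).2

lemma mul (hx : 0 < x) (hf : Graded x j f) (hg : Graded x k g) :
    Graded x (j + k) (fun N ξ => f N ξ * g N ξ) := by
  obtain ⟨M, hM, h⟩ := hf
  obtain ⟨M', hM', h'⟩ := hg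
  refine ⟨2 * (M * M'), by positivity, fun N hN ξ hξ => ⟨?_, ?_⟩⟩
  · have hp : 0 ≤ M * M' * (N⁻¹) ^ (j + k) := by positivity
    rw [norm_mul]
    refine (mul_le_mul (h N hN ξ hξ).1 (h' N hN ξ hξ).1 (norm_nonneg _) (by positivity)).trans ?_
    rw [pow_add] at hp ⊢
    linarith
  · have : f N ξ * g N ξ - f N x * g N x
        = (f N ξ - f N x) * g N ξ + f N x * (g N ξ - g N x) := by ring
    rw [this]
    refine (norm_add_le _ _).trans ?_
    rw [norm_mul, norm_mul]
    have e1 := mul_le_mul (h N hN ξ hξ).2 (h' N hN ξ hξ).1 (norm_nonneg _) (by positivity)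
    have e2 := mul_le_mul (h N hN x (mem_self hx)).1 (h' N hN ξ hξ).2 (norm_nonneg _)
      (by positivity)
    rw [pow_add]
    linarith

lemma mono (hf : Graded x 1 f) : Graded x 0 f := by
  obtain ⟨M, hM, h⟩ := hf
  refine ⟨M, hM, fun N hN ξ hξ => ⟨(h N hN ξ hξ).1.trans ?_, (h N hN ξ hξ).2.trans ?_⟩⟩
  · have := inv_le_one_of_one_le₀ hN
    simpa using mul_le_mul_of_nonneg_left this hM
  · have h0 : 0 < N := by linarith
    rw [pow_one, mul_inv_cancel₀ h0.ne', pow_zero, mul_one]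
    gcongr
    nlinarith

lemma add (hf : Graded x k f) (hg : Graded x k g) : Graded x k (fun N ξ => f N ξ + g N ξ) := by
  obtain ⟨M, hM, h⟩ := hg
  have hneg : Graded x k (fun N ξ => - g N ξ) := by
    refine ⟨M, hM, fun N hN ξ hξ => ⟨?_, ?_⟩⟩
    · rw [norm_neg]; exact (h N hN ξ hξ).1
    · rw [neg_sub_neg, norm_sub_rev]; exact (h N hN ξ hξ).2
  simpa using hf.sub hneg

/-- Freezing the variable at `x`. -/
lemma freeze (hx : 0 < x) (hf : Graded x k f) : Graded x k (fun N _ => f N x) := by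
  obtain ⟨M, hM, h⟩ := hf
  refine ⟨M, hM, fun N hN ξ hξ => ⟨(h N hN x (mem_self hx)).1, ?_⟩⟩
  rw [sub_self, norm_zero]
  have : 0 < N := by linarith
  positivity

lemma of_deriv (hx : 0 < x) {f' : ℝ → ℝ → ℂ} {M₀ M₁ : ℝ}
    (hd : ∀ N, 1 ≤ N → ∀ ξ ∈ Icc (x / 2) (3 * x / 2), HasDerivAt (f N) (f' N ξ) ξ)
    (h0 : ∀ N, 1 ≤ N → ∀ ξ ∈ Icc (x / 2) (3 * x / 2), ‖f N ξ‖ ≤ M₀ * (N⁻¹) ^ k)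
    (h1 : ∀ N, 1 ≤ N → ∀ ξ ∈ Icc (x / 2) (3 * x / 2), ‖f' N ξ‖ ≤ M₁ * (N * (N⁻¹) ^ k)) :
    Graded x k f := by
  refine ⟨|M₀| + |M₁|, by positivity, fun N hN ξ hξ => ⟨(h0 N hN ξ hξ).trans ?_, ?_⟩⟩
  · gcongr
    linarith [le_abs_self M₀, abs_nonneg M₁]
  · have := (convex_Icc (x / 2) (3 * x / 2)).norm_image_sub_le_of_norm_hasDerivWithin_le
      (fun ξ hξ => (hd N hN ξ hξ).hasDerivWithinAt) (h1 N hN) (mem_self hx) hξ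
    rw [Real.norm_eq_abs] at this
    refine this.trans ?_
    gcongr
    linarith [le_abs_self M₁, abs_nonneg M₀]

lemma ofReal (hx : 0 < x) : Graded x 0 (fun _ ξ => (ξ : ℂ)) := by
  refine of_deriv hx (f' := fun _ _ => 1) (M₀ := 3 * x / 2) (M₁ := 1)
    (fun N _ ξ _ => (hasDerivAt_id ξ).ofReal_comp) (fun N _ ξ hξ => ?_) (fun N hN ξ _ => ?_)
  · rw [Complex.norm_real, Real.norm_eq_abs, abs_of_nonneg (by linarith [hξ.1]), pow_zero, mul_one]
    exact hξ.2
  · simpa using hN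

lemma const (hx : 0 < x) (b : ℂ) : Graded x 0 (fun _ _ => b) := by
  refine of_deriv hx (f' := fun _ _ => 0) (M₀ := ‖b‖) (M₁ := 0)
    (fun N _ ξ _ => hasDerivAt_const _ _) (fun N _ ξ hξ => ?_) (fun N hN ξ _ => ?_)
  · simp
  · simp

variable {η η' : ℝ → ℂ} {b c ω : ℂ} {C a : ℝ}

lemma hasDerivAt_cexp_mul (ω : ℂ) (z : ℝ) :
    HasDerivAt (fun z : ℝ => cexp (ω * z)) (ω * cexp (ω * z)) z := by
  have := (((hasDerivAt_id z).ofReal_comp).const_mul ω).cexp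
  simpa [mul_comm] using this

lemma norm_cexp_mul (hω : ω.re = 0) (z : ℝ) : ‖cexp (ω * z)‖ = 1 := by
  rw [Complex.norm_exp]; simp [hω]

lemma hasDerivAt_dilate {f : ℝ → ℂ} {f' : ℂ} {r t : ℝ} (hf : HasDerivAt f f' (r * t)) :
    HasDerivAt (fun t => f (r * t)) (r * f') t := by
  have := hf.scomp t ((hasDerivAt_id t).const_mul r)
  simpa [Function.comp_def] using this

lemma exp (hx : 0 < x) (hω : ω.re = 0) :
    Graded x 0 (fun N ξ => cexp (ω * ((N * ξ : ℝ) : ℂ))) := by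
  refine of_deriv hx (M₀ := 1) (M₁ := ‖ω‖)
    (fun N _ ξ _ => hasDerivAt_dilate (hasDerivAt_cexp_mul ω (N * ξ)))
    (fun N _ ξ hξ => ?_) (fun N hN ξ _ => ?_)
  · rw [norm_cexp_mul hω]; simp
  · have : 0 < N := by linarith
    rw [norm_mul, norm_mul, norm_cexp_mul hω, Complex.norm_real, Real.norm_eq_abs, abs_of_pos this]
    simp [mul_comm]

lemma fixed (hx : 0 < x) (ha : 0 < a) (d : ∀ z, 0 < z → HasDerivAt η (η' z) z)
    (bd : ∀ z, 0 < z → ‖η z‖ ≤ C) (bd' : ∀ z, 0 < z → ‖η' z‖ ≤ 2 * C + C / z) :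
    Graded x 0 (fun _ ξ => η (a * ξ)) := by
  have hC : 0 ≤ C := (norm_nonneg _).trans (bd 1 one_pos)
  have hpos : ∀ ξ ∈ Icc (x / 2) (3 * x / 2), 0 < ξ := fun ξ hξ => by linarith [hξ.1]
  refine of_deriv hx (f' := fun _ ξ => a * η' (a * ξ)) (M₀ := C)
    (M₁ := a * (2 * C + C / (a * (x / 2))))
    (fun N _ ξ hξ => hasDerivAt_dilate (d _ (mul_pos ha (hpos ξ hξ))))
    (fun N _ ξ hξ => ?_) (fun N hN ξ hξ => ?_)
  · simpa using bd _ (mul_pos ha (hpos ξ hξ))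
  · rw [norm_mul, Complex.norm_real, Real.norm_eq_abs, abs_of_pos ha, pow_zero, mul_one]
    have h1 := bd' _ (mul_pos ha (hpos ξ hξ))
    have h2 : C / (a * ξ) ≤ C / (a * (x / 2)) := by gcongr; exact hξ.1
    have h3 : 0 ≤ a * (2 * C + C / (a * (x / 2))) := by positivity
    calc _ ≤ a * (2 * C + C / (a * (x / 2))) := by gcongr; linarith
      _ ≤ _ := le_mul_of_one_le_right h3 hN

/-- The remainder in the asymptotics at `N ξ` has grade `1`: it is `O(1 / N)`, with a Lipschitz
constant at `x` independent of `N`. -/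
lemma rem (hx : 0 < x) (d : ∀ z, 0 < z → HasDerivAt η (η' z) z)
    (as : ∀ z, 0 < z → ‖η z - b * cexp (ω * z)‖ ≤ C / z)
    (as' : ∀ z, 0 < z → ‖η' z - ω * b * cexp (ω * z)‖ ≤ C / z) :
    Graded x 1 (fun N ξ => η (N * ξ) - b * cexp (ω * ((N * ξ : ℝ) : ℂ))) := by
  have hC : 0 ≤ C := by simpa using (norm_nonneg _).trans (as 1 one_pos)
  have key : ∀ N, 1 ≤ N → ∀ ξ ∈ Icc (x / 2) (3 * x / 2), 0 < N * ξ ∧ 0 < N ∧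
      C / (N * ξ) ≤ C / (x / 2) * N⁻¹ := fun N hN ξ hξ => by
    have h1 : 0 < N := by linarith
    have h2 : 0 < ξ := by linarith [hξ.1]
    refine ⟨by positivity, h1, ?_⟩
    rw [← div_div, div_right_comm, div_eq_mul_inv _ N]
    gcongr
    exact hξ.1
  refine of_deriv hx (M₀ := C / (x / 2)) (M₁ := C / (x / 2))
    (fun N hN ξ hξ => hasDerivAt_dilate (f := fun z : ℝ => η z - b * cexp (ω * z))
      ((d _ (key N hN ξ hξ).1).sub ((hasDerivAt_cexp_mul ω (N * ξ)).const_mul b)))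
    (fun N hN ξ hξ => ?_) (fun N hN ξ hξ => ?_)
  · rw [pow_one]
    exact (as _ (key N hN ξ hξ).1).trans (key N hN ξ hξ).2.2
  · obtain ⟨k1, k2, k3⟩ := key N hN ξ hξ
    rw [norm_mul, Complex.norm_real, Real.norm_eq_abs, abs_of_pos k2, pow_one]
    have := as' _ k1
    rw [show ω * b * cexp (ω * ((N * ξ : ℝ) : ℂ)) = b * (ω * cexp (ω * ((N * ξ : ℝ) : ℂ))) by ring]
      at this
    calc _ ≤ N * (C / (x / 2) * N⁻¹) := by gcongr; exact this.trans k3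
      _ = _ := by ring

lemma rem' (hx : 0 < x) (hω : ω ^ 2 = -1)
    (d' : ∀ z : ℝ, 0 < z → HasDerivAt η' (-(1 + c / (z : ℂ) ^ 2) * η z) z)
    (bd : ∀ z, 0 < z → ‖η z‖ ≤ C)
    (as : ∀ z, 0 < z → ‖η z - b * cexp (ω * z)‖ ≤ C / z)
    (as' : ∀ z, 0 < z → ‖η' z - ω * b * cexp (ω * z)‖ ≤ C / z) :
    Graded x 1 (fun N ξ => η' (N * ξ) - ω * b * cexp (ω * ((N * ξ : ℝ) : ℂ))) := by
  have hC : 0 ≤ C := by simpa using (norm_nonneg _).trans (as 1 one_pos)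
  have key : ∀ N, 1 ≤ N → ∀ ξ ∈ Icc (x / 2) (3 * x / 2), 0 < N * ξ ∧ 0 < N ∧
      C / (N * ξ) ≤ C / (x / 2) * N⁻¹ ∧ 1 / (N * ξ) ≤ 1 / (x / 2) := fun N hN ξ hξ => by
    have h1 : 0 < N := by linarith
    have h2 : 0 < ξ := by linarith [hξ.1]
    refine ⟨by positivity, h1, ?_, ?_⟩
    · rw [← div_div, div_right_comm, div_eq_mul_inv _ N]
      gcongr
      exact hξ.1
    · apply one_div_le_one_div_of_le (by positivity)
      nlinarith [hξ.1]
  refine of_deriv hx (M₀ := C / (x / 2)) (M₁ := C / (x / 2) + ‖c‖ * (1 / (x / 2)) * (C / (x / 2)))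
    (fun N hN ξ hξ => hasDerivAt_dilate (f := fun z : ℝ => η' z - ω * b * cexp (ω * z))
      ((d' _ (key N hN ξ hξ).1).sub ((hasDerivAt_cexp_mul ω (N * ξ)).const_mul (ω * b))))
    (fun N hN ξ hξ => ?_) (fun N hN ξ hξ => ?_)
  · rw [pow_one]
    exact (as' _ (key N hN ξ hξ).1).trans (key N hN ξ hξ).2.2.1
  · obtain ⟨k1, k2, k3, k4⟩ := key N hN ξ hξ
    rw [norm_mul, Complex.norm_real, Real.norm_eq_abs, abs_of_pos k2, pow_one]
    set z := N * ξ with hz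
    have e1 : -(1 + c / (z : ℂ) ^ 2) * η z - ω * b * (ω * cexp (ω * z))
        = -(η z - b * cexp (ω * z)) - c / (z : ℂ) ^ 2 * η z := by
      linear_combination (-(b * cexp (ω * z))) * hω
    have e2 : ‖c / (z : ℂ) ^ 2 * η z‖ ≤ ‖c‖ * (1 / (x / 2)) * (C / (x / 2) * N⁻¹) := by
      rw [norm_mul, norm_div, norm_pow, Complex.norm_real, Real.norm_eq_abs, abs_of_pos k1]
      calc _ ≤ ‖c‖ / z ^ 2 * C := by gcongr; exact bd z k1
        _ = ‖c‖ * (1 / z) * (C / z) := by field_simp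
        _ ≤ _ := by gcongr
    have e3 := (as z k1).trans k3
    rw [e1]
    calc _ ≤ N * (C / (x / 2) * N⁻¹ + ‖c‖ * (1 / (x / 2)) * (C / (x / 2) * N⁻¹)) := by
          gcongr
          refine (norm_sub_le _ _).trans ?_
          rw [norm_neg]
          exact add_le_add e3 e2
      _ = _ := by ring

end Graded

namespace HankelPair

variable {η₁ η₂ η₁' η₂' : ℝ → ℂ} {b₁ b₂ c : ℂ} {C : ℝ} {q q' : ℝ → ℂ} {K s a : ℝ}

/-- The leading part, as `t → ∞`, of `crossE`. -/
noncomputable def lead (η₁ η₂ : ℝ → ℂ) (b₁ b₂ : ℂ) (a t ξ : ℝ) : ℂ :=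
  b₁ * cexp (I * ((t * ξ : ℝ) : ℂ)) * η₂ (a * ξ)
    - b₂ * cexp (-I * ((t * ξ : ℝ) : ℂ)) * η₁ (a * ξ)

/-- The leading part, as `t → ∞`, of `crossE'`. -/
noncomputable def lead' (η₁ η₂ : ℝ → ℂ) (b₁ b₂ : ℂ) (a t ξ : ℝ) : ℂ :=
  ξ * (I * b₁ * cexp (I * ((t * ξ : ℝ) : ℂ)) * η₂ (a * ξ)
    - -I * b₂ * cexp (-I * ((t * ξ : ℝ) : ℂ)) * η₁ (a * ξ))

/-- The error made in the Lommel Wronskian on replacing `crossE`, `crossE'` by their leading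
parts. -/
noncomputable def wronskErr (η₁ η₂ η₁' η₂' : ℝ → ℂ) (b₁ b₂ : ℂ) (a x N ξ : ℝ) : ℂ :=
  (crossE η₁ η₂ a N x * crossE' η₁ η₂ η₁' η₂' a N ξ
    - crossE η₁ η₂ a N ξ * crossE' η₁ η₂ η₁' η₂' a N x)
  - (lead η₁ η₂ b₁ b₂ a N x * lead' η₁ η₂ b₁ b₂ a N ξ
    - lead η₁ η₂ b₁ b₂ a N ξ * lead' η₁ η₂ b₁ b₂ a N x)

/-- Every term of the error contains a remainder of the asymptotics, hence is both `O(1 / N)` and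
`O(|ξ - x|)`. Divided by `x² - ξ²` it is therefore bounded, and tends to `0` for `ξ ≠ x`. -/
lemma graded_wronskErr (h : HankelPair η₁ η₂ η₁' η₂' b₁ b₂ c C) (ha : 0 < a) {x : ℝ}
    (hx : 0 < x) : Graded x 1 (wronskErr η₁ η₂ η₁' η₂' b₁ b₂ a x) := by
  have as2 : ∀ z : ℝ, 0 < z → ‖η₂ z - b₂ * cexp (-I * z)‖ ≤ C / z := fun z hz => by
    rw [neg_mul]; exact h.as2 z hz
  have as2' : ∀ z : ℝ, 0 < z → ‖η₂' z - -I * b₂ * cexp (-I * z)‖ ≤ C / z := fun z hz => by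
    have := h.as2' z hz
    rwa [neg_mul, neg_mul, neg_mul, sub_neg_eq_add]
  have gA : Graded x 0 (fun _ ξ => η₁ (a * ξ)) :=
    Graded.fixed hx ha h.d1 h.bd1 fun z hz => h.norm_eta1'_le hz
  have gB : Graded x 0 (fun _ ξ => η₂ (a * ξ)) :=
    Graded.fixed hx ha h.d2 h.bd2 fun z hz => h.norm_eta2'_le hz
  have r1 := Graded.rem (ω := I) hx h.d1 h.as1 h.as1'
  have r2 := Graded.rem (ω := -I) hx h.d2 as2 as2'
  have s1 := Graded.rem' (ω := I) hx (by simp) h.d1' h.bd1 h.as1 h.as1'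
  have s2 := Graded.rem' (ω := -I) hx (by simp) h.d2' h.bd2 as2 as2'
  have x1 := Graded.exp (x := x) (ω := I) hx (by simp)
  have x2 := Graded.exp (x := x) (ω := -I) hx (by simp)
  have l0 : Graded x 0 (lead η₁ η₂ b₁ b₂ a) :=
    (((Graded.const hx b₁).mul hx x1).mul hx gB).sub (((Graded.const hx b₂).mul hx x2).mul hx gA)
  have l0' : Graded x 0 (lead' η₁ η₂ b₁ b₂ a) :=
    (Graded.ofReal hx).mul hx ((((Graded.const hx (I * b₁)).mul hx x1).mul hx gB).sub
      (((Graded.const hx (-I * b₂)).mul hx x2).mul hx gA))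
  have ρ : Graded x 1 _ := (r1.mul hx gB).sub (r2.mul hx gA)
  have σ : Graded x 1 _ := (Graded.ofReal hx).mul hx ((s1.mul hx gB).sub (s2.mul hx gA))
  have e0 := l0.add ρ.mono
  have e0' := l0'.add σ.mono
  have t1 : Graded x 1 _ := (e0.freeze hx).mul hx σ
  have t2 : Graded x 1 _ := (e0'.freeze hx).mul hx ρ
  have t3 : Graded x 1 _ := (ρ.freeze hx).mul hx l0'
  have t4 : Graded x 1 _ := (σ.freeze hx).mul hx l0
  have := (t1.sub t2).add (t3.sub t4)
  convert this using 3 with N ξ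
  simp only [wronskErr, lead, lead', crossE, crossE']
  ring

lemma wronskErr_continuousOn (h : HankelPair η₁ η₂ η₁' η₂' b₁ b₂ c C) (ha : 0 < a) {x N : ℝ}
    (hN : 0 < N) :
    ContinuousOn (wronskErr η₁ η₂ η₁' η₂' b₁ b₂ a x N) (Ioi 0) := by
  have c1 := contComp h.cont1 ha
  have c2 := contComp h.cont2 ha
  have c3 := h.crossE_continuousOn ha hN
  have c4 := h.crossE'_continuousOn ha hN
  have e1 : Continuous fun ξ : ℝ => cexp (I * ((N * ξ : ℝ) : ℂ)) := by fun_prop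
  have e2 : Continuous fun ξ : ℝ => cexp (-I * ((N * ξ : ℝ) : ℂ)) := by fun_prop
  have d1 : ContinuousOn (lead η₁ η₂ b₁ b₂ a N) (Ioi 0) :=
    ((continuousOn_const.mul e1.continuousOn).mul c2).sub
      ((continuousOn_const.mul e2.continuousOn).mul c1)
  have d2 : ContinuousOn (lead' η₁ η₂ b₁ b₂ a N) (Ioi 0) :=
    (Complex.continuous_ofReal.continuousOn).mul
    (((continuousOn_const.mul e1.continuousOn).mul c2).sub
      ((continuousOn_const.mul e2.continuousOn).mul c1))
  exact ((continuousOn_const.mul c4).sub (c3.mul continuousOn_const)).sub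
    ((continuousOn_const.mul d2).sub (d1.mul continuousOn_const))

/-- The error term is `O(|x - ξ|)` uniformly in `N` and `O(1 / N)` pointwise, so dominated
convergence applies after division by `x² - ξ²`. -/
lemma tendsto_integral_wronskErr (h : HankelPair η₁ η₂ η₁' η₂' b₁ b₂ c C)
    (hq : PowerDecay q q' K s) (ha : 0 < a) {x : ℝ} (hx : 0 < x) :
    Tendsto (fun N : ℝ => ∫ ξ in Icc (x / 2) (3 * x / 2),
      wronskErr η₁ η₂ η₁' η₂' b₁ b₂ a x N ξ * (q ξ / ((x : ℂ) ^ 2 - ξ ^ 2))) atTop (𝓝 0) ∧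
    ∀ N : ℝ, 1 ≤ N → IntegrableOn (fun ξ =>
      wronskErr η₁ η₂ η₁' η₂' b₁ b₂ a x N ξ * (q ξ / ((x : ℂ) ^ 2 - ξ ^ 2)))
      (Icc (x / 2) (3 * x / 2)) := by
  obtain ⟨M, hM, hg⟩ := h.graded_wronskErr ha hx
  have hpos : Icc (x / 2) (3 * x / 2) ⊆ Ioi 0 := fun ξ hξ => by
    have := hξ.1
    exact lt_of_lt_of_le (by positivity) this
  have hE0 : ∀ N, wronskErr η₁ η₂ η₁' η₂' b₁ b₂ a x N x = 0 := fun N => by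
    rw [wronskErr]; ring
  obtain ⟨Q, hQ⟩ := isCompact_Icc.exists_bound_of_continuousOn (hq.continuousOn.mono hpos)
  have hQ0 : 0 ≤ Q := (norm_nonneg _).trans (hQ x (Graded.mem_self hx))
  have hmeas : ∀ N, 1 ≤ N → AEStronglyMeasurable (fun ξ =>
      wronskErr η₁ η₂ η₁' η₂' b₁ b₂ a x N ξ * (q ξ / ((x : ℂ) ^ 2 - ξ ^ 2)))
      (volume.restrict (Icc (x / 2) (3 * x / 2))) := fun N hN => by
    simp only [div_eq_mul_inv]
    refine (((h.wronskErr_continuousOn ha (by linarith)).mono hpos).aestronglyMeasurable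
      measurableSet_Icc).mul (((hq.continuousOn.mono hpos).aestronglyMeasurable
      measurableSet_Icc).mul (Measurable.aestronglyMeasurable ?_))
    fun_prop
  have hbound : ∀ N, 1 ≤ N → ∀ ξ ∈ Icc (x / 2) (3 * x / 2),
      ‖wronskErr η₁ η₂ η₁' η₂' b₁ b₂ a x N ξ * (q ξ / ((x : ℂ) ^ 2 - ξ ^ 2))‖ ≤ M * (Q / x) := by
    intro N hN ξ hξ
    have hξ0 : 0 < ξ := hpos hξ
    have hN0 : 0 < N := by linarith
    rcases eq_or_ne ξ x with rfl | hne
    · rw [hE0, zero_mul, norm_zero]; positivity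
    have h1 := (hg N hN ξ hξ).2
    rw [hE0, sub_zero, pow_one, mul_inv_cancel₀ hN0.ne', mul_one] at h1
    have h2 : 0 < |ξ - x| := abs_pos.2 (sub_ne_zero.2 hne)
    have h3 : ‖(x : ℂ) ^ 2 - ξ ^ 2‖ = |ξ - x| * (x + ξ) := by
      have : (x : ℂ) ^ 2 - ξ ^ 2 = ((-((ξ - x) * (x + ξ)) : ℝ) : ℂ) := by push_cast; ring
      rw [this, Complex.norm_real, norm_neg, norm_mul, Real.norm_eq_abs, Real.norm_eq_abs,
        abs_of_pos (add_pos hx hξ0)]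
    rw [norm_mul, norm_div, h3]
    calc _ ≤ M * |ξ - x| * (Q / (|ξ - x| * x)) := by
          gcongr
          · exact hQ ξ hξ
          · linarith
      _ = _ := by field_simp
  constructor
  · have := tendsto_integral_filter_of_dominated_convergence (l := atTop)
      (μ := volume.restrict (Icc (x / 2) (3 * x / 2))) (f := fun _ => (0:ℂ))
      (F := fun N ξ => wronskErr η₁ η₂ η₁' η₂' b₁ b₂ a x N ξ * (q ξ / ((x : ℂ) ^ 2 - ξ ^ 2)))
      (fun _ => M * (Q / x)) ?_ ?_ (integrable_const _) ?_
    · simpa using this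
    · filter_upwards [eventually_ge_atTop 1] with N hN using hmeas N hN
    · filter_upwards [eventually_ge_atTop 1] with N hN
      filter_upwards [ae_restrict_mem measurableSet_Icc] with ξ hξ using hbound N hN ξ hξ
    · filter_upwards [ae_restrict_mem measurableSet_Icc] with ξ hξ
      rw [← zero_mul (q ξ / ((x : ℂ) ^ 2 - ξ ^ 2))]
      refine Tendsto.mul_const _ (squeeze_zero_norm' (a := fun N => M * N⁻¹) ?_ ?_)
      · filter_upwards [eventually_ge_atTop 1] with N hN
        simpa using (hg N hN ξ hξ).1
      · simpa using tendsto_inv_atTop_zero.const_mul M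
  · intro N hN
    refine (integrable_const (M * (Q / x))).mono' (hmeas N hN) ?_
    filter_upwards [ae_restrict_mem measurableSet_Icc] with ξ hξ using hbound N hN ξ hξ

end HankelPair

/-! ### Concentration on the diagonal -/

/-- Splitting of the leading Lommel kernel by partial fractions in `x² - ξ²`. Here `X₁`, `X₂` and
`Y₁`, `Y₂` are the waves at `x` and at `ξ`. Products of equal waves only meet the regular factor
`1 / (x + ξ)`; in the mixed products the amplitude is replaced by a constant at the cost of a
difference quotient `dA`, `dB`. Only the last term is singular on the diagonal: it carries the
Dirichlet kernel. -/
lemma lead_identity {x ξ X₁ X₂ Y₁ Y₂ A B Ax Bx q dA dB b₁ b₂ AQ BQ : ℂ} (h1 : x - ξ ≠ 0)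
    (h2 : x + ξ ≠ 0) (hA : A * q = AQ + (ξ - x) * dA) (hB : B * q = BQ + (ξ - x) * dB) :
    ((b₁ * X₁ * Bx - b₂ * X₂ * Ax) * (ξ * (I * b₁ * Y₁ * B - -I * b₂ * Y₂ * A))
      - (b₁ * Y₁ * B - b₂ * Y₂ * A) * (x * (I * b₁ * X₁ * Bx - -I * b₂ * X₂ * Ax)))
      * (q / (x ^ 2 - ξ ^ 2))
    = (-I * b₁ * b₁ * X₁ * Bx) * (Y₁ * (B * q / (x + ξ)))
      + (I * b₂ * b₂ * X₂ * Ax) * (Y₂ * (A * q / (x + ξ)))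
      + (-I * b₁ * b₂ * X₁ * Bx) * (Y₂ * dA)
      + (I * b₁ * b₂ * X₂ * Ax) * (Y₁ * dB)
      + I * b₁ * b₂ * ((X₁ * Y₂ * Bx * AQ - X₂ * Y₁ * Ax * BQ) / (x - ξ)) := by
  have h3 : x ^ 2 - ξ ^ 2 = (x - ξ) * (x + ξ) := by ring
  rw [h3]
  field_simp
  linear_combination (b₁ * b₂ * (x + ξ) * X₁ * Bx * Y₂) * hA - (b₁ * b₂ * (x + ξ) * X₂ * Ax * Y₁) * hB

/-- The Riemann–Lebesgue lemma with a bounded factor depending on the frequency. -/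
lemma riemannLebesgue_bounded_mul {S : Set ℝ} (hS : MeasurableSet S) {f : ℝ → ℂ} {σ : ℝ}
    (hσ : σ ≠ 0) {u : ℝ → ℂ} {M : ℝ} (hu : ∀ N, ‖u N‖ ≤ M) {ω : ℂ} (hω : ω = I * σ) :
    Tendsto (fun N : ℝ => ∫ ξ in S, u N * (cexp (ω * ((N * ξ : ℝ) : ℂ)) * f ξ)) atTop (𝓝 0) := by
  have h1 := riemannLebesgue_setIntegral hS f σ hσ
  have h2 := h1.zero_mul_isBoundedUnder_le (g := u)
    ⟨M, by rw [eventually_map]; exact Eventually.of_forall hu⟩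
  refine h2.congr fun N => ?_
  rw [mul_comm, ← MeasureTheory.integral_const_mul]
  congr 1
  ext ξ
  rw [hω]
  congr 3
  push_cast
  ring

lemma integrableOn_cexp_mul {S : Set ℝ} {f : ℝ → ℂ} (hf : IntegrableOn f S) (u : ℂ) {ω : ℂ}
    (hω : ω.re = 0) (N : ℝ) :
    IntegrableOn (fun ξ => u * (cexp (ω * ((N * ξ : ℝ) : ℂ)) * f ξ)) S := by
  refine Integrable.const_mul (hf.bdd_mul (c := 1) ?_ ?_) u
  · exact Continuous.aestronglyMeasurable (by fun_prop)
  · exact ae_of_all _ fun ξ => (Graded.norm_cexp_mul hω _).le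

/-- The Dirichlet integral centred at `x`. -/
lemma tendsto_integral_sin_div_sub {x : ℝ} (hx : 0 < x) :
    Tendsto (fun N : ℝ => ∫ ξ in Icc (x / 2) (3 * x / 2),
      ((Real.sin (N * (x - ξ)) / (x - ξ) : ℝ) : ℂ)) atTop (𝓝 (Real.pi : ℂ)) := by
  refine (tendsto_integral_sin_div (half_pos hx)).congr fun N => ?_
  rw [integral_Icc_eq_integral_Ioc, integral_Icc_eq_integral_Ioc,
    ← intervalIntegral.integral_of_le (by linarith),
    ← intervalIntegral.integral_of_le (by linarith)]
  rw [intervalIntegral.integral_comp_sub_left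
    (fun u => ((Real.sin (N * u) / u : ℝ) : ℂ)) x]
  congr 1 <;> ring

lemma integrableOn_sin_div_sub {x : ℝ} (N : ℝ) :
    IntegrableOn (fun ξ : ℝ => ((Real.sin (N * (x - ξ)) / (x - ξ) : ℝ) : ℂ))
      (Icc (x / 2) (3 * x / 2)) := by
  refine (integrable_const |N|).mono' ?_ (ae_of_all _ fun ξ => ?_)
  · refine Measurable.aestronglyMeasurable ?_
    fun_prop
  · rw [Complex.norm_real, Real.norm_eq_abs, abs_div]
    refine div_le_of_le_mul₀ (abs_nonneg _) (abs_nonneg _) ?_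
    rw [← abs_mul]
    exact Real.abs_sin_le_abs

namespace HankelPair

variable {η₁ η₂ η₁' η₂' : ℝ → ℂ} {b₁ b₂ c : ℂ} {C : ℝ} {q q' : ℝ → ℂ} {K s a : ℝ}

/-- The leading part of the Lommel Wronskian, divided by `x² - ξ²`, acts near the diagonal as a
Dirichlet kernel. -/
lemma tendsto_integral_lead (h : HankelPair η₁ η₂ η₁' η₂' b₁ b₂ c C)
    (hq : PowerDecay q q' K s) (ha : 0 < a) {x : ℝ} (hx : 0 < x) :
    Tendsto (fun N : ℝ => ∫ ξ in Icc (x / 2) (3 * x / 2),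
      (lead η₁ η₂ b₁ b₂ a N x * lead' η₁ η₂ b₁ b₂ a N ξ
        - lead η₁ η₂ b₁ b₂ a N ξ * lead' η₁ η₂ b₁ b₂ a N x) * (q ξ / ((x : ℂ) ^ 2 - ξ ^ 2)))
      atTop (𝓝 (-4 * (η₁ (a * x) * η₂ (a * x) * q x))) ∧
    ∀ N : ℝ, IntegrableOn (fun ξ =>
      (lead η₁ η₂ b₁ b₂ a N x * lead' η₁ η₂ b₁ b₂ a N ξ
        - lead η₁ η₂ b₁ b₂ a N ξ * lead' η₁ η₂ b₁ b₂ a N x) * (q ξ / ((x : ℂ) ^ 2 - ξ ^ 2)))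
      (Icc (x / 2) (3 * x / 2)) := by
  set S := Icc (x / 2) (3 * x / 2) with hS
  have hSm : MeasurableSet S := measurableSet_Icc
  have hpos : S ⊆ Ioi 0 := fun ξ hξ => by
    have := hξ.1
    exact lt_of_lt_of_le (by positivity) this
  have hnhds : S ∈ 𝓝 x := Icc_mem_nhds (by linarith) (by linarith)
  set A : ℝ → ℂ := fun ξ => η₁ (a * ξ) with hA
  set B : ℝ → ℂ := fun ξ => η₂ (a * ξ) with hB
  have cA : ContinuousOn A S := (contComp h.cont1 ha).mono hpos
  have cB : ContinuousOn B S := (contComp h.cont2 ha).mono hpos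
  have cq : ContinuousOn q S := hq.continuousOn.mono hpos
  have dA := (Graded.hasDerivAt_dilate (h.d1 _ (mul_pos ha hx))).mul (hq.deriv x hx)
  have dB := (Graded.hasDerivAt_dilate (h.d2 _ (mul_pos ha hx))).mul (hq.deriv x hx)
  set AQ : ℝ → ℂ := fun ξ => A ξ * q ξ with hAQ
  set BQ : ℝ → ℂ := fun ξ => B ξ * q ξ with hBQ
  have cdA : ContinuousOn (dslope AQ x) S :=
    (continuousOn_dslope hnhds).2 ⟨cA.mul cq, dA.differentiableAt⟩
  have cdB : ContinuousOn (dslope BQ x) S :=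
    (continuousOn_dslope hnhds).2 ⟨cB.mul cq, dB.differentiableAt⟩
  have hplus : ∀ ξ ∈ S, (x : ℂ) + ξ ≠ 0 := fun ξ hξ => by
    have : 0 < x + ξ := add_pos hx (hpos hξ)
    exact_mod_cast this.ne'
  have cp : ContinuousOn (fun ξ : ℝ => (x : ℂ) + ξ) S := by fun_prop
  have i1 : IntegrableOn (fun ξ => BQ ξ / ((x : ℂ) + ξ)) S :=
    ((cB.mul cq).div cp hplus).integrableOn_compact isCompact_Icc
  have i2 : IntegrableOn (fun ξ => AQ ξ / ((x : ℂ) + ξ)) S :=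
    ((cA.mul cq).div cp hplus).integrableOn_compact isCompact_Icc
  have i3 : IntegrableOn (dslope AQ x) S := cdA.integrableOn_compact isCompact_Icc
  have i4 : IntegrableOn (dslope BQ x) S := cdB.integrableOn_compact isCompact_Icc
  have hsl : ∀ (f : ℝ → ℂ) (ξ : ℝ), f ξ = f x + ((ξ : ℂ) - x) * dslope f x ξ := fun f ξ => by
    have := sub_smul_dslope f x ξ
    rw [Complex.real_smul] at this
    push_cast at this
    rw [this]; ring
  set u₁ : ℝ → ℂ := fun N => -I * b₁ * b₁ * cexp (I * ((N * x : ℝ) : ℂ)) * B x with hu₁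
  set u₂ : ℝ → ℂ := fun N => I * b₂ * b₂ * cexp (-I * ((N * x : ℝ) : ℂ)) * A x with hu₂
  set u₃ : ℝ → ℂ := fun N => -I * b₁ * b₂ * cexp (I * ((N * x : ℝ) : ℂ)) * B x with hu₃
  set u₄ : ℝ → ℂ := fun N => I * b₁ * b₂ * cexp (-I * ((N * x : ℝ) : ℂ)) * A x with hu₄
  have nI : (I : ℂ).re = 0 := by simp
  have nI' : (-I : ℂ).re = 0 := by simp
  set v : ℂ := I * b₁ * b₂ * (2 * I * (A x * B x * q x)) with hv
  have key : ∀ N, ∀ᵐ ξ ∂(volume.restrict S),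
      (lead η₁ η₂ b₁ b₂ a N x * lead' η₁ η₂ b₁ b₂ a N ξ
        - lead η₁ η₂ b₁ b₂ a N ξ * lead' η₁ η₂ b₁ b₂ a N x) * (q ξ / ((x : ℂ) ^ 2 - ξ ^ 2))
      = u₁ N * (cexp (I * ((N * ξ : ℝ) : ℂ)) * (BQ ξ / ((x : ℂ) + ξ)))
        + u₂ N * (cexp (-I * ((N * ξ : ℝ) : ℂ)) * (AQ ξ / ((x : ℂ) + ξ)))
        + u₃ N * (cexp (-I * ((N * ξ : ℝ) : ℂ)) * dslope AQ x ξ)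
        + u₄ N * (cexp (I * ((N * ξ : ℝ) : ℂ)) * dslope BQ x ξ)
        + v * ((Real.sin (N * (x - ξ)) / (x - ξ) : ℝ) : ℂ) := by
    intro N
    have hx0 : ∀ᵐ ξ ∂(volume.restrict S), ξ ≠ x :=
      ae_restrict_of_ae (compl_mem_ae_iff.2 (measure_singleton x))
    filter_upwards [hx0, ae_restrict_mem hSm] with ξ hne hξ
    have h1 : (x : ℂ) - ξ ≠ 0 := by
      rw [sub_ne_zero]; exact_mod_cast hne.symm
    have := lead_identity (X₁ := cexp (I * ((N * x : ℝ) : ℂ))) (X₂ := cexp (-I * ((N * x : ℝ) : ℂ)))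
      (Y₁ := cexp (I * ((N * ξ : ℝ) : ℂ))) (Y₂ := cexp (-I * ((N * ξ : ℝ) : ℂ)))
      (Ax := A x) (Bx := B x) (b₁ := b₁) (b₂ := b₂) h1 (hplus ξ hξ) (hsl AQ ξ) (hsl BQ ξ)
    refine this.trans ?_
    congr 1
    have hs : cexp (I * ((N * x : ℝ) : ℂ)) * cexp (-I * ((N * ξ : ℝ) : ℂ))
        - cexp (-I * ((N * x : ℝ) : ℂ)) * cexp (I * ((N * ξ : ℝ) : ℂ))
        = 2 * I * (Real.sin (N * (x - ξ)) : ℝ) := by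
      rw [← Complex.exp_add, ← Complex.exp_add, Complex.ofReal_sin, Complex.sin]
      have e1 : I * ((N * x : ℝ) : ℂ) + -I * ((N * ξ : ℝ) : ℂ) = ((N * (x - ξ) : ℝ) : ℂ) * I := by
        push_cast; ring
      have e2 : -I * ((N * x : ℝ) : ℂ) + I * ((N * ξ : ℝ) : ℂ) = -((N * (x - ξ) : ℝ) : ℂ) * I := by
        push_cast; ring
      rw [e1, e2]
      linear_combination (cexp (((N * (x - ξ) : ℝ) : ℂ) * I) - cexp (-((N * (x - ξ) : ℝ) : ℂ) * I))
        * I_sq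
    rw [Complex.ofReal_div, Complex.ofReal_sub, hv, hAQ, hBQ]
    rw [← mul_div_assoc, ← mul_div_assoc]
    congr 1
    linear_combination (I * b₁ * b₂ * A x * B x * q x) * hs
  have j1 := fun N => integrableOn_cexp_mul i1 (u₁ N) nI N
  have j2 := fun N => integrableOn_cexp_mul i2 (u₂ N) nI' N
  have j3 := fun N => integrableOn_cexp_mul i3 (u₃ N) nI' N
  have j4 := fun N => integrableOn_cexp_mul i4 (u₄ N) nI N
  have j5 : ∀ N, IntegrableOn (fun ξ : ℝ => v * ((Real.sin (N * (x - ξ)) / (x - ξ) : ℝ) : ℂ)) S :=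
    fun N => (integrableOn_sin_div_sub N).const_mul v
  constructor
  · have hI : I = I * ((1:ℝ) : ℂ) := by simp
    have hI' : -I = I * ((-1:ℝ) : ℂ) := by simp
    have t1 := riemannLebesgue_bounded_mul (f := fun ξ => BQ ξ / ((x : ℂ) + ξ)) hSm one_ne_zero
      (u := u₁) (M := ‖-I * b₁ * b₁‖ * ‖B x‖)
      (fun N => by simp only [hu₁, norm_mul, Graded.norm_cexp_mul nI, mul_one, le_refl]) hI
    have t2 := riemannLebesgue_bounded_mul (f := fun ξ => AQ ξ / ((x : ℂ) + ξ)) hSm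
      (neg_ne_zero.2 one_ne_zero) (u := u₂) (M := ‖I * b₂ * b₂‖ * ‖A x‖)
      (fun N => by simp only [hu₂, norm_mul, Graded.norm_cexp_mul nI', mul_one, le_refl]) hI'
    have t3 := riemannLebesgue_bounded_mul (f := dslope AQ x) hSm
      (neg_ne_zero.2 one_ne_zero) (u := u₃) (M := ‖-I * b₁ * b₂‖ * ‖B x‖)
      (fun N => by simp only [hu₃, norm_mul, Graded.norm_cexp_mul nI, mul_one, le_refl]) hI'
    have t4 := riemannLebesgue_bounded_mul (f := dslope BQ x) hSm one_ne_zero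
      (u := u₄) (M := ‖I * b₁ * b₂‖ * ‖A x‖)
      (fun N => by simp only [hu₄, norm_mul, Graded.norm_cexp_mul nI', mul_one, le_refl]) hI
    have t5 := (tendsto_integral_sin_div_sub hx).const_mul v
    have tt := (((t1.add t2).add t3).add t4).add t5
    have hval : (0 + 0 + 0 + 0 + v * (Real.pi : ℂ)) = -4 * (A x * B x * q x) := by
      have hπ : (Real.pi : ℂ) ≠ 0 := by exact_mod_cast Real.pi_ne_zero
      have hb : b₁ * b₂ = 2 / Real.pi := h.hb
      have : v * Real.pi = (b₁ * b₂) * (2 * I ^ 2 * (A x * B x * q x) * Real.pi) := by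
        rw [hv]; ring
      rw [this, hb, I_sq]
      field_simp
      ring
    rw [hval] at tt
    refine tt.congr fun N => ?_
    rw [integral_congr_ae (key N)]
    refine Eq.symm ?_
    refine (MeasureTheory.integral_add ((((j1 N).add (j2 N)).add (j3 N)).add (j4 N))
      (j5 N)).trans ?_
    refine congrArg₂ _ ?_ (MeasureTheory.integral_const_mul v _)
    refine (MeasureTheory.integral_add (((j1 N).add (j2 N)).add (j3 N)) (j4 N)).trans ?_
    refine congrArg (· + _) ?_
    refine (MeasureTheory.integral_add ((j1 N).add (j2 N)) (j3 N)).trans ?_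
    refine congrArg (· + _) ?_
    exact MeasureTheory.integral_add (j1 N) (j2 N)
  · intro N
    exact ((((((j1 N).add (j2 N)).add (j3 N)).add (j4 N)).add (j5 N))).congr
      ((key N).mono fun ξ hξ => hξ.symm)

end HankelPair

/-! ### The inversion formula for Hankel pairs -/

namespace HankelPair

variable {η₁ η₂ η₁' η₂' : ℝ → ℂ} {b₁ b₂ c : ℂ} {C : ℝ} {q q' : ℝ → ℂ} {K s a : ℝ}

/-- Near the diagonal the Lommel kernel concentrates to a multiple of evaluation at `x`. -/
lemma near (h : HankelPair η₁ η₂ η₁' η₂' b₁ b₂ c C) (hq : PowerDecay q q' K s)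
    (ha : 0 < a) {x : ℝ} (hx : 0 < x) :
    Tendsto (fun N : ℝ => ∫ ξ in Icc (x / 2) (3 * x / 2),
      (∫ t in a..N, crossE η₁ η₂ a t x * crossE η₁ η₂ a t ξ) * q ξ) atTop
      (𝓝 (-4 * (η₁ (a * x) * η₂ (a * x) * q x))) ∧
    ∀ N : ℝ, a ≤ N → 1 ≤ N → IntegrableOn (fun ξ =>
      (∫ t in a..N, crossE η₁ η₂ a t x * crossE η₁ η₂ a t ξ) * q ξ)
      (Icc (x / 2) (3 * x / 2)) := by
  obtain ⟨t1, i1⟩ := h.tendsto_integral_wronskErr hq ha hx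
  obtain ⟨t2, i2⟩ := h.tendsto_integral_lead hq ha hx
  have key : ∀ N, a ≤ N → ∀ᵐ ξ ∂(volume.restrict (Icc (x / 2) (3 * x / 2))),
      wronskErr η₁ η₂ η₁' η₂' b₁ b₂ a x N ξ * (q ξ / ((x : ℂ) ^ 2 - ξ ^ 2))
      + (lead η₁ η₂ b₁ b₂ a N x * lead' η₁ η₂ b₁ b₂ a N ξ
        - lead η₁ η₂ b₁ b₂ a N ξ * lead' η₁ η₂ b₁ b₂ a N x) * (q ξ / ((x : ℂ) ^ 2 - ξ ^ 2))
      = (∫ t in a..N, crossE η₁ η₂ a t x * crossE η₁ η₂ a t ξ) * q ξ := by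
    intro N hN
    have hx0 : ∀ᵐ ξ ∂(volume.restrict (Icc (x / 2) (3 * x / 2))), ξ ≠ x :=
      ae_restrict_of_ae (compl_mem_ae_iff.2 (measure_singleton x))
    filter_upwards [hx0, ae_restrict_mem measurableSet_Icc] with ξ hne hξ
    have hξ0 : 0 < ξ := by linarith [hξ.1]
    have h3 : (x : ℂ) ^ 2 - ξ ^ 2 ≠ 0 := by
      have : x ^ 2 - ξ ^ 2 ≠ 0 := by
        rw [sq_sub_sq]
        exact mul_ne_zero (by positivity) (sub_ne_zero.2 hne.symm)
      exact_mod_cast this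
    have hl := h.lommel ha hx hξ0 hN
    rw [← add_mul, wronskErr, sub_add_cancel, ← hl]
    field_simp
  constructor
  · have := t1.add t2
    rw [zero_add] at this
    refine this.congr' ?_
    filter_upwards [eventually_ge_atTop a, eventually_ge_atTop 1] with N hN hN1
    rw [← MeasureTheory.integral_add (i1 N hN1) (i2 N)]
    exact integral_congr_ae (key N hN)
  · intro N hN hN1
    exact ((i1 N hN1).add (i2 N)).congr (key N hN)

/-- The Weber–Titchmarsh inversion formula in terms of the normalised Hankel functions. -/
theorem outer (h : HankelPair η₁ η₂ η₁' η₂' b₁ b₂ c C) (hq : PowerDecay q q' K s)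
    (ha : 0 < a) {F : ℝ → ℂ}
    (hF : ∀ t, a < t →
      Tendsto (fun M : ℝ => ∫ ξ in (0:ℝ)..M, crossE η₁ η₂ a t ξ * q ξ) atTop (𝓝 (F t)))
    {x : ℝ} (hx : 0 < x) :
    Tendsto (fun N : ℝ => ∫ t in a..N, crossE η₁ η₂ a t x * F t) atTop
      (𝓝 (-4 * (η₁ (a * x) * η₂ (a * x) * q x))) := by
  obtain ⟨t1, i1⟩ := h.far hq ha hx
  obtain ⟨t2, i2⟩ := h.near hq ha hx
  have hsub : Icc (x / 2) (3 * x / 2) ⊆ Ioi (0:ℝ) := fun ξ hξ => by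
    have := hξ.1
    exact lt_of_lt_of_le (by positivity) this
  have hU : Ioi (0:ℝ) = (Ioi 0 \ Icc (x / 2) (3 * x / 2)) ∪ Icc (x / 2) (3 * x / 2) :=
    (sdiff_union_of_subset hsub).symm
  have := t1.add t2
  rw [zero_add] at this
  refine this.congr' ?_
  filter_upwards [eventually_ge_atTop a, eventually_ge_atTop 1] with N hN hN1
  have hi := (i1 N hN).union (i2 N hN hN1)
  have he := setIntegral_union disjoint_sdiff_self_left measurableSet_Icc (i1 N hN) (i2 N hN hN1)
  rw [← hU] at hi he
  rw [← he]
  have l1 := h.outer_eq_lim hq ha hF hx hN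
  have l2 := intervalIntegral_tendsto_integral_Ioi (0:ℝ) hi tendsto_id
  refine tendsto_nhds_unique (l2.congr' ?_) l1
  filter_upwards [eventually_ge_atTop 0] with M hM
  exact intervalIntegral.integral_of_le hM

/-- The Wronskian is constant, and its limit at infinity is `-2 i b₁ b₂`. -/
lemma wronskian_ne_zero (h : HankelPair η₁ η₂ η₁' η₂' b₁ b₂ c C) {z : ℝ} (hz : 0 < z) :
    η₁ z * η₂' z - η₂ z * η₁' z ≠ 0 := by
  have hC := h.C_nonneg
  set W : ℝ → ℂ := fun z => η₁ z * η₂' z - η₂ z * η₁' z with hW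
  have hd : ∀ z ∈ Ioi (0:ℝ), HasDerivAt W 0 z := fun z hz => by
    refine (((h.d1 z hz).mul (h.d2' z hz)).sub ((h.d2 z hz).mul (h.d1' z hz))).congr_deriv ?_
    ring
  have hconst : ∀ y, 0 < y → W y = W z := fun y hy =>
    isOpen_Ioi.is_const_of_deriv_eq_zero isPreconnected_Ioi
      (fun z hz => (hd z hz).differentiableAt.differentiableWithinAt)
      (fun z hz => (hd z hz).deriv) hy hz
  have hlim : Tendsto (fun y : ℝ => W y) atTop (𝓝 (-2 * I * (b₁ * b₂))) := by
    rw [tendsto_iff_norm_sub_tendsto_zero]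
    have hb1 := h.norm_b1
    have hb2 := h.norm_b2
    refine squeeze_zero_norm' (a := fun y => 8 * (2 * C + C) * C * y⁻¹) ?_ ?_
    · filter_upwards [eventually_ge_atTop 1] with y hy
      have hy0 : 0 < y := by linarith
      rw [norm_norm]
      set X := cexp (I * (y : ℂ)) with hX
      set X' := cexp (-(I * (y : ℂ))) with hX'
      have hXX : X * X' = 1 := by rw [hX, hX', ← Complex.exp_add]; simp
      have nX : ‖X‖ = 1 := norm_exp_I y
      have nX' : ‖X'‖ = 1 := norm_exp_neg_I y
      have e : W y - -2 * I * (b₁ * b₂)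
          = η₁ y * (η₂' y + I * b₂ * X') - (η₁ y - b₁ * X) * (I * b₂ * X')
            - (η₂ y * (η₁' y - I * b₁ * X) + (η₂ y - b₂ * X') * (I * b₁ * X)) := by
        simp only [hW]
        linear_combination (-2 * I * b₁ * b₂) * hXX
      have hq0 : 0 ≤ C / y := by positivity
      have p1 : ‖η₁ y * (η₂' y + I * b₂ * X')‖ ≤ C * (C / y) := by
        rw [norm_mul]; exact mul_le_mul (h.bd1 y hy0) (h.as2' y hy0) (norm_nonneg _) hC
      have p2 : ‖(η₁ y - b₁ * X) * (I * b₂ * X')‖ ≤ C / y * (2 * C) := by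
        rw [norm_mul, norm_mul, norm_mul, nX', Complex.norm_I, one_mul, mul_one]
        exact mul_le_mul (h.as1 y hy0) hb2 (norm_nonneg _) hq0
      have p3 : ‖η₂ y * (η₁' y - I * b₁ * X)‖ ≤ C * (C / y) := by
        rw [norm_mul]; exact mul_le_mul (h.bd2 y hy0) (h.as1' y hy0) (norm_nonneg _) hC
      have p4 : ‖(η₂ y - b₂ * X') * (I * b₁ * X)‖ ≤ C / y * (2 * C) := by
        rw [norm_mul, norm_mul, norm_mul, nX, Complex.norm_I, one_mul, mul_one]
        exact mul_le_mul (h.as2 y hy0) hb1 (norm_nonneg _) hq0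
      rw [e]
      refine (norm_sub_le _ _).trans ((add_le_add (norm_sub_le _ _) (norm_add_le _ _)).trans ?_)
      have : 8 * (2 * C + C) * C * y⁻¹ = 24 * (C * (C / y)) := by ring
      rw [this]
      nlinarith [mul_nonneg hC hq0]
    · simpa using tendsto_inv_atTop_zero.const_mul (8 * (2 * C + C) * C)
  have hval : W z = -2 * I * (b₁ * b₂) := by
    refine tendsto_nhds_unique (tendsto_const_nhds.congr' ?_) hlim
    filter_upwards [eventually_gt_atTop 0] with y hy using (hconst y hy).symm
  show W z ≠ 0
  rw [hval, h.hb]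
  have hπ : (Real.pi : ℂ) ≠ 0 := by exact_mod_cast Real.pi_ne_zero
  simp [hπ]

/-- Zeros of a function on `(0, ∞)` whose derivative does not vanish there form a null set. -/
lemma null_zeros {f f' : ℝ → ℂ} (hd : ∀ z, 0 < z → HasDerivAt f (f' z) z)
    (hne : ∀ z, 0 < z → f z = 0 → f' z ≠ 0) :
    volume {z : ℝ | 0 < z ∧ f z = 0} = 0 := by
  set Z : Set ℝ := {z : ℝ | 0 < z ∧ f z = 0} with hZ
  refine Set.Countable.measure_zero ?_ _
  have hdisc : DiscreteTopology Z := by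
    rw [discreteTopology_subtype_iff]
    intro z hz
    have h1 : ∀ᶠ w in 𝓝[≠] z, f w ≠ 0 := (hd z hz.1).eventually_ne (hne z hz.1 hz.2)
    have h2 : ∀ᶠ w in 𝓝[≠] z ⊓ 𝓟 Z, False := by
      filter_upwards [h1.filter_mono inf_le_left, mem_inf_of_right (mem_principal_self Z)]
        with w hw hwZ using hw hwZ.2
    exact eventually_false_iff_eq_bot.1 h2
  exact Set.countable_coe_iff.1 (TopologicalSpace.separableSpace_iff_countable.1 inferInstance)

/-- `η₁ η₂` is almost everywhere nonzero. -/
lemma ae_ne_zero (h : HankelPair η₁ η₂ η₁' η₂' b₁ b₂ c C) (ha : 0 < a) :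
    ∀ᵐ x ∂(volume.restrict (Ioi (0:ℝ))), η₁ (a * x) * η₂ (a * x) ≠ 0 := by
  have ha' : (a : ℂ) ≠ 0 := by exact_mod_cast ha.ne'
  have n1 := null_zeros (f := fun x => η₁ (a * x))
    (fun z hz => Graded.hasDerivAt_dilate (h.d1 _ (mul_pos ha hz)))
    (fun z hz h0 h1 => h.wronskian_ne_zero (mul_pos ha hz) (by
      rw [mul_eq_zero, or_iff_right ha'] at h1
      rw [h0, h1]; ring))
  have n2 := null_zeros (f := fun x => η₂ (a * x))
    (fun z hz => Graded.hasDerivAt_dilate (h.d2 _ (mul_pos ha hz)))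
    (fun z hz h0 h1 => h.wronskian_ne_zero (mul_pos ha hz) (by
      rw [mul_eq_zero, or_iff_right ha'] at h1
      rw [h0, h1]; ring))
  have m1 := ae_restrict_of_ae (s := Ioi (0:ℝ)) (compl_mem_ae_iff.2 n1)
  have m2 := ae_restrict_of_ae (s := Ioi (0:ℝ)) (compl_mem_ae_iff.2 n2)
  filter_upwards [m1, m2, ae_restrict_mem measurableSet_Ioi] with x h1 h2 hx
  exact mul_ne_zero (fun h0 => h1 ⟨hx, h0⟩) (fun h0 => h2 ⟨hx, h0⟩)

end HankelPair

/-! ### Asymptotics of perturbed waves -/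

/-- `φ` solves `φ'' = -(1 + c / z²) φ` on `(0, ∞)`, with at most the indicated singular behaviour
at `0`. -/
structure PerturbedWave (φ φ' : ℝ → ℂ) (c : ℂ) (K : ℝ) : Prop where
  d : ∀ z : ℝ, 0 < z → HasDerivAt φ (φ' z) z
  d' : ∀ z : ℝ, 0 < z → HasDerivAt φ' (-(1 + c / (z : ℂ) ^ 2) * φ z) z
  small : ∀ z : ℝ, 0 < z → z ≤ 1 → ‖φ z‖ ≤ K
  small' : ∀ z : ℝ, 0 < z → z ≤ 1 → ‖φ' z‖ ≤ K / z

namespace PerturbedWave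

variable {φ φ' : ℝ → ℂ} {c : ℂ} {K : ℝ}

/-- Variation of constants: the amplitudes of `exp (I z)` and `exp (-I z)` in `φ`. -/
noncomputable def amp (φ φ' : ℝ → ℂ) (z : ℝ) : ℂ × ℂ :=
  ((φ' z + I * φ z) * cexp (-I * z), (φ' z - I * φ z) * cexp (I * z))

lemma cexp_mul_cexp (z : ℝ) : cexp (I * z) * cexp (-I * z) = 1 := by
  rw [← Complex.exp_add]; simp

lemma amp_eq (z : ℝ) : φ z = ((amp φ φ' z).1 * cexp (I * z) - (amp φ φ' z).2 * cexp (-I * z))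
    / (2 * I) := by
  rw [eq_div_iff (by simp)]
  simp only [amp]
  linear_combination (-2 * I * φ z) * cexp_mul_cexp z

lemma amp_eq' (z : ℝ) : φ' z = ((amp φ φ' z).1 * cexp (I * z) + (amp φ φ' z).2 * cexp (-I * z))
    / 2 := by
  rw [eq_div_iff (by simp)]
  simp only [amp]
  linear_combination (-2 * φ' z) * cexp_mul_cexp z

lemma norm_le_amp (z : ℝ) : ‖φ z‖ ≤ ‖amp φ φ' z‖ := by
  rw [amp_eq (φ := φ) (φ' := φ') z, norm_div]
  simp only [norm_mul, Complex.norm_I, mul_one, Complex.norm_ofNat]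
  rw [div_le_iff₀ two_pos]
  refine (norm_sub_le _ _).trans ?_
  rw [norm_mul, norm_mul, Graded.norm_cexp_mul (by simp), Graded.norm_cexp_mul (by simp)]
  linarith [norm_fst_le (amp φ φ' z), norm_snd_le (amp φ φ' z)]

lemma amp_hasDerivAt (h : PerturbedWave φ φ' c K) {z : ℝ} (hz : 0 < z) :
    HasDerivAt (amp φ φ') (-(c / (z : ℂ) ^ 2) * φ z * cexp (-I * z),
      -(c / (z : ℂ) ^ 2) * φ z * cexp (I * z)) z := by
  have e1 := ((h.d' z hz).add ((h.d z hz).const_mul I)).mul (Graded.hasDerivAt_cexp_mul (-I) z)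
  have e2 := ((h.d' z hz).sub ((h.d z hz).const_mul I)).mul (Graded.hasDerivAt_cexp_mul I z)
  refine (e1.congr_deriv ?_).prodMk (e2.congr_deriv ?_)
  · simp only [Pi.add_apply]
    linear_combination (-φ z * cexp (-I * z)) * I_sq
  · simp only [Pi.sub_apply]
    linear_combination (-φ z * cexp (I * z)) * I_sq

lemma norm_amp_deriv (z : ℝ) :
    ‖((-(c / (z : ℂ) ^ 2) * φ z * cexp (-I * z), -(c / (z : ℂ) ^ 2) * φ z * cexp (I * z)) : ℂ × ℂ)‖
      = ‖c‖ / z ^ 2 * ‖φ z‖ := by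
  rw [Prod.norm_mk]
  simp only [norm_mul, norm_neg, norm_div, norm_pow, Complex.norm_real, Real.norm_eq_abs, sq_abs]
  rw [Graded.norm_cexp_mul (by simp), Graded.norm_cexp_mul (by simp), max_self, mul_one]

/-- Grönwall's inequality in the variable `u = 1 - 1 / z` bounds the amplitudes. -/
lemma amp_bound (h : PerturbedWave φ φ' c K) {z : ℝ} (hz : 1 ≤ z) :
    ‖amp φ φ' z‖ ≤ ‖amp φ φ' 1‖ * Real.exp ‖c‖ := by
  set b := 1 - 1 / z with hb
  have hz0 : 0 < z := by linarith
  have hb1 : b < 1 := by rw [hb]; have : 0 < 1 / z := by positivity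
                         linarith
  have hb0 : 0 ≤ b := by
    rw [hb, sub_nonneg, div_le_one hz0]; exact hz
  set V : ℝ → ℂ × ℂ := fun u => amp φ φ' (1 - u)⁻¹ with hV
  have hd : ∀ u, u < 1 → HasDerivAt V ((((1 - u)⁻¹) ^ 2) •
      (-(c / (((1 - u)⁻¹ : ℝ) : ℂ) ^ 2) * φ (1 - u)⁻¹ * cexp (-I * ((1 - u)⁻¹ : ℝ)),
      -(c / (((1 - u)⁻¹ : ℝ) : ℂ) ^ 2) * φ (1 - u)⁻¹ * cexp (I * ((1 - u)⁻¹ : ℝ)))) u := by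
    intro u hu
    have h1 : 0 < 1 - u := by linarith
    have h2 : HasDerivAt (fun u : ℝ => (1 - u)⁻¹) (((1 - u)⁻¹) ^ 2) u := by
      have := ((hasDerivAt_id u).const_sub 1).inv h1.ne'
      refine this.congr_deriv ?_
      simp
    exact (h.amp_hasDerivAt (inv_pos.2 h1)).scomp u h2
  have hg := norm_le_gronwallBound_of_norm_deriv_right_le (f := V) (a := 0) (b := b)
    (δ := ‖amp φ φ' 1‖) (K := ‖c‖) (ε := 0)
    (fun u hu => (hd u (hu.2.trans_lt hb1)).continuousAt.continuousWithinAt)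
    (fun u hu => (hd u (hu.2.trans hb1)).hasDerivWithinAt) (by simp [hV])
    (fun u hu => by
      have h1 : 0 < 1 - u := by linarith [hu.2]
      rw [norm_smul, norm_amp_deriv, add_zero, Real.norm_eq_abs, abs_of_pos (by positivity)]
      have := norm_le_amp (φ := φ) (φ' := φ') (1 - u)⁻¹
      calc _ = ‖c‖ * ‖φ (1 - u)⁻¹‖ := by field_simp
        _ ≤ _ := by gcongr) b ⟨hb0, le_rfl⟩
  have hVb : V b = amp φ φ' z := by simp [hV, hb]
  rw [hVb, gronwallBound_ε0, sub_zero] at hg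
  refine hg.trans ?_
  gcongr
  nlinarith [norm_nonneg c]

lemma amp_lipschitz (h : PerturbedWave φ φ' c K) {y z : ℝ} (hy : 1 ≤ y) (hyz : y ≤ z) :
    ‖amp φ φ' z - amp φ φ' y‖ ≤ ‖c‖ * (‖amp φ φ' 1‖ * Real.exp ‖c‖) / y := by
  set M := ‖c‖ * (‖amp φ φ' 1‖ * Real.exp ‖c‖) with hM
  have hM0 : 0 ≤ M := by positivity
  have hpos : ∀ w ∈ Icc y z, 0 < w := fun w hw => by linarith [hw.1]
  have h1 := image_norm_le_of_norm_deriv_right_le_deriv_boundary' (a := y) (b := z)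
    (f := fun w => amp φ φ' w - amp φ φ' y)
    (fun w hw => ((h.amp_hasDerivAt (hpos w hw)).sub_const _).continuousAt.continuousWithinAt)
    (fun w hw => ((h.amp_hasDerivAt (hpos w (Ico_subset_Icc_self hw))).sub_const _).hasDerivWithinAt)
    (B := fun w => M / y - M / w) (B' := fun w => M / w ^ 2)
    (by simp) ?_ ?_ ?_ (x := z) ⟨hyz, le_rfl⟩
  · refine h1.trans (sub_le_self _ ?_)
    have : 0 < z := by linarith
    positivity
  · exact continuousOn_const.sub
      (continuousOn_const.div continuousOn_id fun w hw => (hpos w hw).ne')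
  · intro w hw
    have hw0 := hpos w (Ico_subset_Icc_self hw)
    have := (((hasDerivAt_id w).inv hw0.ne').const_mul M).const_sub (M / y)
    refine (HasDerivAt.congr_deriv (f := fun w => M / y - M / w) (f' := -(M * (-1 / w ^ 2)))
      ?_ ?_).hasDerivWithinAt
    · simpa [div_eq_mul_inv] using this
    · ring
  · intro w hw
    have hw0 := hpos w (Ico_subset_Icc_self hw)
    rw [norm_amp_deriv]
    have := (norm_le_amp (φ := φ) (φ' := φ') w).trans (h.amp_bound (hy.trans hw.1))
    calc _ ≤ ‖c‖ / w ^ 2 * (‖amp φ φ' 1‖ * Real.exp ‖c‖) := by gcongr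
      _ = _ := by rw [hM]; ring

/-- Every solution is asymptotic to a combination of the free waves `exp (± I z)`, with error
`O (1 / z)`, also after one differentiation. -/
theorem asymptotics (h : PerturbedWave φ φ' c K) :
    ∃ (α β : ℂ) (C : ℝ), ∀ z : ℝ, 0 < z → ‖φ z‖ ≤ C ∧
      ‖φ z - (α * cexp (I * z) + β * cexp (-(I * z)))‖ ≤ C / z ∧
      ‖φ' z - (I * α * cexp (I * z) - I * β * cexp (-(I * z)))‖ ≤ C / z := by
  set A := ‖amp φ φ' 1‖ * Real.exp ‖c‖ with hA
  have hA0 : 0 ≤ A := by positivity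
  have hM0 : 0 ≤ ‖c‖ * A := by positivity
  have hK0 : 0 ≤ K := (norm_nonneg _).trans (h.small 1 one_pos le_rfl)
  obtain ⟨P, hP⟩ : ∃ P, Tendsto (fun z : ℝ => amp φ φ' (max z 1)) atTop (𝓝 P) := by
    refine cauchySeq_tendsto_of_complete ?_
    refine cauchySeq_of_le_tendsto_0' (fun z => ‖c‖ * A / max z 1) (fun y z hyz => ?_) ?_
    · rw [dist_comm, dist_eq_norm]
      exact h.amp_lipschitz (le_max_right _ _) (max_le_max_right _ hyz)
    · exact Tendsto.const_div_atTop (tendsto_atTop_mono (fun z => le_max_left z 1) tendsto_id) _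
  have hlim : ∀ y : ℝ, 1 ≤ y → ‖P - amp φ φ' y‖ ≤ ‖c‖ * A / y := fun y hy => by
    refine le_of_tendsto ((hP.sub_const _).norm) ?_
    filter_upwards [eventually_ge_atTop y] with z hz
    exact h.amp_lipschitz hy (hz.trans (le_max_left _ _))
  set α := P.1 / (2 * I) with hα
  set β := -P.2 / (2 * I) with hβ
  have hP1 : P.1 = 2 * I * α := by rw [hα]; field_simp
  have hP2 : P.2 = -(2 * I * β) := by rw [hβ]; field_simp
  have hfst : ∀ y : ℝ, 1 ≤ y → ‖(amp φ φ' y).1 - P.1‖ ≤ ‖c‖ * A / y := fun y hy => by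
    rw [norm_sub_rev]; exact (norm_fst_le (P - amp φ φ' y)).trans (hlim y hy)
  have hsnd : ∀ y : ℝ, 1 ≤ y → ‖(amp φ φ' y).2 - P.2‖ ≤ ‖c‖ * A / y := fun y hy => by
    rw [norm_sub_rev]; exact (norm_snd_le (P - amp φ φ' y)).trans (hlim y hy)
  have n1 : ∀ z : ℝ, ‖cexp (I * z)‖ = 1 := fun z => Graded.norm_cexp_mul (by simp) z
  have n2 : ∀ z : ℝ, ‖cexp (-I * z)‖ = 1 := fun z => Graded.norm_cexp_mul (by simp) z
  have htail : ∀ {x y : ℂ} {u v : ℝ} (w w' : ℂ), ‖w‖ = 1 → ‖w'‖ = 1 → ‖x‖ ≤ u → ‖y‖ ≤ v →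
      ‖x * w + y * w'‖ ≤ u + v ∧ ‖x * w - y * w'‖ ≤ u + v := by
    intro x y u v w w' hw hw' hx hy
    have e1 : ‖x * w‖ ≤ u := by rw [norm_mul, hw, mul_one]; exact hx
    have e2 : ‖y * w'‖ ≤ v := by rw [norm_mul, hw', mul_one]; exact hy
    exact ⟨(norm_add_le _ _).trans (by linarith), (norm_sub_le _ _).trans (by linarith)⟩
  refine ⟨α, β, K + A + ‖c‖ * A + ‖α‖ + ‖β‖, fun z hz => ?_⟩
  have hα0 := norm_nonneg α
  have hβ0 := norm_nonneg β
  rw [← neg_mul]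
  rcases le_total z 1 with hz1 | hz1
  · have e1 := h.small z hz hz1
    have e2 := h.small' z hz hz1
    have e3 := htail (cexp (I * z)) (cexp (-I * z)) (n1 z) (n2 z) le_rfl le_rfl (x := α) (y := β)
    have e4 := htail (cexp (I * z)) (cexp (-I * z)) (n1 z) (n2 z) le_rfl le_rfl
      (x := I * α) (y := I * β)
    simp only [norm_mul, norm_I, one_mul] at e4
    refine ⟨by linarith, ?_, ?_⟩
    · rw [le_div_iff₀ hz]
      have := (norm_sub_le _ _).trans (add_le_add e1 e3.1)
      nlinarith [norm_nonneg (φ z - (α * cexp (I * z) + β * cexp (-I * z)))]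
    · rw [le_div_iff₀ hz]
      have := mul_le_mul_of_nonneg_right ((norm_sub_le _ _).trans (add_le_add e2 e4.2)) hz.le
      refine this.trans ?_
      rw [add_mul, div_mul_cancel₀ _ hz.ne']
      nlinarith
  · have e1 := (norm_le_amp (φ := φ) (φ' := φ') z).trans (h.amp_bound hz1)
    have e2 := htail (cexp (I * z)) (cexp (-I * z)) (n1 z) (n2 z) (hfst z hz1) (hsnd z hz1)
    have hC : ‖c‖ * A / z ≤ (K + A + ‖c‖ * A + ‖α‖ + ‖β‖) / z := by
      gcongr; linarith
    refine ⟨by rw [← hA] at e1; linarith, ?_, ?_⟩ <;> refine le_trans ?_ hC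
    · have : φ z - (α * cexp (I * z) + β * cexp (-I * z)) =
          (((amp φ φ' z).1 - P.1) * cexp (I * z) - ((amp φ φ' z).2 - P.2) * cexp (-I * z))
            / (2 * I) := by
        rw [amp_eq (φ := φ) (φ' := φ') z, hP1, hP2]
        field_simp
        ring
      rw [this, norm_div]
      simp only [norm_mul, norm_I, mul_one, Complex.norm_ofNat]
      rw [div_le_iff₀ two_pos]
      linarith [e2.2]
    · have : φ' z - (I * α * cexp (I * z) - I * β * cexp (-I * z)) =
          (((amp φ φ' z).1 - P.1) * cexp (I * z) + ((amp φ φ' z).2 - P.2) * cexp (-I * z)) / 2 := by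
        rw [amp_eq' (φ := φ) (φ' := φ') z, hP1, hP2]
        ring
      rw [this, norm_div, Complex.norm_ofNat, div_le_iff₀ two_pos]
      linarith [e2.1]

end PerturbedWave

/-! ### The Bessel function of the first kind -/

/-- The coefficients of `besselJ ν`, in powers of `(z / 2) ^ 2`. -/
noncomputable def besselCoeff (ν : ℂ) (n : ℕ) : ℂ :=
  (-1 : ℂ) ^ n / (Complex.Gamma (n + 1) * Complex.Gamma (n + ν + 1))

/-- The entire function with `besselJ ν z = (z / 2) ^ ν * besselE ν ((z / 2) ^ 2)`. -/
noncomputable def besselE (ν w : ℂ) : ℂ := ∑' n : ℕ, besselCoeff ν n * w ^ n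

lemma besselCoeff_succ (ν : ℂ) (n : ℕ) :
    ((n : ℂ) + 1) * besselCoeff ν (n + 1) = -besselCoeff (ν + 1) n := by
  have h1 : (n : ℂ) + 1 ≠ 0 := by exact_mod_cast Nat.succ_ne_zero n
  simp only [besselCoeff]
  push_cast
  rw [Complex.Gamma_add_one _ h1, show (n : ℂ) + 1 + ν + 1 = n + (ν + 1) + 1 by ring, pow_succ]
  rw [mul_assoc, ← mul_div_assoc, mul_div_mul_left _ _ h1]
  ring

lemma order_add_ne_zero {ν : ℂ} (hν : -(1 / 2) < ν.re) (n : ℕ) : (n : ℂ) + ν + 1 ≠ 0 := by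
  intro h
  have := congrArg Complex.re h
  simp at this
  have : (0 : ℝ) ≤ n := n.cast_nonneg
  linarith

lemma besselCoeff_order_succ {ν : ℂ} (hν : -(1 / 2) < ν.re) (n : ℕ) :
    besselCoeff ν n = (n + ν + 1) * besselCoeff (ν + 1) n := by
  have h1 := order_add_ne_zero hν n
  simp only [besselCoeff]
  rw [show (n : ℂ) + (ν + 1) + 1 = (n + ν + 1) + 1 by ring, Complex.Gamma_add_one _ h1]
  rw [← mul_div_assoc, mul_left_comm, mul_div_mul_left _ _ h1]

lemma norm_inv_Gamma_le {ν : ℂ} (hν : -(1 / 2) < ν.re) (n : ℕ) :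
    ‖(Complex.Gamma (n + ν + 1))⁻¹‖ ≤ ‖(Complex.Gamma (ν + 1))⁻¹‖ * 2 ^ n := by
  induction n with
  | zero => simp
  | succ n ih =>
    have h1 := order_add_ne_zero hν n
    push_cast
    rw [show (n : ℂ) + 1 + ν + 1 = (n + ν + 1) + 1 by ring, Complex.Gamma_add_one _ h1,
      mul_inv, norm_mul, pow_succ]
    have h2 : ‖((n : ℂ) + ν + 1)⁻¹‖ ≤ 2 := by
      rw [norm_inv]
      refine inv_le_of_inv_le₀ two_pos ?_
      refine le_trans ?_ (Complex.re_le_norm _)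
      have : (0 : ℝ) ≤ n := n.cast_nonneg
      simp
      linarith
    calc _ ≤ 2 * (‖(Complex.Gamma (ν + 1))⁻¹‖ * 2 ^ n) := by gcongr
      _ = _ := by ring

lemma norm_besselCoeff_le {ν : ℂ} (hν : -(1 / 2) < ν.re) (n : ℕ) :
    ‖besselCoeff ν n‖ ≤ ‖(Complex.Gamma (ν + 1))⁻¹‖ * (2 ^ n / n.factorial) := by
  rw [besselCoeff, Complex.Gamma_nat_eq_factorial, norm_div, norm_pow, norm_neg, norm_one, one_pow,
    norm_mul, Complex.norm_natCast, one_div, mul_inv, ← norm_inv]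
  have := norm_inv_Gamma_le hν n
  calc _ ≤ ((n.factorial : ℝ))⁻¹ * (‖(Complex.Gamma (ν + 1))⁻¹‖ * 2 ^ n) := by gcongr
    _ = _ := by ring

lemma summable_norm_besselCoeff {ν : ℂ} (hν : -(1 / 2) < ν.re) {R : ℝ} (hR : 0 ≤ R) :
    Summable fun n : ℕ => ‖besselCoeff ν n‖ * R ^ n := by
  refine Summable.of_nonneg_of_le (fun n => by positivity) (fun n => ?_)
    ((Real.summable_pow_div_factorial (2 * R)).mul_left ‖(Complex.Gamma (ν + 1))⁻¹‖)
  calc _ ≤ ‖(Complex.Gamma (ν + 1))⁻¹‖ * (2 ^ n / n.factorial) * R ^ n := by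
        gcongr; exact norm_besselCoeff_le hν n
    _ = _ := by rw [mul_pow]; ring

lemma summable_besselE {ν : ℂ} (hν : -(1 / 2) < ν.re) (w : ℂ) :
    Summable fun n : ℕ => besselCoeff ν n * w ^ n := by
  refine Summable.of_norm ?_
  simp_rw [norm_mul, norm_pow]
  exact summable_norm_besselCoeff hν (norm_nonneg w)

lemma norm_besselE_le {ν : ℂ} (hν : -(1 / 2) < ν.re) {w : ℂ} (hw : ‖w‖ ≤ 1) :
    ‖besselE ν w‖ ≤ ∑' n : ℕ, ‖besselCoeff ν n‖ := by
  have h1 := summable_norm_besselCoeff hν zero_le_one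
  simp_rw [one_pow, mul_one] at h1
  refine tsum_of_norm_bounded h1.hasSum fun n => ?_
  rw [norm_mul, norm_pow]
  exact mul_le_of_le_one_right (norm_nonneg _) (pow_le_one₀ (norm_nonneg _) hw)

lemma re_add_one_gt {ν : ℂ} (hν : -(1 / 2) < ν.re) : -(1 / 2) < (ν + 1).re := by
  rw [add_re, one_re]; linarith

lemma besselE_hasDerivAt {ν : ℂ} (hν : -(1 / 2) < ν.re) (w : ℂ) :
    HasDerivAt (besselE ν) (-besselE (ν + 1) w) w := by
  set R := ‖w‖ + 1 with hR
  have hR0 : 1 ≤ R := by rw [hR]; linarith [norm_nonneg w]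
  have hu : Summable fun n : ℕ => ‖besselCoeff ν n‖ * (2 * R) ^ n :=
    summable_norm_besselCoeff hν (by positivity)
  have h := hasDerivAt_tsum_of_isPreconnected (𝕜 := ℂ) (F := ℂ)
    (g := fun (n : ℕ) w => besselCoeff ν n * w ^ n)
    (g' := fun n w => besselCoeff ν n * (n * w ^ (n - 1))) (t := Metric.ball 0 R) (y₀ := w) (y := w)
    hu Metric.isOpen_ball (convex_ball _ _).isPreconnected
    (fun n y _ => (hasDerivAt_pow n y).const_mul _)
    (fun n y hy => ?_) (by simp [hR]) (summable_besselE hν w) (by simp [hR])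
  · have h' : HasDerivAt (besselE ν) (∑' n : ℕ, besselCoeff ν n * (n * w ^ (n - 1))) w := h
    refine h'.congr_deriv ?_
    have hs : Summable fun n : ℕ => besselCoeff ν (n + 1) * ((n + 1 : ℕ) * w ^ n) := by
      have := (summable_besselE (re_add_one_gt hν) w).neg
      refine this.congr fun n => ?_
      have := besselCoeff_succ ν n
      push_cast
      linear_combination (-w ^ n) * this
    have hs' : Summable fun n : ℕ => besselCoeff ν n * (n * w ^ (n - 1)) :=
      (summable_nat_add_iff 1).1 (by simpa using hs)
    rw [hs'.tsum_eq_zero_add, besselE, ← tsum_neg]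
    simp only [Nat.cast_zero, zero_mul, mul_zero, zero_add, Nat.add_sub_cancel]
    refine tsum_congr fun n => ?_
    have := besselCoeff_succ ν n
    push_cast
    linear_combination (w ^ n) * this
  · have hy' : ‖y‖ ≤ R := by simpa using (mem_ball_zero_iff.1 hy).le
    rw [norm_mul, norm_mul, norm_pow, Complex.norm_natCast, mul_pow]
    have h1 : (n : ℝ) ≤ 2 ^ n := by exact_mod_cast n.lt_two_pow_self.le
    have h2 : ‖y‖ ^ (n - 1) ≤ R ^ n :=
      (pow_le_pow_left₀ (norm_nonneg _) hy' _).trans (pow_le_pow_right₀ hR0 (Nat.sub_le _ _))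
    gcongr

/-- Bessel's equation for the entire factor. -/
lemma besselE_recurrence {ν : ℂ} (hν : -(1 / 2) < ν.re) (w : ℂ) :
    w * besselE (ν + 1 + 1) w - (ν + 1) * besselE (ν + 1) w + besselE ν w = 0 := by
  have h1 := re_add_one_gt hν
  have h2 := re_add_one_gt h1
  have s1 := (summable_besselE h1 w).hasSum
  have s2 := (summable_besselE h2 w).hasSum
  have s3 : HasSum (fun n : ℕ => n * besselCoeff (ν + 1) n * w ^ n)
      (-(w * besselE (ν + 1 + 1) w)) := by
    rw [← hasSum_nat_add_iff' 1]
    simp only [Finset.range_one, Finset.sum_singleton, Nat.cast_zero, zero_mul, sub_zero]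
    refine ((s2.mul_left w).neg).congr_fun ?_
    intro n
    have := besselCoeff_succ (ν + 1) n
    push_cast
    linear_combination (w ^ (n + 1)) * this
  have s4 := s3.add (s1.mul_left (ν + 1))
  have s5 : HasSum (fun n : ℕ => besselCoeff ν n * w ^ n)
      (-(w * besselE (ν + 1 + 1) w) + (ν + 1) * besselE (ν + 1) w) := by
    refine s4.congr_fun fun n => ?_
    have := besselCoeff_order_succ hν n
    linear_combination (w ^ n) * this
  have := s5.tsum_eq
  rw [show besselE ν w = _ from this]
  ring

lemma besselJ_eq {ν : ℂ} {z : ℝ} (hz : 0 < z) :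
    besselJ ν z = ((z : ℂ) / 2) ^ ν * besselE ν (((z : ℂ) / 2) ^ 2) := by
  have hz2 : (z : ℂ) / 2 ≠ 0 := by
    simp [hz.ne']
  rw [besselJ, besselE, ← tsum_mul_left]
  refine tsum_congr fun n => ?_
  rw [Complex.cpow_add _ _ hz2, ← pow_mul, besselCoeff,
    show (2 * (n : ℂ)) = ((2 * n : ℕ) : ℂ) by push_cast; ring, Complex.cpow_natCast]
  ring

/-- `√z * J_ν(z)`. -/
noncomputable def besselWave (ν : ℂ) (z : ℝ) : ℂ := (Real.sqrt z : ℂ) * besselJ ν z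

/-- The derivative of `besselWave ν`. -/
noncomputable def besselWave' (ν : ℂ) (z : ℝ) : ℂ :=
  2 ^ (-ν) * ((ν + 1 / 2) * ((z : ℂ) ^ (ν + 1 / 2) / z) * besselE ν ((z : ℂ) ^ 2 / 4)
    - (z : ℂ) ^ (ν + 1 / 2) * (z / 2) * besselE (ν + 1) ((z : ℂ) ^ 2 / 4))

lemma besselWave_eq {ν : ℂ} {z : ℝ} (hz : 0 < z) :
    besselWave ν z = 2 ^ (-ν) * ((z : ℂ) ^ (ν + 1 / 2) * besselE ν ((z : ℂ) ^ 2 / 4)) := by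
  have hz0 : (z : ℂ) ≠ 0 := by exact_mod_cast hz.ne'
  have e1 : ((z : ℂ) / 2) ^ ν = (z : ℂ) ^ ν * 2 ^ (-ν) := by
    rw [Complex.cpow_neg, show ((z : ℂ) / 2) = ((z : ℝ) : ℂ) * ((1 / 2 : ℝ) : ℂ) by push_cast; ring,
      Complex.mul_cpow_ofReal_nonneg hz.le (by norm_num),
      show ((1 / 2 : ℝ) : ℂ) = (2 : ℂ)⁻¹ by push_cast; ring, Complex.inv_cpow]
    intro h
    have : (2 : ℂ).arg = 0 := Complex.arg_ofReal_of_nonneg (x := 2) (by norm_num)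
    rw [this] at h
    exact Real.pi_ne_zero h.symm
  have e2 : (Real.sqrt z : ℂ) = (z : ℂ) ^ (1 / 2 : ℂ) := by
    rw [Real.sqrt_eq_rpow, Complex.ofReal_cpow hz.le]; push_cast; rfl
  rw [besselWave, besselJ_eq hz, e1, e2, Complex.cpow_add _ _ hz0, div_pow]
  norm_num
  ring

lemma hasDerivAt_cpow_ofReal (p : ℂ) {z : ℝ} (hz : 0 < z) :
    HasDerivAt (fun z : ℝ => (z : ℂ) ^ p) (p * ((z : ℂ) ^ p / z)) z := by
  have hz0 : (z : ℂ) ≠ 0 := by exact_mod_cast hz.ne'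
  have := ((hasDerivAt_id (z : ℂ)).cpow_const (c := p) (Or.inl (by simpa using hz))).comp_ofReal
  refine this.congr_deriv ?_
  simp only [id, mul_one]
  rw [Complex.cpow_sub _ _ hz0, Complex.cpow_one]

lemma hasDerivAt_besselE_sq {ν : ℂ} (hν : -(1 / 2) < ν.re) (z : ℝ) :
    HasDerivAt (fun z : ℝ => besselE ν ((z : ℂ) ^ 2 / 4))
      (-(z / 2 * besselE (ν + 1) ((z : ℂ) ^ 2 / 4))) z := by
  have h1 : HasDerivAt (fun z : ℂ => z ^ 2 / 4) ((z : ℂ) / 2) (z : ℂ) := by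
    refine ((hasDerivAt_pow 2 (z : ℂ)).div_const 4).congr_deriv ?_
    push_cast
    ring
  have := ((besselE_hasDerivAt hν _).comp (z : ℂ) h1).comp_ofReal
  refine this.congr_deriv ?_
  ring

lemma besselWave_hasDerivAt {ν : ℂ} (hν : -(1 / 2) < ν.re) {z : ℝ} (hz : 0 < z) :
    HasDerivAt (besselWave ν) (besselWave' ν z) z := by
  have h := ((hasDerivAt_cpow_ofReal (ν + 1 / 2) hz).mul
    (hasDerivAt_besselE_sq hν z)).const_mul (2 ^ (-ν))
  refine (h.congr_deriv ?_).congr_of_eventuallyEq ?_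
  · rw [besselWave']; ring
  · filter_upwards [lt_mem_nhds hz] with y hy
    rw [besselWave_eq hy]
    rfl

/-- Bessel's equation in Liouville normal form. -/
lemma besselWave'_hasDerivAt {ν : ℂ} (hν : -(1 / 2) < ν.re) {z : ℝ} (hz : 0 < z) :
    HasDerivAt (besselWave' ν) (-(1 + (1 / 4 - ν ^ 2) / (z : ℂ) ^ 2) * besselWave ν z) z := by
  have hz0 : (z : ℂ) ≠ 0 := by exact_mod_cast hz.ne'
  have hp := hasDerivAt_cpow_ofReal (ν + 1 / 2) hz
  have hid : HasDerivAt (fun z : ℝ => (z : ℂ)) 1 z := Complex.ofRealCLM.hasDerivAt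
  have h := ((((hp.div hid hz0).const_mul (ν + 1 / 2)).mul (hasDerivAt_besselE_sq hν z)).sub
    ((hp.mul (hid.div_const 2)).mul (hasDerivAt_besselE_sq (re_add_one_gt hν) z))).const_mul
    (2 ^ (-ν))
  refine h.congr_deriv ?_
  rw [besselWave_eq hz]
  have := besselE_recurrence hν ((z : ℂ) ^ 2 / 4)
  simp only [Pi.mul_apply, Pi.div_apply]
  generalize besselE (ν + 1 + 1) ((z : ℂ) ^ 2 / 4) = E2 at *
  generalize besselE (ν + 1) ((z : ℂ) ^ 2 / 4) = E1 at *
  generalize besselE ν ((z : ℂ) ^ 2 / 4) = E0 at *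
  generalize (z : ℂ) ^ (ν + 1 / 2) = Z at *
  generalize (2 : ℂ) ^ (-ν) = T at *
  have h2 : E0 = (ν + 1) * E1 - (z : ℂ) ^ 2 / 4 * E2 := by linear_combination this
  rw [h2]
  field_simp
  ring

lemma perturbedWave_besselWave {ν : ℂ} (hν : -(1 / 2) < ν.re) :
    ∃ K, PerturbedWave (besselWave ν) (besselWave' ν) (1 / 4 - ν ^ 2) K := by
  set S0 := ∑' n : ℕ, ‖besselCoeff ν n‖
  set S1 := ∑' n : ℕ, ‖besselCoeff (ν + 1) n‖
  have hS0 : 0 ≤ S0 := tsum_nonneg fun _ => norm_nonneg _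
  have hS1 : 0 ≤ S1 := tsum_nonneg fun _ => norm_nonneg _
  have hw : ∀ z : ℝ, 0 < z → z ≤ 1 → ‖(z : ℂ) ^ 2 / 4‖ ≤ 1 := fun z hz hz1 => by
    rw [norm_div, norm_pow, Complex.norm_real, Real.norm_eq_abs, abs_of_pos hz, Complex.norm_ofNat]
    nlinarith
  have hp : ∀ z : ℝ, 0 < z → z ≤ 1 → ‖(z : ℂ) ^ (ν + 1 / 2)‖ ≤ 1 := fun z hz hz1 => by
    rw [Complex.norm_cpow_eq_rpow_re_of_pos hz]
    refine Real.rpow_le_one hz.le hz1 ?_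
    simp
    linarith
  set T := ‖(2 : ℂ) ^ (-ν)‖ with hT
  have hT0 : 0 ≤ T := norm_nonneg _
  refine ⟨T * (S0 + ‖ν + 1 / 2‖ * S0 + S1), fun z hz => besselWave_hasDerivAt hν hz,
    fun z hz => besselWave'_hasDerivAt hν hz, fun z hz hz1 => ?_, fun z hz hz1 => ?_⟩
  · have e1 := norm_besselE_le hν (hw z hz hz1)
    have e2 := hp z hz hz1
    rw [besselWave_eq hz, norm_mul, norm_mul, ← hT]
    gcongr
    calc _ ≤ 1 * S0 := by gcongr
      _ ≤ _ := by nlinarith [norm_nonneg (ν + 1 / 2), mul_nonneg (norm_nonneg (ν + 1 / 2)) hS0]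
  · have e1 := norm_besselE_le hν (hw z hz hz1)
    have e3 := norm_besselE_le (re_add_one_gt hν) (hw z hz hz1)
    have e2 := hp z hz hz1
    rw [besselWave', norm_mul, ← hT, mul_div_assoc]
    gcongr
    refine (norm_sub_le _ _).trans ?_
    simp only [norm_mul, norm_div, Complex.norm_real, Real.norm_eq_abs, abs_of_pos hz,
      Complex.norm_ofNat]
    calc _ ≤ ‖ν + 1 / 2‖ * (1 / z) * S0 + 1 * (1 / z) * S1 := by
          gcongr
          linarith
      _ ≤ _ := by
          rw [le_div_iff₀ hz]
          field_simp
          linarith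

/-! ### The Bessel function of the second kind -/

lemma continuous_besselCoeff (n : ℕ) : Continuous fun μ : ℂ => besselCoeff μ n := by
  have h : Continuous fun s : ℂ => (Complex.Gamma s)⁻¹ :=
    Complex.differentiable_one_div_Gamma.continuous
  have h2 : (fun μ : ℂ => besselCoeff μ n) =
      fun μ => (-1 : ℂ) ^ n / Complex.Gamma (n + 1) * (Complex.Gamma (n + μ + 1))⁻¹ := by
    funext μ
    rw [besselCoeff, div_mul_eq_div_div, div_eq_mul_inv (_ / _)]
  rw [h2]
  exact continuous_const.mul (h.comp (by fun_prop))

lemma continuousAt_besselE_order {ν : ℂ} (hν : -(1 / 2) < ν.re) (w : ℂ) :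
    ContinuousAt (fun μ => besselE μ w) ν := by
  have hG : Continuous fun μ : ℂ => ‖(Complex.Gamma (μ + 1))⁻¹‖ :=
    (Complex.differentiable_one_div_Gamma.continuous.comp (by fun_prop)).norm
  set B := ‖(Complex.Gamma (ν + 1))⁻¹‖ + 1 with hB
  set U : Set ℂ := {μ | -(1 / 2) < μ.re ∧ ‖(Complex.Gamma (μ + 1))⁻¹‖ < B}
  have hU : U ∈ 𝓝 ν := ((isOpen_lt continuous_const Complex.continuous_re).inter
    (isOpen_lt hG continuous_const)).mem_nhds ⟨hν, by rw [hB]; exact lt_add_one (‖(Complex.Gamma (ν + 1))⁻¹‖)⟩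
  refine ContinuousOn.continuousAt (s := U) ?_ hU
  refine continuousOn_tsum (u := fun n : ℕ => B * ((2 * ‖w‖) ^ n / n.factorial))
    (fun n => ((continuous_besselCoeff n).mul continuous_const).continuousOn)
    ((Real.summable_pow_div_factorial (2 * ‖w‖)).mul_left B) fun n μ hμ => ?_
  rw [norm_mul, norm_pow]
  calc _ ≤ B * (2 ^ n / n.factorial) * ‖w‖ ^ n := by
        gcongr
        exact (norm_besselCoeff_le hμ.1 n).trans (by gcongr; exact hμ.2.le)
    _ = _ := by rw [mul_pow]; ring

lemma continuousAt_besselJ_order {ν : ℂ} (hν : -(1 / 2) < ν.re) {z : ℝ} (hz : 0 < z) :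
    ContinuousAt (fun μ => besselJ μ z) ν := by
  simp_rw [besselJ_eq hz]
  refine ContinuousAt.mul ?_ (continuousAt_besselE_order hν _)
  refine (continuousAt_const_cpow ?_)
  simp [hz.ne']

lemma sin_order_ne_zero {ν : ℂ} (h1 : 0 < ν.re) (h2 : ν.re < 1 / 2) :
    Complex.sin (Real.pi * ν) ≠ 0 := by
  intro h
  obtain ⟨k, hk⟩ := Complex.sin_eq_zero_iff.1 h
  have hpi : (Real.pi : ℂ) ≠ 0 := by exact_mod_cast Real.pi_ne_zero
  have : ν = k := mul_left_cancel₀ hpi (by rw [hk]; ring)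
  rw [this] at h1 h2
  simp only [Complex.intCast_re] at h1 h2
  have e1 : 0 < k := by exact_mod_cast h1
  have e2 : (1 : ℝ) ≤ k := by exact_mod_cast e1
  linarith

/-- For the orders at hand the limit defining `besselY` is attained by continuity. -/
lemma besselY_eq {ν : ℂ} (h1 : 0 < ν.re) (h2 : ν.re < 1 / 2) {z : ℝ} (hz : 0 < z) :
    besselY ν z = (besselJ ν z * Complex.cos (Real.pi * ν) - besselJ (-ν) z) /
      Complex.sin (Real.pi * ν) := by
  have c1 := continuousAt_besselJ_order (ν := ν) (by linarith) hz
  have c2 : ContinuousAt (fun μ => besselJ (-μ) z) ν :=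
    ContinuousAt.comp (g := fun μ => besselJ μ z) (f := fun μ => -μ)
      (continuousAt_besselJ_order (ν := -ν) (by rw [neg_re]; linarith) hz) (by fun_prop)
  have c3 : ContinuousAt (fun μ => (besselJ μ z * Complex.cos (Real.pi * μ) - besselJ (-μ) z) /
      Complex.sin (Real.pi * μ)) ν :=
    ((c1.mul (by fun_prop)).sub c2).div (by fun_prop) (sin_order_ne_zero h1 h2)
  exact (c3.tendsto.mono_left nhdsWithin_le_nhds).limUnder_eq

/-! ### Laplace transforms and amplitudes -/

/-- The integrand of the Laplace transform of `t ^ (s - 1) * φ t`. -/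
noncomputable def laplaceIntegrand (s : ℂ) (φ : ℝ → ℂ) (p : ℂ) (t : ℝ) : ℂ :=
  (t : ℂ) ^ (s - 1) * φ t * cexp (-(p * t))

/-- The Laplace transform of `t ^ (s - 1) * φ t`. -/
noncomputable def laplace (s : ℂ) (φ : ℝ → ℂ) (p : ℂ) : ℂ :=
  ∫ t in Ioi (0 : ℝ), laplaceIntegrand s φ p t

section Laplace

variable {s : ℂ} {φ : ℝ → ℂ} {C : ℝ}

lemma norm_cexp_neg_mul (p : ℂ) (t : ℝ) : ‖cexp (-(p * t))‖ = Real.exp (-p.re * t) := by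
  rw [Complex.norm_exp]; simp

lemma norm_cpow_sub_one (s : ℂ) {t : ℝ} (ht : 0 < t) : ‖(t : ℂ) ^ (s - 1)‖ = t ^ (s.re - 1) := by
  rw [Complex.norm_cpow_eq_rpow_re_of_pos ht]; simp

lemma integrableOn_rpow_exp {x b : ℝ} (hx : -1 < x) (hb : 0 < b) :
    IntegrableOn (fun t : ℝ => t ^ x * Real.exp (-b * t)) (Ioi 0) := by
  simpa using integrableOn_rpow_mul_exp_neg_mul_rpow hx one_pos hb

lemma continuousOn_laplaceIntegrand (hφ : ContinuousOn φ (Ioi 0)) (p : ℂ) :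
    ContinuousOn (laplaceIntegrand s φ p) (Ioi 0) := by
  have h1 : ContinuousOn (fun t : ℝ => (t : ℂ) ^ (s - 1)) (Ioi 0) := fun t ht =>
    (hasDerivAt_cpow_ofReal (s - 1) ht).continuousAt.continuousWithinAt
  exact (h1.mul hφ).mul (by fun_prop)

lemma integrableOn_laplaceIntegrand (hs : 0 < s.re) (hφ : ContinuousOn φ (Ioi 0))
    (hC : ∀ t : ℝ, 0 < t → ‖φ t‖ ≤ C) {p : ℂ} (hp : 0 < p.re) :
    IntegrableOn (laplaceIntegrand s φ p) (Ioi 0) := by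
  refine Integrable.mono' ((integrableOn_rpow_exp (x := s.re - 1) (by linarith) hp).const_mul C)
    ((continuousOn_laplaceIntegrand hφ p).aestronglyMeasurable measurableSet_Ioi) ?_
  filter_upwards [self_mem_ae_restrict measurableSet_Ioi] with t ht
  rw [laplaceIntegrand, norm_mul, norm_mul, norm_cpow_sub_one s ht, norm_cexp_neg_mul]
  have := Real.rpow_nonneg (le_of_lt ht) (s.re - 1)
  calc _ ≤ t ^ (s.re - 1) * C * Real.exp (-p.re * t) := by gcongr; exact hC t ht
    _ = _ := by ring

lemma laplace_differentiableOn (hs : 0 < s.re) (hφ : ContinuousOn φ (Ioi 0))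
    (hC : ∀ t : ℝ, 0 < t → ‖φ t‖ ≤ C) :
    DifferentiableOn ℂ (laplace s φ) {p : ℂ | 0 < p.re} := by
  intro p₀ hp₀
  have hp₀' : 0 < p₀.re := hp₀
  set b := p₀.re / 2 with hb
  have hb0 : 0 < b := half_pos hp₀
  have hU : {p : ℂ | b < p.re} ∈ 𝓝 p₀ :=
    (isOpen_lt continuous_const Complex.continuous_re).mem_nhds (half_lt_self hp₀')
  have h := hasDerivAt_integral_of_dominated_loc_of_deriv_le (𝕜 := ℂ)
    (μ := volume.restrict (Ioi (0 : ℝ))) (F := laplaceIntegrand s φ)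
    (F' := fun p t => laplaceIntegrand s φ p t * (-(t : ℂ)))
    (bound := fun t => C * (t ^ s.re * Real.exp (-b * t))) hU
    (Filter.Eventually.of_forall fun p =>
      (continuousOn_laplaceIntegrand hφ p).aestronglyMeasurable measurableSet_Ioi)
    (integrableOn_laplaceIntegrand hs hφ hC hp₀)
    (((continuousOn_laplaceIntegrand hφ p₀).mul (by fun_prop)).aestronglyMeasurable
      measurableSet_Ioi) ?_ ((integrableOn_rpow_exp (by linarith) hb0).const_mul C) ?_
  · exact h.2.differentiableAt.differentiableWithinAt
  · filter_upwards [self_mem_ae_restrict measurableSet_Ioi] with t ht p hp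
    have ht0 : (0 : ℝ) < t := ht
    have hp' : b < p.re := hp
    rw [norm_mul, laplaceIntegrand, norm_mul, norm_mul, norm_cpow_sub_one s ht0, norm_cexp_neg_mul,
      norm_neg, Complex.norm_real, Real.norm_eq_abs, abs_of_pos ht0]
    have h1 := Real.rpow_nonneg ht0.le (s.re - 1)
    have h2 : t ^ s.re = t ^ (s.re - 1) * t := by
      rw [Real.rpow_sub_one ht0.ne']; field_simp
    have hC0 := (norm_nonneg _).trans (hC t ht0)
    calc _ ≤ t ^ (s.re - 1) * C * Real.exp (-b * t) * t := by
          gcongr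
          exact hC t ht0
      _ = _ := by rw [h2]; ring
  · refine Filter.Eventually.of_forall fun t p _ => ?_
    have h1 : HasDerivAt (fun p : ℂ => cexp (-(p * t))) (cexp (-(p * t)) * (-(t : ℂ))) p := by
      have := ((hasDerivAt_id p).mul_const (t : ℂ)).neg.cexp
      simpa using this
    refine (h1.const_mul ((t : ℂ) ^ (s - 1) * φ t)).congr_deriv ?_
    rw [laplaceIntegrand]; ring

/-- A holomorphic formula for the Laplace transform valid for large real `p` holds in the whole
right half-plane. -/
lemma laplace_ext (hs : 0 < s.re) (hφ : ContinuousOn φ (Ioi 0))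
    (hC : ∀ t : ℝ, 0 < t → ‖φ t‖ ≤ C) {G : ℂ → ℂ} (hG : DifferentiableOn ℂ G {p : ℂ | 0 < p.re})
    (h : ∀ r : ℝ, 1 < r → laplace s φ r = G r) {p : ℂ} (hp : 0 < p.re) :
    laplace s φ p = G p := by
  have hopen : IsOpen {p : ℂ | 0 < p.re} := isOpen_lt continuous_const Complex.continuous_re
  refine AnalyticOnNhd.eqOn_of_preconnected_of_frequently_eq (z₀ := ((2 : ℝ) : ℂ))
    ((laplace_differentiableOn hs hφ hC).analyticOnNhd hopen) (hG.analyticOnNhd hopen)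
    (convex_halfSpace_re_gt 0).isPreconnected (by simp) ?_ hp
  have ht : Tendsto (fun r : ℝ => (r : ℂ)) (𝓝[≠] (2 : ℝ)) (𝓝[≠] ((2 : ℝ) : ℂ)) := by
    refine tendsto_nhdsWithin_iff.2 ⟨(Complex.continuous_ofReal.tendsto _).mono_left
      nhdsWithin_le_nhds, ?_⟩
    filter_upwards [self_mem_nhdsWithin] with r hr
    simpa using fun h : (r : ℂ) = ((2 : ℝ) : ℂ) => hr (Complex.ofReal_injective h)
  refine ht.frequently (Filter.Eventually.frequently ?_)
  filter_upwards [mem_nhdsWithin_of_mem_nhds (lt_mem_nhds (show (1 : ℝ) < 2 by norm_num))] with r hr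
  exact h r hr

lemma differentiableOn_cpow_neg (s : ℂ) :
    DifferentiableOn ℂ (fun p : ℂ => p ^ (-s)) {p : ℂ | 0 < p.re} := fun _ hp =>
  (DifferentiableAt.cpow_const differentiableAt_id (Or.inl hp)).differentiableWithinAt

lemma laplace_one (hs : 0 < s.re) {p : ℂ} (hp : 0 < p.re) :
    laplace s (fun _ => 1) p = Complex.Gamma s * p ^ (-s) := by
  refine laplace_ext (C := 1) hs continuousOn_const (by simp)
    ((differentiableOn_cpow_neg s).const_mul _) (fun r hr => ?_) hp
  have hr0 : 0 < r := by linarith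
  have := Complex.integral_cpow_mul_exp_neg_mul_Ioi hs hr0
  simp only [laplace, laplaceIntegrand, mul_one]
  rw [this, mul_comm, Complex.cpow_neg, one_div, Complex.inv_cpow]
  rw [Complex.arg_ofReal_of_nonneg hr0.le]
  exact Real.pi_pos.ne

lemma cpow_ofReal_tendsto_zero (hs : 0 < s.re) :
    Tendsto (fun ε : ℝ => (ε : ℂ) ^ s) (𝓝[>] 0) (𝓝 0) := by
  rw [tendsto_zero_iff_norm_tendsto_zero]
  have : Tendsto (fun ε : ℝ => ε ^ s.re) (𝓝[>] 0) (𝓝 0) := by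
    have := (Real.continuousAt_rpow_const 0 s.re (Or.inr hs.le)).tendsto
    rw [Real.zero_rpow hs.ne'] at this
    exact this.mono_left nhdsWithin_le_nhds
  refine this.congr' ?_
  filter_upwards [self_mem_nhdsWithin] with ε hε
  rw [Complex.norm_cpow_eq_rpow_re_of_pos hε]

/-- The amplitude of the wave `exp (ω t)`, `ω = ± I`, is read off from the singularity of the
Laplace transform at `p = ω`. -/
lemma amplitude_eq (hs : 0 < s.re) (hs2 : s.re ≤ 2) (hφ : ContinuousOn φ (Ioi 0)) {α β ω κ : ℂ}
    (hω : ω = I ∨ ω = -I) (hC : ∀ t : ℝ, 0 < t → ‖φ t‖ ≤ C)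
    (has : ∀ t : ℝ, 0 < t → ‖φ t - (α * cexp (ω * t) + β * cexp (-(ω * t)))‖ ≤ C / t)
    (hL : ∀ p : ℂ, 0 < p.re → laplace s φ p = κ * (1 + p ^ 2) ^ (-s)) :
    α * Complex.Gamma s = κ * (2 * ω) ^ (-s) := by
  have hωre : ω.re = 0 := by rcases hω with rfl | rfl <;> simp
  have hω2 : ω ^ 2 = -1 := by rcases hω with rfl | rfl <;> simp
  have hωs : 2 * ω ∈ slitPlane := by
    rw [Complex.mem_slitPlane_iff]; right; rcases hω with rfl | rfl <;> simp
  set r : ℝ → ℂ := fun t => φ t - (α * cexp (ω * t) + β * cexp (-(ω * t))) with hr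
  set δ := s.re / 2 with hδ
  have hδ0 : 0 < δ := half_pos hs
  set C' := C + ‖α‖ + ‖β‖ with hC'
  have hC0 : 0 ≤ C := (norm_nonneg _).trans (hC 1 one_pos)
  have hr1 : ∀ t : ℝ, 0 < t → ‖r t‖ ≤ C' := fun t ht => by
    refine (norm_sub_le _ _).trans ?_
    have := norm_add_le (α * cexp (ω * t)) (β * cexp (-(ω * t)))
    rw [norm_mul, norm_mul, ← neg_mul, Graded.norm_cexp_mul hωre,
      Graded.norm_cexp_mul (by simp [hωre]), mul_one, mul_one] at this
    rw [← neg_mul]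
    linarith [hC t ht]
  have hr2 : ∀ t : ℝ, 0 < t → ‖r t‖ ≤ C' * t ^ (-δ) := fun t ht => by
    have hC'0 : 0 ≤ C' := by positivity
    rcases le_total t 1 with h1 | h1
    · refine (hr1 t ht).trans (le_mul_of_one_le_right hC'0 ?_)
      exact Real.one_le_rpow_of_pos_of_le_one_of_nonpos ht h1 (by linarith)
    · calc ‖r t‖ ≤ C / t := has t ht
        _ ≤ C' / t := by gcongr; rw [hC']; linarith [norm_nonneg α, norm_nonneg β]
        _ = C' * t ^ (-1 : ℝ) := by rw [Real.rpow_neg_one]; rfl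
        _ ≤ _ := by
          gcongr
          linarith
  have hrc : ContinuousOn r (Ioi 0) := hφ.sub (by fun_prop)
  -- the transform at `ω + ε`, split according to the asymptotics of `φ`
  have hsplit : ∀ ε : ℝ, 0 < ε → κ * (1 + (ω + ε) ^ 2) ^ (-s) =
      α * (Complex.Gamma s * (ε : ℂ) ^ (-s)) + β * (Complex.Gamma s * (2 * ω + ε) ^ (-s))
        + laplace s r (ω + ε) := by
    intro ε hε
    have hp1 : 0 < (ω + ε).re := by simp [hωre, hε]
    have hp2 : 0 < (2 * ω + ε).re := by simp [hωre, hε]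
    have hp3 : 0 < (ε : ℂ).re := by simpa using hε
    have i1 := integrableOn_laplaceIntegrand hs (φ := fun _ => 1) (C := 1) continuousOn_const
      (by simp) hp3
    have i2 := integrableOn_laplaceIntegrand hs (φ := fun _ => 1) (C := 1) continuousOn_const
      (by simp) hp2
    have i3 := integrableOn_laplaceIntegrand hs hrc hr1 hp1
    have e3 := MeasureTheory.integral_add ((i1.const_mul α).add (i2.const_mul β)) i3
    simp only [Pi.add_apply] at e3
    rw [← hL _ hp1, ← laplace_one hs hp2, ← laplace_one hs hp3]
    simp only [laplace]
    rw [← MeasureTheory.integral_const_mul, ← MeasureTheory.integral_const_mul,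
      ← MeasureTheory.integral_add (i1.const_mul α) (i2.const_mul β), ← e3]
    refine MeasureTheory.integral_congr_ae (Filter.Eventually.of_forall fun t => ?_)
    simp only [laplaceIntegrand, hr, mul_one]
    have e1 : cexp (-((ε : ℂ) * t)) = cexp (ω * t) * cexp (-((ω + ε) * t)) := by
      rw [← Complex.exp_add]; ring_nf
    have e2 : cexp (-((2 * ω + ε) * t)) = cexp (-(ω * t)) * cexp (-((ω + ε) * t)) := by
      rw [← Complex.exp_add]; ring_nf
    rw [e1, e2]
    ring
  have hrem : ∀ ε : ℝ, 0 < ε → ‖laplace s r (ω + ε)‖ ≤ C' * ((1 / ε) ^ δ * Real.Gamma δ) := by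
    intro ε hε
    rw [← Real.integral_rpow_mul_exp_neg_mul_Ioi hδ0 hε, ← MeasureTheory.integral_const_mul]
    refine norm_integral_le_of_norm_le ?_ ?_
    · have := (integrableOn_rpow_exp (x := δ - 1) (by linarith) hε).const_mul C'
      simpa using this
    · filter_upwards [self_mem_ae_restrict measurableSet_Ioi] with t ht
      have ht0 : (0 : ℝ) < t := ht
      rw [laplaceIntegrand, norm_mul, norm_mul, norm_cpow_sub_one s ht, norm_cexp_neg_mul]
      have h1 := Real.rpow_nonneg ht0.le (s.re - 1)
      have h2 : t ^ (δ - 1) = t ^ (s.re - 1) * t ^ (-δ) := by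
        rw [← Real.rpow_add ht0]; congr 1; rw [hδ]; ring
      rw [h2, show -(ω + (ε : ℂ)).re * t = -(ε * t) by simp [hωre]]
      calc _ ≤ t ^ (s.re - 1) * (C' * t ^ (-δ)) * Real.exp (-(ε * t)) := by
            gcongr; exact hr2 t ht
        _ = _ := by ring
  have hlim1 : Tendsto (fun ε : ℝ => κ * (2 * ω + ε) ^ (-s)) (𝓝[>] 0) (𝓝 (κ * (2 * ω) ^ (-s))) := by
    have hc : ContinuousAt (fun ε : ℝ => κ * (2 * ω + (ε : ℂ)) ^ (-s)) 0 := by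
      refine continuousAt_const.mul (ContinuousAt.cpow (by fun_prop) continuousAt_const ?_)
      simpa using hωs
    have := hc.tendsto.mono_left (nhdsWithin_le_nhds (s := Ioi (0 : ℝ)))
    simpa using this
  have hlim2 : Tendsto (fun ε : ℝ => α * Complex.Gamma s
      + (ε : ℂ) ^ s * (β * (Complex.Gamma s * (2 * ω + ε) ^ (-s)))
      + (ε : ℂ) ^ s * laplace s r (ω + ε)) (𝓝[>] 0) (𝓝 (α * Complex.Gamma s)) := by
    have hc : ContinuousAt (fun ε : ℝ => β * (Complex.Gamma s * (2 * ω + (ε : ℂ)) ^ (-s))) 0 := by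
      refine continuousAt_const.mul (continuousAt_const.mul
        (ContinuousAt.cpow (by fun_prop) continuousAt_const ?_))
      simpa using hωs
    have t1 := (cpow_ofReal_tendsto_zero hs).mul
      (hc.tendsto.mono_left (nhdsWithin_le_nhds (s := Ioi (0 : ℝ))))
    have t2 : Tendsto (fun ε : ℝ => (ε : ℂ) ^ s * laplace s r (ω + ε)) (𝓝[>] 0) (𝓝 0) := by
      have t3 : Tendsto (fun ε : ℝ => (C' * Real.Gamma δ) * ε ^ δ) (𝓝[>] 0) (𝓝 0) := by
        have := (Real.continuousAt_rpow_const 0 δ (Or.inr hδ0.le)).tendsto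
        rw [Real.zero_rpow hδ0.ne'] at this
        simpa using (this.mono_left (nhdsWithin_le_nhds (s := Ioi (0 : ℝ)))).const_mul
          (C' * Real.Gamma δ)
      refine squeeze_zero_norm' ?_ t3
      filter_upwards [self_mem_nhdsWithin] with ε hε
      have hε0 : (0 : ℝ) < ε := hε
      rw [norm_mul, Complex.norm_cpow_eq_rpow_re_of_pos hε0]
      have h1 : ε ^ s.re = ε ^ δ * ε ^ δ := by rw [← Real.rpow_add hε0]; congr 1; rw [hδ]; ring
      have h2 := Real.rpow_pos_of_pos hε0 δ
      calc _ ≤ ε ^ s.re * (C' * ((1 / ε) ^ δ * Real.Gamma δ)) := by gcongr; exact hrem ε hε0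
        _ = _ := by
          rw [h1, one_div, Real.inv_rpow hε0.le]; field_simp
    simpa using (t1.const_add (α * Complex.Gamma s)).add t2
  refine tendsto_nhds_unique (hlim2.congr' ?_) hlim1
  filter_upwards [self_mem_nhdsWithin] with ε hε
  have hε0 : (0 : ℝ) < ε := hε
  have hε1 : (ε : ℂ) ≠ 0 := by exact_mod_cast hε0.ne'
  have h0 : (ε : ℂ) ^ s ≠ 0 := by simp [Complex.cpow_eq_zero_iff, hε1]
  have h2ω : 2 * ω + (ε : ℂ) ≠ 0 := by
    intro h
    have := congrArg Complex.re h
    simp [hωre] at this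
    exact hε0.ne' this
  have h1 : (1 + (ω + (ε : ℂ)) ^ 2) ^ (-s) = (ε : ℂ) ^ (-s) * (2 * ω + ε) ^ (-s) := by
    have : 1 + (ω + (ε : ℂ)) ^ 2 = ε * (2 * ω + ε) := by linear_combination hω2
    rw [this, Complex.cpow_def_of_ne_zero (mul_ne_zero hε1 h2ω), Complex.cpow_def_of_ne_zero hε1,
      Complex.cpow_def_of_ne_zero h2ω, Complex.log_ofReal_mul hε0 h2ω, ← Complex.exp_add,
      Complex.ofReal_log hε0.le]
    ring_nf
  have h3 := hsplit ε hε0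
  rw [h1, Complex.cpow_neg (ε : ℂ)] at h3
  field_simp at h3
  linear_combination -h3

end Laplace

/-! ### The Lipschitz integral -/

lemma choose_succ_mul (a : ℂ) (n : ℕ) :
    ((n : ℂ) + 1) * Ring.choose a (n + 1) = (a - n) * Ring.choose a n := by
  have h1 := Ring.descPochhammer_eq_factorial_smul_choose a n
  have h2 := Ring.descPochhammer_eq_factorial_smul_choose a (n + 1)
  rw [descPochhammer_succ_right, Polynomial.smeval_mul, h1, Polynomial.smeval_sub,
    Polynomial.smeval_X, Polynomial.smeval_natCast, Nat.factorial_succ] at h2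
  simp only [nsmul_eq_mul, pow_one, pow_zero] at h2
  push_cast at h2
  have h3 : (n.factorial : ℂ) ≠ 0 := by exact_mod_cast n.factorial_ne_zero
  refine mul_left_cancel₀ h3 ?_
  linear_combination -h2

section LaplaceBessel

variable {ν : ℂ}

lemma besselCoeff_ratio (hν : -(1 / 2) < ν.re) (n : ℕ) :
    besselCoeff ν n = -((n + ν + 1) * ((n + 1) * besselCoeff ν (n + 1))) := by
  rw [besselCoeff_succ, besselCoeff_order_succ hν]; ring

/-- The moments of the power series of the wave form a binomial series. -/
lemma moment_eq (hν : -(1 / 2) < ν.re) (n : ℕ) :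
    besselCoeff ν n / 4 ^ n * Complex.Gamma (2 * n + 2 * ν + 1) =
      (2 : ℂ) ^ (2 * ν) * Complex.Gamma (ν + 1 / 2) / (Real.sqrt Real.pi : ℂ) *
        Ring.choose (-(ν + 1 / 2)) n := by
  have hsq : (Real.sqrt Real.pi : ℂ) ≠ 0 := by
    exact_mod_cast (Real.sqrt_pos.2 Real.pi_pos).ne'
  induction n with
  | zero =>
    have h1 := Complex.Gamma_mul_Gamma_add_half (ν + 1 / 2)
    rw [show ν + 1 / 2 + 1 / 2 = ν + 1 by ring, show 2 * (ν + 1 / 2) = 2 * ν + 1 by ring,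
      show 1 - (2 * ν + 1) = -(2 * ν) by ring] at h1
    have h2 : Complex.Gamma (ν + 1) ≠ 0 := Complex.Gamma_ne_zero_of_re_pos (by simp; linarith)
    have h3 : (2 : ℂ) ^ (2 * ν) * 2 ^ (-(2 * ν)) = 1 := by
      rw [← Complex.cpow_add _ _ two_ne_zero]; simp
    simp only [besselCoeff, Ring.choose_zero_right, Nat.cast_zero, mul_zero, zero_add, pow_zero,
      Complex.Gamma_one, div_one, mul_one, one_mul]
    rw [one_div_mul_eq_div, div_eq_div_iff h2 hsq, mul_assoc, h1]
    linear_combination (-Complex.Gamma (2 * ν + 1) * (Real.sqrt Real.pi : ℂ)) * h3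
  | succ n ih =>
    have hn : (n : ℂ) + 1 ≠ 0 := by exact_mod_cast n.succ_ne_zero
    have hν1 := order_add_ne_zero hν n
    have hg1 : 2 * (n : ℂ) + 2 * ν + 1 ≠ 0 := by
      intro h
      have := congrArg Complex.re h
      simp at this
      have : (0 : ℝ) ≤ n := n.cast_nonneg
      linarith
    have hg2 : 2 * (n : ℂ) + 2 * ν + 1 + 1 ≠ 0 := by
      intro h
      apply hν1
      linear_combination h / 2
    have hG : Complex.Gamma (2 * ((n + 1 : ℕ) : ℂ) + 2 * ν + 1) =
        (2 * n + 2 * ν + 1 + 1) * ((2 * n + 2 * ν + 1) * Complex.Gamma (2 * n + 2 * ν + 1)) := by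
      rw [← Complex.Gamma_add_one _ hg1, ← Complex.Gamma_add_one _ hg2]
      congr 1
      push_cast
      ring
    have hr := besselCoeff_ratio hν n
    have hc := choose_succ_mul (-(ν + 1 / 2)) n
    rw [hG]
    rw [hr] at ih
    refine mul_left_cancel₀ hn ?_
    linear_combination (-(ν + 1 / 2) - n) * ih -
      (2 : ℂ) ^ (2 * ν) * Complex.Gamma (ν + 1 / 2) / (Real.sqrt Real.pi : ℂ) * hc

/-- The Laplace transform of `t ^ ν * J_ν(t)` at real `r > 1`, integrating the power series term by
term. -/
lemma laplace_besselWave_real (hν : -(1 / 2) < ν.re) (hν2 : ν.re < 1 / 2) {r : ℝ} (hr : 1 < r) :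
    laplace (ν + 1 / 2) (besselWave ν) r =
      (2 : ℂ) ^ ν * Complex.Gamma (ν + 1 / 2) / (Real.sqrt Real.pi : ℂ) *
        (1 + (r : ℂ) ^ 2) ^ (-(ν + 1 / 2)) := by
  have hr0 : 0 < r := by linarith
  have hrC : (r : ℂ) ≠ 0 := by exact_mod_cast hr0.ne'
  set u : ℕ → ℂ := fun n => 2 ^ (-ν) * (besselCoeff ν n / 4 ^ n) with hu
  set e : ℕ → ℂ := fun n => 2 * n + 2 * ν + 1 with he
  have here : ∀ n, (e n).re = 2 * n + 2 * ν.re + 1 := fun n => by simp [he]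
  have hepos : ∀ n, 0 < (e n).re := fun n => by
    rw [here]; have : (0 : ℝ) ≤ n := n.cast_nonneg
    linarith
  set F : ℕ → ℝ → ℂ := fun n t => u n * ((t : ℂ) ^ (e n - 1) * cexp (-(r * t))) with hF
  have hcexp : ∀ t : ℝ, ‖cexp (-((r : ℂ) * t))‖ = Real.exp (-(r * t)) := fun t => by
    rw [norm_cexp_neg_mul]; simp
  have hint : ∀ n, Integrable (F n) (volume.restrict (Ioi 0)) := fun n => by
    have := integrableOn_laplaceIntegrand (hepos n) (φ := fun _ => 1) (C := 1) continuousOn_const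
      (by simp) (p := r) (by simpa using hr0)
    refine Integrable.const_mul ?_ _
    refine this.congr (Filter.Eventually.of_forall fun t => ?_)
    simp [laplaceIntegrand]
  have hval : ∀ n, ∫ t in Ioi (0 : ℝ), F n t = u n * ((1 / (r : ℂ)) ^ e n * Complex.Gamma (e n)) :=
    fun n => by
      rw [hF, MeasureTheory.integral_const_mul, Complex.integral_cpow_mul_exp_neg_mul_Ioi
        (hepos n) hr0]
  have hnorm : ∀ n, ∫ t in Ioi (0 : ℝ), ‖F n t‖ =
      ‖u n‖ * ((1 / r) ^ (e n).re * Real.Gamma (e n).re) := fun n => by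
    rw [← Real.integral_rpow_mul_exp_neg_mul_Ioi (hepos n) hr0, ← MeasureTheory.integral_const_mul]
    refine setIntegral_congr_fun measurableSet_Ioi fun t ht => ?_
    simp only [hF]
    rw [norm_mul (u n), norm_mul ((t : ℂ) ^ (e n - 1)), norm_cpow_sub_one _ ht, hcexp]
  have hsum : Summable fun n => ∫ t in Ioi (0 : ℝ), ‖F n t‖ := by
    simp_rw [hnorm]
    refine summable_of_ratio_norm_eventually_le (r := 1 / r ^ 2) ?_
      (Filter.Eventually.of_forall fun n => ?_)
    · rw [div_lt_one (by positivity)]; nlinarith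
    · have hn : (0 : ℝ) ≤ n := n.cast_nonneg
      have hx := hepos n
      have hex : (e (n + 1)).re = (e n).re + 1 + 1 := by rw [here, here]; push_cast; ring
      have hG : Real.Gamma (e (n + 1)).re =
          ((e n).re + 1) * ((e n).re * Real.Gamma (e n).re) := by
        rw [hex, Real.Gamma_add_one (by linarith), Real.Gamma_add_one hx.ne']
      have hpow : (1 / r) ^ (e (n + 1)).re = (1 / r) ^ (e n).re * (1 / r ^ 2) := by
        rw [hex, add_assoc, Real.rpow_add (by positivity), show (1 : ℝ) + 1 = (2 : ℕ) by norm_num,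
          Real.rpow_natCast, one_div_pow]
      have hGp := Real.Gamma_pos_of_pos hx
      have hpp : 0 < (1 / r) ^ (e n).re := Real.rpow_pos_of_pos (by positivity) _
      have hpp' : 0 < (1 / r) ^ (e (n + 1)).re := Real.rpow_pos_of_pos (by positivity) _
      have hGp' := Real.Gamma_pos_of_pos (hepos (n + 1))
      rw [Real.norm_of_nonneg (by positivity), Real.norm_of_nonneg (by positivity), hG, hpow]
      have hun : ‖u (n + 1)‖ * (((e n).re + 1) * (e n).re) ≤ ‖u n‖ := by
        have h1 : ‖(n : ℂ) + ν + 1‖ ≥ n + ν.re + 1 := by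
          refine le_trans (le_of_eq ?_) (Complex.re_le_norm _); simp
        have h2 : ‖(n : ℂ) + 1‖ = n + 1 := by
          rw [show (n : ℂ) + 1 = ((n + 1 : ℕ) : ℂ) by push_cast; rfl, Complex.norm_natCast]
          push_cast; rfl
        simp only [hu, norm_mul, norm_div, norm_pow, Complex.norm_ofNat]
        rw [besselCoeff_ratio hν n, norm_neg, norm_mul, norm_mul, h2, here, pow_succ]
        have h3 : (2 * (n : ℝ) + 2 * ν.re + 1 + 1) * (2 * n + 2 * ν.re + 1) / 4 ≤
            ‖(n : ℂ) + ν + 1‖ * (n + 1) := by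
          calc _ = (n + ν.re + 1) * (n + ν.re + 1 / 2) := by ring
            _ ≤ _ := mul_le_mul h1 (by linarith) (by linarith) (norm_nonneg _)
        calc _ = ‖(2 : ℂ) ^ (-ν)‖ * (‖besselCoeff ν (n + 1)‖ / 4 ^ n) *
              ((2 * (n : ℝ) + 2 * ν.re + 1 + 1) * (2 * n + 2 * ν.re + 1) / 4) := by
              field_simp
          _ ≤ ‖(2 : ℂ) ^ (-ν)‖ * (‖besselCoeff ν (n + 1)‖ / 4 ^ n) *
              (‖(n : ℂ) + ν + 1‖ * (n + 1)) := by gcongr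
          _ = _ := by ring
      calc _ = ‖u (n + 1)‖ * (((e n).re + 1) * (e n).re) *
            (((1 / r) ^ (e n).re * Real.Gamma (e n).re) * (1 / r ^ 2)) := by ring
        _ ≤ ‖u n‖ * (((1 / r) ^ (e n).re * Real.Gamma (e n).re) * (1 / r ^ 2)) := by gcongr
        _ = _ := by ring
  have hH := MeasureTheory.hasSum_integral_of_summable_integral_norm hint hsum
  have hleft : ∫ t in Ioi (0 : ℝ), ∑' n, F n t = laplace (ν + 1 / 2) (besselWave ν) r := by
    refine setIntegral_congr_fun measurableSet_Ioi fun t ht => ?_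
    have ht0 : (0 : ℝ) < t := ht
    have htC : (t : ℂ) ≠ 0 := by exact_mod_cast ht0.ne'
    simp only [laplaceIntegrand]
    rw [besselWave_eq ht0, besselE, ← tsum_mul_left, ← tsum_mul_left, ← tsum_mul_left,
      ← tsum_mul_right]
    refine tsum_congr fun n => ?_
    have h1 : (t : ℂ) ^ (e n - 1) =
        (t : ℂ) ^ (ν + 1 / 2 - 1) * (t : ℂ) ^ (ν + 1 / 2) * ((t : ℂ) ^ 2) ^ n := by
      rw [← Complex.cpow_add _ _ htC, ← pow_mul, ← Complex.cpow_natCast, ← Complex.cpow_add _ _ htC]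
      congr 1
      simp only [he]
      push_cast
      ring
    simp only [hF, hu, h1, div_pow]
    ring
  rw [hleft] at hH
  have hbin := (Complex.one_add_cpow_hasFPowerSeriesOnBall_zero (a := -(ν + 1 / 2))).hasSum
    (y := 1 / (r : ℂ) ^ 2) (by
      rw [Metric.mem_eball, edist_zero_right, enorm_eq_nnnorm]
      have : ‖1 / (r : ℂ) ^ 2‖ < 1 := by
        rw [norm_div, norm_one, norm_pow, Complex.norm_real, Real.norm_eq_abs, sq_abs,
          div_lt_one (by positivity)]
        nlinarith
      exact_mod_cast this)
  simp only [binomialSeries_apply, List.ofFn_const, List.prod_replicate, zero_add,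
    smul_eq_mul] at hbin
  have hbin2 := hbin.mul_left ((2 : ℂ) ^ (-ν) * ((1 / (r : ℂ)) ^ (2 * ν + 1) * ((2 : ℂ) ^ (2 * ν) *
    Complex.Gamma (ν + 1 / 2) / (Real.sqrt Real.pi : ℂ))))
  have hfun : (fun n => ∫ t in Ioi (0 : ℝ), F n t) = fun n => (2 : ℂ) ^ (-ν) *
      ((1 / (r : ℂ)) ^ (2 * ν + 1) * ((2 : ℂ) ^ (2 * ν) *
    Complex.Gamma (ν + 1 / 2) / (Real.sqrt Real.pi : ℂ))) *
      (Ring.choose (-(ν + 1 / 2)) n * (1 / (r : ℂ) ^ 2) ^ n) := by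
    funext n
    have h1 : (1 / (r : ℂ)) ^ e n = (1 / (r : ℂ)) ^ (2 * ν + 1) * (1 / (r : ℂ) ^ 2) ^ n := by
      rw [← one_div_pow, ← pow_mul, ← Complex.cpow_natCast (1 / (r : ℂ)),
        ← Complex.cpow_add _ _ (one_div_ne_zero hrC)]
      congr 1
      simp only [he]
      push_cast
      ring
    have h2 := moment_eq hν n
    rw [hval, h1]
    simp only [hu, he]
    linear_combination (2 ^ (-ν) * ((1 / (r : ℂ)) ^ (2 * ν + 1) * (1 / (r : ℂ) ^ 2) ^ n)) * h2
  rw [hfun] at hH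
  rw [hH.unique hbin2]
  have e1 : (2 : ℂ) ^ (2 * ν) = 2 ^ ν * 2 ^ ν := by
    rw [two_mul, Complex.cpow_add _ _ two_ne_zero]
  have e2 : (2 : ℂ) ^ ν * 2 ^ (-ν) = 1 := by
    rw [← Complex.cpow_add _ _ two_ne_zero]; simp
  -- all bases are positive reals, so the powers multiply
  have e3 : (1 + 1 / (r : ℂ) ^ 2) ^ (-(ν + 1 / 2)) * (1 / (r : ℂ)) ^ (2 * ν + 1) =
      (1 + (r : ℂ) ^ 2) ^ (-(ν + 1 / 2)) := by
    have hl : Complex.log ((1 / r : ℝ) : ℂ) = ((-Real.log r : ℝ) : ℂ) := by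
      rw [← Complex.ofReal_log (by positivity), one_div, Real.log_inv]
    have hl2 : Real.log (1 + 1 / r ^ 2) = Real.log (1 + r ^ 2) - 2 * Real.log r := by
      rw [show 1 + 1 / r ^ 2 = (1 + r ^ 2) / r ^ 2 by field_simp; ring,
        Real.log_div (by positivity) (by positivity), Real.log_pow]
      norm_num
    have c1 : (1 : ℂ) + 1 / (r : ℂ) ^ 2 = ((1 + 1 / r ^ 2 : ℝ) : ℂ) := by push_cast; rfl
    have c2 : (1 : ℂ) / (r : ℂ) = ((1 / r : ℝ) : ℂ) := by push_cast; rfl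
    have c3 : (1 : ℂ) + (r : ℂ) ^ 2 = ((1 + r ^ 2 : ℝ) : ℂ) := by push_cast; rfl
    have hne : ∀ x : ℝ, 0 < x → (x : ℂ) ≠ 0 := fun x hx => by exact_mod_cast hx.ne'
    rw [c1, c2, c3, Complex.cpow_def_of_ne_zero (hne _ (by positivity)),
      Complex.cpow_def_of_ne_zero (hne _ (by positivity)),
      Complex.cpow_def_of_ne_zero (hne _ (by positivity)), hl, ← Complex.ofReal_log (by positivity),
      ← Complex.ofReal_log (by positivity), hl2, ← Complex.exp_add]
    congr 1
    push_cast
    ring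
  rw [e1, ← e3]
  linear_combination (2 ^ ν * Complex.Gamma (ν + 1 / 2) / (Real.sqrt Real.pi : ℂ) *
    ((1 + 1 / (r : ℂ) ^ 2) ^ (-(ν + 1 / 2)) * (1 / (r : ℂ)) ^ (2 * ν + 1))) * e2

end LaplaceBessel

/-! ### Hankel asymptotics of the Bessel functions -/

section HankelWaves

variable {ν : ℂ}

/-- Lipschitz's integral `∫ t ^ ν J_ν(t) exp (-p t) dt = 2 ^ ν Γ(ν + 1/2) / √π (1 + p²) ^ (-(ν + 1/2))`. -/
lemma laplace_besselWave (hν : -(1 / 2) < ν.re) (hν2 : ν.re < 1 / 2) {C : ℝ}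
    (hC : ∀ t : ℝ, 0 < t → ‖besselWave ν t‖ ≤ C) {p : ℂ} (hp : 0 < p.re) :
    laplace (ν + 1 / 2) (besselWave ν) p =
      (2 : ℂ) ^ ν * Complex.Gamma (ν + 1 / 2) / (Real.sqrt Real.pi : ℂ) *
        (1 + p ^ 2) ^ (-(ν + 1 / 2)) := by
  refine laplace_ext (G := fun p => (2 : ℂ) ^ ν * Complex.Gamma (ν + 1 / 2) /
    (Real.sqrt Real.pi : ℂ) * (1 + p ^ 2) ^ (-(ν + 1 / 2))) (by simp; linarith)
    (fun z hz => (besselWave_hasDerivAt hν hz).continuousAt.continuousWithinAt) hC ?_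
    (fun r hr => laplace_besselWave_real hν hν2 hr) hp
  refine DifferentiableOn.const_mul (fun p hp => ?_) _
  have hp' : 0 < p.re := hp
  refine (DifferentiableAt.cpow_const (by fun_prop) ?_).differentiableWithinAt
  -- `1 + p²` is real only for real `p`, where it is positive
  rw [Complex.mem_slitPlane_iff]
  by_cases h : p.im = 0
  · left
    simp [pow_two, h]
    positivity
  · right
    have : (1 + p ^ 2).im = 2 * (p.re * p.im) := by simp [pow_two]; ring
    rw [this]
    exact mul_ne_zero two_ne_zero (mul_ne_zero hp'.ne' h)

/-- The amplitude `1 / √(2π)` of the Bessel waves. -/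
noncomputable def waveAmp : ℂ := cexp (-(Real.log 2 / 2 : ℝ)) / (Real.sqrt Real.pi : ℂ)

lemma waveAmp_sq : waveAmp ^ 2 = 1 / (2 * Real.pi) := by
  have h1 : (Real.sqrt Real.pi : ℂ) ^ 2 = Real.pi := by
    rw [← Complex.ofReal_pow, Real.sq_sqrt Real.pi_pos.le]
  have h2 : cexp (-(Real.log 2 / 2 : ℝ)) ^ 2 = 1 / 2 := by
    rw [← Complex.exp_nat_mul, show ((2 : ℕ) : ℂ) * -((Real.log 2 / 2 : ℝ) : ℂ) =
      ((-Real.log 2 : ℝ) : ℂ) by push_cast; ring, ← Complex.ofReal_exp, Real.exp_neg,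
      Real.exp_log two_pos]
    norm_num
  rw [waveAmp, div_pow, h1, h2, div_div]

lemma two_cpow_mul (θ : ℝ) (w : ℂ) (hw : w ≠ 0) (hlog : Complex.log w = θ * I) :
    (2 : ℂ) ^ ν * (2 * w) ^ (-(ν + 1 / 2)) =
      cexp (-(Real.log 2 / 2 : ℝ)) * cexp (-(θ * I * (ν + 1 / 2))) := by
  have h2 : Complex.log (2 * w) = Real.log 2 + θ * I := by
    rw [show (2 : ℂ) = ((2 : ℝ) : ℂ) by norm_num, Complex.log_ofReal_mul two_pos hw, hlog]
  have h3 : Complex.log 2 = Real.log 2 := by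
    rw [show (2 : ℂ) = ((2 : ℝ) : ℂ) by norm_num, ← Complex.ofReal_log two_pos.le]
  rw [Complex.cpow_def_of_ne_zero two_ne_zero,
    Complex.cpow_def_of_ne_zero (mul_ne_zero two_ne_zero hw), h2, h3, ← Complex.exp_add,
    ← Complex.exp_add]
  congr 1
  push_cast
  ring

/-- Hankel's asymptotics of `√z J_ν(z)`, with derivative. -/
lemma besselWave_asymptotics (hν : -(1 / 2) < ν.re) (hν2 : ν.re < 1 / 2) :
    ∃ C : ℝ, ∀ z : ℝ, 0 < z → ‖besselWave ν z‖ ≤ C ∧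
      ‖besselWave ν z - (waveAmp * cexp (-(Real.pi / 2 * I * (ν + 1 / 2))) * cexp (I * z) +
        waveAmp * cexp (Real.pi / 2 * I * (ν + 1 / 2)) * cexp (-(I * z)))‖ ≤ C / z ∧
      ‖besselWave' ν z - (I * (waveAmp * cexp (-(Real.pi / 2 * I * (ν + 1 / 2)))) * cexp (I * z) -
        I * (waveAmp * cexp (Real.pi / 2 * I * (ν + 1 / 2))) * cexp (-(I * z)))‖ ≤ C / z := by
  obtain ⟨K, hK⟩ := perturbedWave_besselWave hν
  obtain ⟨α, β, C, h⟩ := hK.asymptotics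
  have hφ : ContinuousOn (besselWave ν) (Ioi 0) := fun z hz =>
    (besselWave_hasDerivAt hν hz).continuousAt.continuousWithinAt
  have hs : 0 < (ν + 1 / 2).re := by simp; linarith
  have hs2 : (ν + 1 / 2).re ≤ 2 := by simp; linarith
  have hC : ∀ z : ℝ, 0 < z → ‖besselWave ν z‖ ≤ C := fun z hz => (h z hz).1
  have hG := Complex.Gamma_ne_zero_of_re_pos hs
  have hα := amplitude_eq hs hs2 hφ (Or.inl rfl) hC (fun t ht => (h t ht).2.1)
    (fun p hp => laplace_besselWave hν hν2 hC hp)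
  have hβ := amplitude_eq (α := β) (β := α) (ω := -I) hs hs2 hφ (Or.inr rfl) hC (fun t ht => by
      have := (h t ht).2.1
      rwa [neg_mul, neg_neg, add_comm (β * _)])
    (fun p hp => laplace_besselWave hν hν2 hC hp)
  have e1 := two_cpow_mul (ν := ν) (Real.pi / 2) I I_ne_zero (by rw [Complex.log_I]; push_cast; rfl)
  have e2 := two_cpow_mul (ν := ν) (-(Real.pi / 2)) (-I) (neg_ne_zero.2 I_ne_zero)
    (by rw [Complex.log_neg_I]; push_cast; ring)
  have hα' : α = waveAmp * cexp (-(Real.pi / 2 * I * (ν + 1 / 2))) := by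
    refine mul_right_cancel₀ hG ?_
    rw [hα, waveAmp]
    push_cast at e1 ⊢
    linear_combination Complex.Gamma (ν + 1 / 2) / (Real.sqrt Real.pi : ℂ) * e1
  have hβ' : β = waveAmp * cexp (Real.pi / 2 * I * (ν + 1 / 2)) := by
    refine mul_right_cancel₀ hG ?_
    rw [show Real.pi / 2 * I * (ν + 1 / 2) = -(-(Real.pi / 2) * I * (ν + 1 / 2)) by ring, hβ,
      waveAmp]
    push_cast at e2 ⊢
    linear_combination Complex.Gamma (ν + 1 / 2) / (Real.sqrt Real.pi : ℂ) * e2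
  subst hα' hβ'
  exact ⟨C, h⟩

/-- The combination `√z (J_ν + ε I Y_ν)(z)`, `ε = 1, -1`, that is `√z` times the Hankel function of the
first or second kind, written through `J_ν` and `J_{-ν}`. -/
noncomputable def hankelWave (ε : ℂ) (ν : ℂ) (z : ℝ) : ℂ :=
  ε * (besselWave (-ν) z - cexp (-(ε * (I * Real.pi * ν))) * besselWave ν z) /
    (I * Complex.sin (Real.pi * ν))

/-- The derivative of `hankelWave ε ν`. -/
noncomputable def hankelWave' (ε : ℂ) (ν : ℂ) (z : ℝ) : ℂ :=
  ε * (besselWave' (-ν) z - cexp (-(ε * (I * Real.pi * ν))) * besselWave' ν z) /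
    (I * Complex.sin (Real.pi * ν))

lemma hankelWave_one (h1 : 0 < ν.re) (h2 : ν.re < 1 / 2) {z : ℝ} (hz : 0 < z) :
    hankelWave 1 ν z = (Real.sqrt z : ℂ) * (besselJ ν z + I * besselY ν z) := by
  have hs := sin_order_ne_zero h1 h2
  have he : cexp (-(1 * (I * Real.pi * ν))) =
      Complex.cos (Real.pi * ν) - I * Complex.sin (Real.pi * ν) := by
    rw [show -(1 * (I * Real.pi * ν)) = (-(Real.pi * ν)) * I by ring, Complex.exp_mul_I,
      Complex.cos_neg, Complex.sin_neg]
    ring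
  rw [hankelWave, he, besselY_eq h1 h2 hz, besselWave, besselWave]
  have hY := div_mul_cancel₀ (besselJ ν z * Complex.cos (Real.pi * ν) - besselJ (-ν) z) hs
  rw [div_eq_iff (mul_ne_zero I_ne_zero hs)]
  linear_combination (-(Real.sqrt z : ℂ) * I ^ 2) * hY - (Real.sqrt z : ℂ) *
    (besselJ ν z * Complex.cos (Real.pi * ν) - besselJ (-ν) z) * I_sq

lemma hankelWave_neg_one (h1 : 0 < ν.re) (h2 : ν.re < 1 / 2) {z : ℝ} (hz : 0 < z) :
    hankelWave (-1) ν z = (Real.sqrt z : ℂ) * (besselJ ν z - I * besselY ν z) := by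
  have hs := sin_order_ne_zero h1 h2
  have he : cexp (-(-1 * (I * Real.pi * ν))) =
      Complex.cos (Real.pi * ν) + I * Complex.sin (Real.pi * ν) := by
    rw [show -(-1 * (I * Real.pi * ν)) = (Real.pi * ν) * I by ring, Complex.exp_mul_I]
    ring
  rw [hankelWave, he, besselY_eq h1 h2 hz, besselWave, besselWave]
  have hY := div_mul_cancel₀ (besselJ ν z * Complex.cos (Real.pi * ν) - besselJ (-ν) z) hs
  rw [div_eq_iff (mul_ne_zero I_ne_zero hs)]
  linear_combination ((Real.sqrt z : ℂ) * I ^ 2) * hY + (Real.sqrt z : ℂ) *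
    (besselJ ν z * Complex.cos (Real.pi * ν) - besselJ (-ν) z) * I_sq

lemma hankelWave_hasDerivAt (hν : -(1 / 2) < ν.re) (hν2 : ν.re < 1 / 2) (ε : ℂ) {z : ℝ}
    (hz : 0 < z) : HasDerivAt (hankelWave ε ν) (hankelWave' ε ν z) z :=
  (((besselWave_hasDerivAt (by simp; linarith) hz).sub
    ((besselWave_hasDerivAt hν hz).const_mul _)).const_mul _).div_const _

lemma hankelWave'_hasDerivAt (hν : -(1 / 2) < ν.re) (hν2 : ν.re < 1 / 2) (ε : ℂ) {z : ℝ}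
    (hz : 0 < z) :
    HasDerivAt (hankelWave' ε ν) (-(1 + (1 / 4 - ν ^ 2) / (z : ℂ) ^ 2) * hankelWave ε ν z) z := by
  refine ((((besselWave'_hasDerivAt (ν := -ν) (by simp; linarith) hz).sub
    ((besselWave'_hasDerivAt hν hz).const_mul _)).const_mul _).div_const _).congr_deriv ?_
  rw [hankelWave, neg_sq]
  ring

/-- The Hankel functions form a `HankelPair`. -/
lemma hankelPair (h1 : 0 < ν.re) (h2 : ν.re < 1 / 2) :
    ∃ b₁ b₂ C, HankelPair (hankelWave 1 ν) (hankelWave (-1) ν) (hankelWave' 1 ν) (hankelWave' (-1) ν)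
      b₁ b₂ (1 / 4 - ν ^ 2) C := by
  have hν : -(1 / 2) < ν.re := by linarith
  obtain ⟨C₁, hC₁⟩ := besselWave_asymptotics hν h2
  obtain ⟨C₂, hC₂⟩ := besselWave_asymptotics (ν := -ν) (by simp; linarith) (by simp; linarith)
  have hs := sin_order_ne_zero h1 h2
  set S := I * Complex.sin (Real.pi * ν) with hS
  have hS0 : S ≠ 0 := mul_ne_zero I_ne_zero hs
  -- everything is expressed through the half phases `e` and `k`
  set e := cexp (Real.pi / 2 * I * ν) with he
  set k := cexp (Real.pi / 2 * I * (1 / 2)) with hk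
  have he0 : e ≠ 0 := Complex.exp_ne_zero _
  have hk0 : k ≠ 0 := Complex.exp_ne_zero _
  have p1 : cexp (-(Real.pi / 2 * I * (ν + 1 / 2))) = e⁻¹ * k⁻¹ := by
    rw [he, hk, ← Complex.exp_neg, ← Complex.exp_neg, ← Complex.exp_add]; congr 1; ring
  have p2 : cexp (Real.pi / 2 * I * (ν + 1 / 2)) = e * k := by
    rw [he, hk, ← Complex.exp_add]; congr 1; ring
  have p3 : cexp (-(Real.pi / 2 * I * (-ν + 1 / 2))) = e * k⁻¹ := by
    rw [he, hk, ← Complex.exp_neg, ← Complex.exp_add]; congr 1; ring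
  have p4 : cexp (Real.pi / 2 * I * (-ν + 1 / 2)) = e⁻¹ * k := by
    rw [he, hk, ← Complex.exp_neg, ← Complex.exp_add]; congr 1; ring
  have p5 : cexp (-(1 * (I * Real.pi * ν))) = e⁻¹ ^ 2 := by
    rw [he, ← Complex.exp_neg, ← Complex.exp_nat_mul]; congr 1; push_cast; ring
  have p6 : cexp (-(-1 * (I * Real.pi * ν))) = e ^ 2 := by
    rw [he, ← Complex.exp_nat_mul]; congr 1; push_cast; ring
  have pS : S = (e ^ 2 - e⁻¹ ^ 2) / 2 := by
    have : e⁻¹ ^ 2 = cexp (-(Real.pi * ν) * I) := by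
      rw [he, ← Complex.exp_neg, ← Complex.exp_nat_mul]; congr 1; push_cast; ring
    have h' : e ^ 2 = cexp (Real.pi * ν * I) := by
      rw [he, ← Complex.exp_nat_mul]; congr 1; push_cast; ring
    rw [this, h', hS, Complex.sin]
    linear_combination (cexp (-(Real.pi * ν) * I) - cexp (Real.pi * ν * I)) / 2 * I_sq
  rw [p1, p2] at hC₁
  rw [p3, p4] at hC₂
  have hnum : e ^ 2 - e⁻¹ ^ 2 ≠ 0 := fun h => hS0 (by rw [pS, h]; simp)
  have hee : e * e⁻¹ = 1 := mul_inv_cancel₀ he0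
  -- the two scalar identities behind the cancellation of one wave and the size of the other
  have s1 : (e - e⁻¹ ^ 2 * e⁻¹) / S = 2 * e⁻¹ := by
    rw [div_eq_iff hS0, pS]; linear_combination e * hee * (-1)
  have s2 : (e ^ 2 * e - e⁻¹) / S = 2 * e := by
    rw [div_eq_iff hS0, pS]; linear_combination (e⁻¹) * hee
  set A := waveAmp with hA
  clear_value S e k A
  set B := (‖e⁻¹ ^ 2‖ + ‖e ^ 2‖) * |C₁| / ‖S‖ + |C₂| / ‖S‖ with hB
  have hSn : 0 < ‖S‖ := norm_pos_iff.2 hS0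
  have key : ∀ (ε m : ℂ) (x y x' y' : ℂ) (r : ℝ), 0 ≤ r → ‖ε‖ = 1 →
      ‖m‖ ≤ ‖e⁻¹ ^ 2‖ + ‖e ^ 2‖ → ‖x - x'‖ ≤ C₂ * r → ‖y - y'‖ ≤ C₁ * r →
      ‖ε * (x - m * y) / S - ε * (x' - m * y') / S‖ ≤ B * r := by
    intro ε m x y x' y' r hr hε hm hx hy
    have : ε * (x - m * y) / S - ε * (x' - m * y') / S =
        ε * ((x - x') - m * (y - y')) / S := by ring
    rw [this, norm_div, norm_mul, hε, one_mul, hB, ← add_div, div_mul_eq_mul_div]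
    gcongr
    calc _ ≤ ‖x - x'‖ + ‖m * (y - y')‖ := norm_sub_le _ _
      _ ≤ |C₂| * r + (‖e⁻¹ ^ 2‖ + ‖e ^ 2‖) * (|C₁| * r) := by
        rw [norm_mul]
        gcongr
        · exact hx.trans (by gcongr; exact le_abs_self _)
        · exact hy.trans (by gcongr; exact le_abs_self _)
      _ = _ := by ring
  have hm1 : ‖e⁻¹ ^ 2‖ ≤ ‖e⁻¹ ^ 2‖ + ‖e ^ 2‖ := le_add_of_nonneg_right (norm_nonneg _)
  have hm2 : ‖e ^ 2‖ ≤ ‖e⁻¹ ^ 2‖ + ‖e ^ 2‖ := le_add_of_nonneg_left (norm_nonneg _)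
  have hinv : ∀ z : ℝ, 0 < z → (0 : ℝ) ≤ z⁻¹ := fun z hz => (inv_pos.2 hz).le
  refine ⟨2 * A * (e⁻¹ * k⁻¹), 2 * A * (e * k), B, ?_⟩
  constructor
  · exact fun z hz => hankelWave_hasDerivAt hν h2 _ hz
  · exact fun z hz => hankelWave'_hasDerivAt hν h2 _ hz
  · exact fun z hz => hankelWave_hasDerivAt hν h2 _ hz
  · exact fun z hz => hankelWave'_hasDerivAt hν h2 _ hz
  · intro z hz
    have := key 1 (e⁻¹ ^ 2) (besselWave (-ν) z) (besselWave ν z) 0 0 1 zero_le_one (by simp) hm1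
      (by simpa using (hC₂ z hz).1) (by simpa using (hC₁ z hz).1)
    rw [hankelWave, p5]
    simpa [hS] using this
  · intro z hz
    have := key (-1) (e ^ 2) (besselWave (-ν) z) (besselWave ν z) 0 0 1 zero_le_one (by simp) hm2
      (by simpa using (hC₂ z hz).1) (by simpa using (hC₁ z hz).1)
    rw [hankelWave, p6]
    simpa [hS] using this
  · intro z hz
    have := key 1 (e⁻¹ ^ 2) _ _ _ _ z⁻¹ (hinv z hz) (by simp) hm1 (hC₂ z hz).2.1 (hC₁ z hz).2.1
    rw [hankelWave, p5, ← hS, div_eq_mul_inv B]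
    convert this using 3
    linear_combination (-A * k⁻¹ * cexp (I * z)) * s1 + e⁻¹ * A * k / S * cexp (-(I * z)) * hee
  · intro z hz
    have := key 1 (e⁻¹ ^ 2) _ _ _ _ z⁻¹ (hinv z hz) (by simp) hm1 (hC₂ z hz).2.2 (hC₁ z hz).2.2
    rw [hankelWave', p5, ← hS, div_eq_mul_inv B]
    convert this using 3
    linear_combination (-I * A * k⁻¹ * cexp (I * z)) * s1 -
      I * e⁻¹ * A * k / S * cexp (-(I * z)) * hee
  · intro z hz
    have := key (-1) (e ^ 2) _ _ _ _ z⁻¹ (hinv z hz) (by simp) hm2 (hC₂ z hz).2.1 (hC₁ z hz).2.1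
    rw [hankelWave, p6, ← hS, div_eq_mul_inv B]
    convert this using 3
    linear_combination (-A * k * cexp (-(I * z))) * s2 - e * A * k⁻¹ / S * cexp (I * z) * hee
  · intro z hz
    have := key (-1) (e ^ 2) _ _ _ _ z⁻¹ (hinv z hz) (by simp) hm2 (hC₂ z hz).2.2 (hC₁ z hz).2.2
    rw [hankelWave', p6, ← hS, div_eq_mul_inv B, ← sub_neg_eq_add]
    convert this using 3
    linear_combination (I * A * k * cexp (-(I * z))) * s2 - I * e * A * k⁻¹ / S * cexp (I * z) * hee
  · have hkk : k * k⁻¹ = 1 := mul_inv_cancel₀ hk0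
    have hpi : (Real.pi : ℂ) ≠ 0 := by exact_mod_cast Real.pi_ne_zero
    have hA2 : A ^ 2 = 1 / (2 * Real.pi) := hA ▸ waveAmp_sq
    calc _ = 4 * A ^ 2 * (e * e⁻¹) * (k * k⁻¹) := by ring
      _ = _ := by rw [hee, hkk, hA2]; field_simp; norm_num

end HankelWaves

/-! ### The Mellin class and the Weber kernel -/

section MellinClass

variable {μ : ℝ} {g : ℝ → ℂ} {gs : ℂ → ℂ}

/-- A function of the class is differentiable, with power bounds for `g(ξ) / ξ` and its
derivative. -/
lemma MellinClass01.powerDecay (hμ₁ : -1 < μ) (hμ₂ : μ < 0) (hg : MellinClass01 μ g gs) :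
    ∃ q' K, PowerDecay (fun ξ => g ξ / ξ) q' K (1 + μ) := by
  obtain ⟨hI, hrep⟩ := hg
  set l : ℝ → ℂ := fun τ => (μ : ℂ) + τ * I with hl
  set h : ℝ → ℂ := fun τ => gs (l τ) with hh
  have hlre : ∀ τ, (l τ).re = μ := fun τ => by simp [hl]
  have hl0 : ∀ τ, l τ ≠ 0 := fun τ h0 => by
    have := hlre τ
    rw [h0] at this
    simp at this
    linarith
  have hlc : Continuous l := by fun_prop
  have hI' : Integrable fun τ => l τ * h τ := hI
  -- the line stays away from the origin, so `gs` itself is integrable on it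
  have hh1 : Integrable h := by
    have h1 : Integrable fun τ => (l τ)⁻¹ * (l τ * h τ) := by
      refine Integrable.bdd_mul (c := (-μ)⁻¹) hI'
        (hlc.inv₀ hl0).aestronglyMeasurable (Filter.Eventually.of_forall fun τ => ?_)
      rw [norm_inv]
      refine inv_anti₀ (by linarith) ?_
      rw [← abs_of_neg hμ₂, ← hlre τ]
      exact Complex.abs_re_le_norm _
    refine h1.congr (Filter.Eventually.of_forall fun τ => ?_)
    simp only
    rw [inv_mul_cancel_left₀ (hl0 τ)]
  have hpow : ∀ (x : ℝ), 0 < x → ∀ τ, ‖(x : ℂ) ^ (-l τ)‖ = x ^ (-μ) := fun x hx τ => by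
    rw [Complex.norm_cpow_eq_rpow_re_of_pos hx, Complex.neg_re, hlre]
  have hcont : ∀ x : ℝ, 0 < x → Continuous fun τ => (x : ℂ) ^ (-l τ) := fun x hx =>
    (Continuous.const_cpow hlc.neg (Or.inl (by exact_mod_cast hx.ne')))
  have hmeas : ∀ x : ℝ, 0 < x → Integrable fun τ => h τ * (x : ℂ) ^ (-l τ) := fun x hx =>
    Integrable.mul_bdd (c := x ^ (-μ)) hh1 (hcont x hx).aestronglyMeasurable
      (Filter.Eventually.of_forall fun τ => (hpow x hx τ).le)
  set G : ℝ → ℂ := fun x => ∫ τ, h τ * (x : ℂ) ^ (-l τ) with hG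
  set G' : ℝ → ℂ := fun x => ∫ τ, h τ * (-l τ * ((x : ℂ) ^ (-l τ) / x)) with hG'
  have hnorm' : ∀ (x : ℝ), 0 < x → ∀ τ, ‖h τ * (-l τ * ((x : ℂ) ^ (-l τ) / x))‖ =
      ‖l τ * h τ‖ * x ^ (-μ - 1) := fun x hx τ => by
    rw [norm_mul, norm_mul, norm_div, norm_neg, hpow x hx, Complex.norm_real, Real.norm_eq_abs,
      abs_of_pos hx, norm_mul, Real.rpow_sub_one hx.ne']
    ring
  have hd : ∀ x : ℝ, 0 < x → HasDerivAt G (G' x) x := fun x hx => by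
    refine (hasDerivAt_integral_of_dominated_loc_of_deriv_le (𝕜 := ℝ)
      (F := fun (x : ℝ) τ => h τ * (x : ℂ) ^ (-l τ))
      (F' := fun (x : ℝ) τ => h τ * (-l τ * ((x : ℂ) ^ (-l τ) / x)))
      (bound := fun τ => ‖l τ * h τ‖ * (x / 2) ^ (-μ - 1))
      (Ioi_mem_nhds (half_lt_self hx)) ?_ (hmeas x hx) ?_ ?_ (hI'.norm.mul_const _) ?_).2
    · filter_upwards [lt_mem_nhds hx] with y hy
      exact (hmeas y hy).aestronglyMeasurable
    · have := hcont x hx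
      exact hh1.aestronglyMeasurable.mul
        (Continuous.aestronglyMeasurable (hlc.neg.mul (this.div_const _)))
    · refine Filter.Eventually.of_forall fun τ y hy => ?_
      have hy0 : 0 < y := (half_pos hx).trans hy
      rw [hnorm' y hy0]
      gcongr ?_ * ?_
      exact Real.rpow_le_rpow_of_nonpos (half_pos hx) (le_of_lt hy) (by linarith)
    · refine Filter.Eventually.of_forall fun τ y hy => ?_
      exact (hasDerivAt_cpow_ofReal (-l τ) ((half_pos hx).trans hy)).const_mul _
  have hGb : ∀ x : ℝ, 0 < x → ‖G x‖ ≤ (∫ τ, ‖h τ‖) * x ^ (-μ) := fun x hx => by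
    refine (MeasureTheory.norm_integral_le_integral_norm _).trans (le_of_eq ?_)
    rw [← MeasureTheory.integral_mul_const]
    simp_rw [norm_mul, hpow x hx]
  have hGb' : ∀ x : ℝ, 0 < x → ‖G' x‖ ≤ (∫ τ, ‖l τ * h τ‖) * x ^ (-μ - 1) := fun x hx => by
    refine (MeasureTheory.norm_integral_le_integral_norm _).trans (le_of_eq ?_)
    rw [← MeasureTheory.integral_mul_const]
    simp_rw [hnorm' x hx]
  set A := ∫ τ, ‖h τ‖
  set B := ∫ τ, ‖l τ * h τ‖
  have hA : 0 ≤ A := integral_nonneg fun _ => norm_nonneg _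
  have hB : 0 ≤ B := integral_nonneg fun _ => norm_nonneg _
  set D : ℂ := (2 * Real.pi * I)⁻¹ * I with hD
  have hgG : ∀ x : ℝ, 0 < x → g x = D * G x := fun x hx => by
    rw [hrep x hx, hD]; exact (mul_assoc _ _ _).symm
  refine ⟨fun x => D * ((G' x * x - G x * 1) / (x : ℂ) ^ 2), ‖D‖ * (A + B), ?_⟩
  constructor
  · linarith
  · linarith
  · intro x hx
    have hx0 : (x : ℂ) ≠ 0 := by exact_mod_cast hx.ne'
    have hid : HasDerivAt (fun z : ℝ => (z : ℂ)) 1 x := Complex.ofRealCLM.hasDerivAt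
    refine (((hd x hx).div hid hx0).const_mul D).congr_of_eventuallyEq ?_
    filter_upwards [lt_mem_nhds hx] with y hy
    rw [hgG y hy, mul_div_assoc]
    rfl
  · intro x hx
    have hp : x ^ (-μ) / x = x ^ (-(1 + μ)) := by
      rw [← Real.rpow_sub_one hx.ne']; congr 1; ring
    have := Real.rpow_nonneg hx.le (-(1 + μ))
    rw [norm_div, hgG x hx, norm_mul, Complex.norm_real, Real.norm_eq_abs, abs_of_pos hx]
    calc _ ≤ ‖D‖ * (A * x ^ (-μ)) / x := by gcongr; exact hGb x hx
      _ = ‖D‖ * A * x ^ (-(1 + μ)) := by rw [← hp]; ring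
      _ ≤ _ := by gcongr; linarith
  · intro x hx
    have hp : x ^ (-μ) / x ^ 2 = x ^ (-(1 + μ) - 1) := by
      rw [show -(1 + μ) - 1 = -μ - 1 - 1 by ring, Real.rpow_sub_one hx.ne',
        Real.rpow_sub_one hx.ne']
      field_simp
    have hp' : x ^ (-μ - 1) = x ^ (-μ) / x := Real.rpow_sub_one hx.ne' _
    rw [norm_mul, norm_div, norm_pow, Complex.norm_real, Real.norm_eq_abs, abs_of_pos hx]
    calc _ ≤ ‖D‖ * ((B * x ^ (-μ - 1) * x + A * x ^ (-μ)) / x ^ 2) := by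
          gcongr
          refine (norm_sub_le _ _).trans ?_
          rw [norm_mul, mul_one, Complex.norm_real, Real.norm_eq_abs, abs_of_pos hx]
          gcongr
          · exact hGb' x hx
          · exact hGb x hx
      _ = _ := by rw [← hp, hp']; field_simp; ring

end MellinClass

section Kernel

variable {ν : ℂ}

lemma crossE_eq_weberC (h1 : 0 < ν.re) (h2 : ν.re < 1 / 2) {a t ξ : ℝ} (ha : 0 < a) (ht : 0 < t)
    (hξ : 0 < ξ) :
    crossE (hankelWave 1 ν) (hankelWave (-1) ν) a t ξ =
      -(2 * I * ξ * (Real.sqrt t * Real.sqrt a)) *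
        weberC ν ((t * ξ : ℝ) : ℂ) ((a * ξ : ℝ) : ℂ) := by
  have hs : (Real.sqrt ξ : ℂ) * Real.sqrt ξ = ξ := by
    rw [← Complex.ofReal_mul, Real.mul_self_sqrt hξ.le]
  have htx := mul_pos ht hξ
  have hax := mul_pos ha hξ
  rw [crossE, hankelWave_one h1 h2 htx, hankelWave_one h1 h2 hax, hankelWave_neg_one h1 h2 htx,
    hankelWave_neg_one h1 h2 hax, weberC, Real.sqrt_mul ht.le, Real.sqrt_mul ha.le, ← hs]
  push_cast
  ring

lemma hankelWave_mul (h1 : 0 < ν.re) (h2 : ν.re < 1 / 2) {z : ℝ} (hz : 0 < z) :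
    hankelWave 1 ν z * hankelWave (-1) ν z = z * (besselJ ν z ^ 2 + besselY ν z ^ 2) := by
  have hs : (Real.sqrt z : ℂ) * Real.sqrt z = z := by
    rw [← Complex.ofReal_mul, Real.mul_self_sqrt hz.le]
  rw [hankelWave_one h1 h2 hz, hankelWave_neg_one h1 h2 hz]
  linear_combination (-(Real.sqrt z * Real.sqrt z * besselY ν z ^ 2)) * I_sq +
    (besselJ ν z ^ 2 + besselY ν z ^ 2) * hs

end Kernel

/-- **Solution to the Weber–Titchmarsh problem.**
Let `a > 0`, `0 < Re ν < 1/2`, and let `g ∈ 𝓜₀,₁⁻¹(L_c)` where `c` is a vertical line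
`Re s = μ` with `-1 < μ < 0`.  Then for almost all `x > 0` the Weber expansion
`g x = x / (J_ν(ax)² + Y_ν(ax)²) * ∫_a^∞ C_ν(xt, xa) t ∫_0^∞ C_ν(tξ, aξ) g(ξ) dξ dt`
holds, the inner and outer integrals being understood as improper integrals. -/
theorem weber_titchmarsh_expansion (a : ℝ) (ν : ℂ) (μ : ℝ) (g : ℝ → ℂ) (gs : ℂ → ℂ)
    (ha : 0 < a) (hν₁ : 0 < ν.re) (hν₂ : ν.re < 1 / 2)
    (hμ₁ : -1 < μ) (hμ₂ : μ < 0) (hg : MellinClass01 μ g gs) :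
    ∃ F : ℝ → ℂ,
      (∀ t : ℝ, a ≤ t →
        Tendsto (fun N : ℝ => ∫ ξ in (0:ℝ)..N, weberC ν ((t * ξ : ℝ) : ℂ) ((a * ξ : ℝ) : ℂ) * g ξ)
          atTop (𝓝 (F t))) ∧
      ∀ᵐ x ∂(volume.restrict (Ioi (0 : ℝ))),
        ∃ L : ℂ,
          Tendsto (fun N : ℝ =>
              ∫ t in a..N, weberC ν ((x * t : ℝ) : ℂ) ((x * a : ℝ) : ℂ) * (t : ℂ) * F t)
            atTop (𝓝 L) ∧
          g x = (x : ℂ) / (besselJ ν ((a * x : ℝ) : ℂ) ^ 2 + besselY ν ((a * x : ℝ) : ℂ) ^ 2) * L := by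
  obtain ⟨b₁, b₂, C, hP⟩ := hankelPair hν₁ hν₂
  obtain ⟨q', K, hq⟩ := hg.powerDecay hμ₁ hμ₂
  obtain ⟨K', hK'⟩ := hP.inner hq ha
  have hin := fun t (ht : a < t) => (hK' t ht).1
  choose! Fe hFe using hin
  have hsq : ∀ t : ℝ, 0 < t → (Real.sqrt t : ℂ) ≠ 0 := fun t ht => by
    exact_mod_cast (Real.sqrt_pos.2 ht).ne'
  have hsq2 : ∀ t : ℝ, 0 < t → (Real.sqrt t : ℂ) * Real.sqrt t = t := fun t ht => by
    rw [← Complex.ofReal_mul, Real.mul_self_sqrt ht.le]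
  -- the kernel vanishes identically at `t = a`
  refine ⟨fun t => if t = a then 0 else I / (2 * (Real.sqrt t * Real.sqrt a)) * Fe t, ?_, ?_⟩
  · intro t hat
    rcases hat.eq_or_lt with rfl | hat
    · have : ∀ N : ℝ, ∫ ξ in (0 : ℝ)..N,
          weberC ν ((a * ξ : ℝ) : ℂ) ((a * ξ : ℝ) : ℂ) * g ξ = 0 := fun N => by
        refine intervalIntegral.integral_zero_ae (Filter.Eventually.of_forall fun ξ _ => ?_)
        rw [weberC]; ring
      simp only [this, if_true]
      exact tendsto_const_nhds
    · have ht0 : 0 < t := ha.trans hat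
      simp only [if_neg hat.ne']
      refine ((hFe t hat).const_mul _).congr' ?_
      filter_upwards [eventually_ge_atTop 0] with N hN
      rw [← intervalIntegral.integral_const_mul, intervalIntegral.integral_of_le hN,
        intervalIntegral.integral_of_le hN]
      refine setIntegral_congr_fun measurableSet_Ioc fun ξ hξ => ?_
      have hξ0 : (ξ : ℂ) ≠ 0 := by exact_mod_cast hξ.1.ne'
      have h1 := hsq t ht0
      have h2 := hsq a ha
      rw [crossE_eq_weberC hν₁ hν₂ ha ht0 hξ.1]
      field_simp
      rw [I_sq]
      ring
  · filter_upwards [hP.ae_ne_zero ha, self_mem_ae_restrict measurableSet_Ioi] with x hne hx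
    have hx0 : 0 < x := hx
    have hxC : (x : ℂ) ≠ 0 := by exact_mod_cast hx0.ne'
    have haC : (a : ℂ) ≠ 0 := by exact_mod_cast ha.ne'
    have hout := hP.outer hq ha hFe hx0
    refine ⟨_, (hout.const_mul (-1 / (4 * x * a) : ℂ)).congr' ?_, ?_⟩
    · filter_upwards [eventually_ge_atTop a] with N hN
      rw [← intervalIntegral.integral_const_mul, intervalIntegral.integral_of_le hN,
        intervalIntegral.integral_of_le hN]
      refine setIntegral_congr_fun measurableSet_Ioc fun t ht => ?_
      have ht0 : 0 < t := ha.trans ht.1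
      have h1 := hsq t ht0
      have h2 := hsq a ha
      simp only [if_neg ht.1.ne']
      rw [crossE_eq_weberC hν₁ hν₂ ha ht0 hx0, mul_comm x t, mul_comm x a, ← hsq2 t ht0,
        ← hsq2 a ha]
      field_simp
      norm_num
    · rw [hankelWave_mul hν₁ hν₂ (mul_pos ha hx0)] at hne ⊢
      have hne' := right_ne_zero_of_mul hne
      generalize besselJ ν ((a * x : ℝ) : ℂ) ^ 2 + besselY ν ((a * x : ℝ) : ℂ) ^ 2 = Q at hne' ⊢
      push_cast
      field_simp
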